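/- Fix an integer n ≥ 2, set m = n+1, and fix a positive definite matrix γ ∈ M_{m,m}(ℤ). There exists a constant C > 0, depending only on n and γ, such that for every positive definite matrix Λ ∈ M_{n,n}(ℤ), the number A(γ,Λ) of integer matrices L ∈ M_{m,n}(ℤ) with Lᵀ γ L = Λ satisfies A(γ,Λ) ≤ C · Π_p ν_p(γ,Λ), where the product (taken in the extended nonnegative reals) runs over all primes p. -/

import Mathlib

open scoped ENNReal

/-- `ν_p(γ, Λ)`: the limit superior, as `r → ∞`, of
`p^{-r(mn - n(n+1)/2)}` (with `m = n+1`, so the exponent is `r·n(n+1)/2`) times the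
number of matrices `L ∈ M_{m,n}(ℤ/p^rℤ)` with `Lᵀ γ L ≡ Λ (mod p^r)`. -/
noncomputable def nuLocal (p n : ℕ) (γ : Matrix (Fin (n + 1)) (Fin (n + 1)) ℤ)
    (Λ : Matrix (Fin n) (Fin n) ℤ) : ℝ≥0∞ :=
  Filter.limsup (fun r : ℕ =>
    (Nat.card {L : Matrix (Fin (n + 1)) (Fin n) (ZMod (p ^ r)) //
        L.transpose * γ.map (Int.cast : ℤ → ZMod (p ^ r)) * L =
          Λ.map (Int.cast : ℤ → ZMod (p ^ r))} : ℝ≥0∞) /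
      (p : ℝ≥0∞) ^ (r * ((n + 1) * n - n * (n + 1) / 2))) Filter.atTop

/-- `A(γ, Λ)`: the number of integer matrices `L ∈ M_{m,n}(ℤ)` with `Lᵀ γ L = Λ`,
where `m = n+1`. -/
noncomputable def countRepr (n : ℕ) (γ : Matrix (Fin (n + 1)) (Fin (n + 1)) ℤ)
    (Λ : Matrix (Fin n) (Fin n) ℤ) : ℕ :=
  Nat.card {L : Matrix (Fin (n + 1)) (Fin n) ℤ // L.transpose * γ * L = Λ}

section DiagonalCounts

variable {F : Type*} [Field F] [Fintype F] [DecidableEq F]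

theorem sum_comp_sq (hF : ringChar F ≠ 2) (f : F → ℤ) :
    ∑ x : F, f (x ^ 2) = ∑ u : F, (1 + quadraticChar F u) * f u := by
  classical
  rw [← Finset.sum_fiberwise (s := Finset.univ) (g := fun x : F => x ^ 2)]
  refine Finset.sum_congr rfl fun u _ => ?_
  have h := quadraticChar_card_sqrts hF u
  rw [Finset.sum_congr rfl (g := fun _ => f u)]
  · rw [Finset.sum_const, nsmul_eq_mul]
    congr 1
    rw [add_comm, ← h]
    congr 2
    ext x; simp
  · intro x hx
    simp at hx
    simp [hx]

theorem sum_quadraticChar_mul_sub (hF : ringChar F ≠ 2) (c : F) :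
    ∑ u : F, quadraticChar F u * quadraticChar F (u - c) =
      if c = 0 then (Fintype.card F : ℤ) - 1 else -1 := by
  classical
  split_ifs with hc
  · subst hc
    have : ∀ u : F, quadraticChar F u * quadraticChar F (u - 0) = 1 - if u = 0 then 1 else 0 := by
      intro u
      by_cases hu : u = 0
      · simp [hu]
      · rw [sub_zero, ← map_mul, if_neg hu, sub_zero, ← sq, quadraticChar_sq_one' hu]
    rw [Finset.sum_congr rfl fun u _ => this u, Finset.sum_sub_distrib]
    simp
  · have h0 : ∀ u : F, quadraticChar F u * quadraticChar F (u - c) =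
        if u = 0 then 0 else quadraticChar F (1 - c * u⁻¹) := by
      intro u
      by_cases hu : u = 0
      · simp [hu]
      · rw [if_neg hu, show u - c = u * (1 - c * u⁻¹) by field_simp, map_mul, ← mul_assoc,
          ← map_mul, ← sq, quadraticChar_sq_one' hu, one_mul]
    have h1 : ∑ u : F, quadraticChar F (1 - c * u⁻¹) = 0 := by
      rw [← quadraticChar_sum_zero hF]
      refine Function.Bijective.sum_comp (e := fun u : F => 1 - c * u⁻¹) ?_ _
      refine Finite.injective_iff_bijective.mp fun a b hab => ?_
      have : c * a⁻¹ = c * b⁻¹ := by simpa using hab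
      exact inv_injective (mul_left_cancel₀ hc this)
    rw [Finset.sum_congr rfl fun u _ => h0 u]
    have h2 : ∀ u : F, (if u = 0 then (0 : ℤ) else quadraticChar F (1 - c * u⁻¹)) =
        quadraticChar F (1 - c * u⁻¹) - if u = 0 then 1 else 0 := by
      intro u; split_ifs with hu <;> simp [hu]
    rw [Finset.sum_congr rfl fun u _ => h2 u, Finset.sum_sub_distrib, h1]
    simp

/-- The number of solutions of `f x = t`, as an integer. -/
def fiberCount {X : Type*} [Fintype X] (f : X → F) (t : F) : ℤ :=
  ∑ x : X, if f x = t then 1 else 0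

omit [Field F] [Fintype F] in
theorem fiberCount_eq_natCard {X : Type*} [Fintype X] (f : X → F) (t : F) :
    fiberCount f t = Nat.card {x // f x = t} := by
  classical
  rw [fiberCount, Nat.card_eq_fintype_card, Fintype.card_subtype]
  simp

omit [Field F] [Fintype F] in
theorem fiberCount_comp_equiv {X Y : Type*} [Fintype X] [Fintype Y] (e : X ≃ Y) (f : Y → F)
    (t : F) : fiberCount (fun x => f (e x)) t = fiberCount f t :=
  Equiv.sum_comp e fun y => if f y = t then (1 : ℤ) else 0

theorem fiberCount_const_mul_sq (hF : ringChar F ≠ 2) {a : F} (ha : a ≠ 0) (t : F) :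
    fiberCount (fun x : F => a * x ^ 2) t = 1 + quadraticChar F (a * t) := by
  classical
  rw [fiberCount, sum_comp_sq hF (fun u => if a * u = t then 1 else 0)]
  have : ∀ u : F, (a * u = t) ↔ u = a⁻¹ * t := fun u => by
    constructor
    · rintro rfl; field_simp
    · rintro rfl; field_simp
  simp only [this, mul_ite, mul_one, mul_zero, Finset.sum_ite_eq', Finset.mem_univ, if_true]
  rw [show a * t = a ^ 2 * (a⁻¹ * t) by field_simp, map_mul (quadraticChar F) (a ^ 2),
    quadraticChar_sq_one' ha, one_mul]

theorem fiberCount_binary (hF : ringChar F ≠ 2) {a b : F} (ha : a ≠ 0) (hb : b ≠ 0) (t : F) :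
    fiberCount (fun x : F × F => a * x.1 ^ 2 + b * x.2 ^ 2) t =
      Fintype.card F - quadraticChar F (-(a * b)) +
        if t = 0 then Fintype.card F * quadraticChar F (-(a * b)) else 0 := by
  classical
  have e1 : fiberCount (fun x : F × F => a * x.1 ^ 2 + b * x.2 ^ 2) t =
      ∑ x : F, fiberCount (fun y : F => b * y ^ 2) (t - a * x ^ 2) := by
    simp only [fiberCount, Fintype.sum_prod_type, eq_sub_iff_add_eq']
  rw [e1]
  simp only [fiberCount_const_mul_sq hF hb]
  rw [sum_comp_sq hF (fun u => 1 + quadraticChar F (b * (t - a * u)))]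
  have e2 : ∀ u : F, (1 + quadraticChar F u) * (1 + quadraticChar F (b * (t - a * u))) =
      1 + quadraticChar F u + quadraticChar F (b * (t - a * u)) +
        quadraticChar F (-(a * b)) * (quadraticChar F u * quadraticChar F (u - a⁻¹ * t)) := by
    intro u
    have : quadraticChar F (b * (t - a * u)) =
        quadraticChar F (-(a * b)) * quadraticChar F (u - a⁻¹ * t) := by
      rw [← map_mul]; congr 1; field_simp; ring
    rw [this]; ring
  have e3 : ∑ u : F, quadraticChar F (b * (t - a * u)) = 0 := by
    rw [← quadraticChar_sum_zero hF]
    refine Function.Bijective.sum_comp (e := fun u : F => b * (t - a * u)) ?_ _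
    refine Finite.injective_iff_bijective.mp fun x y hxy => ?_
    have h := mul_left_cancel₀ hb hxy
    exact mul_left_cancel₀ ha (sub_right_injective h)
  rw [Finset.sum_congr rfl fun u _ => e2 u]
  simp only [Finset.sum_add_distrib, ← Finset.mul_sum, sum_quadraticChar_mul_sub hF,
    quadraticChar_sum_zero hF, e3]
  have : a⁻¹ * t = 0 ↔ t = 0 := by simp [ha]
  simp only [this]
  split_ifs <;> simp <;> ring

theorem fiberCount_add_binary (hF : ringChar F ≠ 2) {X : Type*} [Fintype X] (f : X → F) {a b : F}
    (ha : a ≠ 0) (hb : b ≠ 0) (t : F) :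
    fiberCount (fun x : X × F × F => f x.1 + (a * x.2.1 ^ 2 + b * x.2.2 ^ 2)) t =
      Fintype.card X * (Fintype.card F - quadraticChar F (-(a * b))) +
        Fintype.card F * quadraticChar F (-(a * b)) * fiberCount f t := by
  classical
  have e1 : fiberCount (fun x : X × F × F => f x.1 + (a * x.2.1 ^ 2 + b * x.2.2 ^ 2)) t =
      ∑ x : X, fiberCount (fun y : F × F => a * y.1 ^ 2 + b * y.2 ^ 2) (t - f x) := by
    simp only [fiberCount]
    rw [Fintype.sum_prod_type]
    simp only [eq_sub_iff_add_eq']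
  rw [e1]
  rw [Finset.sum_congr rfl fun x _ => fiberCount_binary hF ha hb (t - f x),
    Finset.sum_add_distrib, fiberCount, Finset.mul_sum]
  congr 1
  · simp only [Finset.sum_const, nsmul_eq_mul, Finset.card_univ]
  · simp only [sub_eq_zero, eq_comm (a := t), mul_ite, mul_one, mul_zero]

theorem abs_quadraticChar_of_ne_zero {a : F} (ha : a ≠ 0) : |quadraticChar F a| = 1 := by
  rcases quadraticChar_dichotomy ha with h | h <;> simp [h]

theorem abs_fiberCount_sub_le (hF : ringChar F ≠ 2) (k : ℕ) (w : Fin (k + 1) → F)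
    (hw : ∀ i, w i ≠ 0) {t : F} (ht : t ≠ 0) :
    |fiberCount (fun x : Fin (k + 1) → F => ∑ i, w i * x i ^ 2) t - (Fintype.card F : ℤ) ^ k| ≤
      (Fintype.card F : ℤ) ^ (k / 2) := by
  classical
  induction k using Nat.twoStepInduction with
  | zero =>
    have := fiberCount_comp_equiv (Equiv.funUnique (Fin 1) F) (fun x : F => w 0 * x ^ 2) t
    have e : (fun x : Fin (0 + 1) → F => ∑ i, w i * x i ^ 2) =
        fun x => w 0 * (Equiv.funUnique (Fin 1) F x) ^ 2 := by
      ext x; simp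
    rw [e, this, fiberCount_const_mul_sq hF (hw 0)]
    rw [pow_zero, add_sub_cancel_left, abs_quadraticChar_of_ne_zero (mul_ne_zero (hw 0) ht)]
  | one =>
    have := fiberCount_comp_equiv (finTwoArrowEquiv F)
      (fun x : F × F => w 0 * x.1 ^ 2 + w 1 * x.2 ^ 2) t
    have e : (fun x : Fin (1 + 1) → F => ∑ i, w i * x i ^ 2) = fun x =>
        w 0 * (finTwoArrowEquiv F x).1 ^ 2 + w 1 * (finTwoArrowEquiv F x).2 ^ 2 := by
      ext x; simp [Fin.sum_univ_two]
    rw [e, this, fiberCount_binary hF (hw 0) (hw 1), if_neg ht]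
    have h1 := abs_quadraticChar_of_ne_zero (neg_ne_zero.mpr (mul_ne_zero (hw 0) (hw 1)))
    rw [add_zero, pow_one, sub_sub_cancel_left, abs_neg, h1]
    simp
  | more k ih _ =>
    let e : (Fin (k + 3) → F) ≃ (Fin (k + 1) → F) × F × F :=
      { toFun := fun x => (fun i => x i.succ.succ, x 0, x 1)
        invFun := fun y => Fin.cons y.2.1 (Fin.cons y.2.2 y.1)
        left_inv := by
          intro x; ext i
          refine Fin.cases ?_ (fun i => ?_) i
          · rfl
          · refine Fin.cases ?_ (fun i => ?_) i
            · rfl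
            · rfl
        right_inv := by
          rintro ⟨y, a, b⟩; rfl }
    have h := fiberCount_comp_equiv e
      (fun x => (∑ i : Fin (k + 1), w i.succ.succ * x.1 i ^ 2) +
        (w 0 * x.2.1 ^ 2 + w 1 * x.2.2 ^ 2)) t
    rw [fiberCount_add_binary hF (fun x : Fin (k + 1) → F => ∑ i, w i.succ.succ * x i ^ 2)
      (hw 0) (hw 1)] at h
    have e2 : (fun x : Fin (k + 2 + 1) → F => ∑ i, w i * x i ^ 2) = fun x =>
        (∑ i : Fin (k + 1), w i.succ.succ * (e x).1 i ^ 2) +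
        (w 0 * (e x).2.1 ^ 2 + w 1 * (e x).2.2 ^ 2) := by
      ext x
      rw [Fin.sum_univ_succ, Fin.sum_univ_succ]
      simp [e]; ring
    rw [e2, h]
    have ih' := ih (fun i => w i.succ.succ) (fun i => hw _)
    have h1 := abs_quadraticChar_of_ne_zero (neg_ne_zero.mpr (mul_ne_zero (hw 0) (hw 1)))
    set N := fiberCount (fun x : Fin (k + 1) → F => ∑ i, w i.succ.succ * x i ^ 2) t
    set χ := quadraticChar F (-(w 0 * w 1))
    have e3 : ((Fintype.card (Fin (k + 1) → F) : ℕ) : ℤ) * (Fintype.card F - χ) +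
        Fintype.card F * χ * N - (Fintype.card F : ℤ) ^ (k + 2) =
        Fintype.card F * (χ * (N - (Fintype.card F : ℤ) ^ k)) := by
      simp; ring
    rw [e3, abs_mul, abs_mul, h1, one_mul, Nat.abs_cast, Nat.add_div_right _ two_pos, pow_succ,
      mul_comm]
    exact mul_le_mul_of_nonneg_right ih' (by positivity)

end DiagonalCounts

section IsometricFrames

open Module LinearMap

variable {F : Type*} [Field F]

theorem exists_isometry_apply_eq (h2 : (2 : F) ≠ 0) {V : Type*} [AddCommGroup V] [Module F V]
    {B : LinearMap.BilinForm F V} (hB : B.IsSymm) {x y : V} (hx : B x x ≠ 0) (hxy : B y y = B x x) :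
    ∃ g : V ≃ₗ[F] V, (∀ u v, B (g u) (g v) = B u v) ∧ g x = y := by
  have sym : ∀ u v, B u v = B v u := fun u v => by simpa using hB.eq u v
  have key : ∀ u : V, B u u ≠ 0 → ∃ g : V ≃ₗ[F] V, (∀ v w, B (g v) (g w) = B v w) ∧
      ∀ v, g v = v - (2 * B u v / B u u) • u := by
    intro u hu
    let f : V →ₗ[F] V := LinearMap.id - (2 / B u u) • (B u).smulRight u
    have hf : ∀ v, f v = v - (2 * B u v / B u u) • u := by
      intro v
      simp only [f, LinearMap.sub_apply, LinearMap.id_apply, LinearMap.smul_apply,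
        LinearMap.smulRight_apply, smul_smul]
      congr 2; ring
    have hinv : Function.Involutive f := by
      intro v
      rw [hf, hf v, map_sub, map_smul, smul_eq_mul, sub_sub, ← add_smul]
      convert sub_zero v
      rw [show 2 * B u v / B u u + 2 * (B u v - 2 * B u v / B u u * B u u) / B u u = 0 by
        field_simp; ring, zero_smul]
    refine ⟨LinearEquiv.ofInvolutive f hinv, fun v w => ?_, fun v => hf v⟩
    change B (f v) (f w) = _
    rw [hf, hf]
    simp only [map_sub, map_smul, LinearMap.sub_apply, LinearMap.smul_apply, smul_eq_mul, sym v u]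
    field_simp
    ring
  by_cases hu : B (x - y) (x - y) = 0
  · have hv : B (x + y) (x + y) ≠ 0 := by
      intro hv
      have : 2 * (2 * B x x) = 0 := by
        simp only [map_sub, map_add, LinearMap.sub_apply, LinearMap.add_apply] at hu hv
        linear_combination hu + hv - 2 * hxy
      simp [h2, hx] at this
    obtain ⟨g, hg, hgv⟩ := key _ hv
    refine ⟨g.trans (LinearEquiv.neg F), fun v w => by simp [hg], ?_⟩
    simp only [LinearEquiv.trans_apply, LinearEquiv.neg_apply, hgv]
    rw [show 2 * B (x + y) x / B (x + y) (x + y) = 1 by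
      rw [div_eq_one_iff_eq hv]
      simp only [map_add, LinearMap.add_apply, hxy, sym y x]
      ring]
    simp
  · obtain ⟨g, hg, hgv⟩ := key _ hu
    refine ⟨g, hg, ?_⟩
    rw [hgv, show 2 * B (x - y) x / B (x - y) (x - y) = 1 by
      rw [div_eq_one_iff_eq hu]
      simp only [map_sub, LinearMap.sub_apply, hxy, sym y x]
      ring]
    simp

theorem exists_diagonal_coordinates (h2 : (2 : F) ≠ 0) {V : Type*} [AddCommGroup V] [Module F V]
    [FiniteDimensional F V] {B : LinearMap.BilinForm F V} (hB : B.IsSymm) (hnd : B.Nondegenerate)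
    {k : ℕ} (hk : finrank F V = k) :
    ∃ (w : Fin k → F) (e : V ≃ (Fin k → F)), (∀ i, w i ≠ 0) ∧
      ∀ x, B x x = ∑ i, w i * e x i ^ 2 := by
  subst hk
  have : Invertible (2 : F) := invertibleOfNonzero h2
  obtain ⟨v, hv⟩ := LinearMap.BilinForm.exists_orthogonal_basis (LinearMap.BilinForm.isSymm_iff.mp hB)
  refine ⟨fun i => B (v i) (v i), v.equivFun.toEquiv, fun i =>
    hv.not_isOrtho_basis_self_of_separatingLeft hnd.1 i, fun x => ?_⟩
  conv_lhs => rw [← v.sum_equivFun x]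
  simp only [map_sum, map_smul, LinearMap.sum_apply, LinearMap.smul_apply, smul_eq_mul]
  refine Finset.sum_congr rfl fun i _ => ?_
  rw [Finset.sum_eq_single i]
  · simp; ring
  · intro j _ hj
    have : B (v j) (v i) = 0 := (isOrthoᵢ_def.mp hv) j i hj
    simp [this]
  · simp

theorem exists_split_coordinates {V : Type*} [AddCommGroup V] [Module F V]
    {B : LinearMap.BilinForm F V} (hB : B.IsSymm) {a : V} (ha : B a a ≠ 0) :
    ∃ e : V ≃ F × B.orthogonal (F ∙ a), ∀ x,
      B x x = B a a * (e x).1 ^ 2 + B (e x).2 (e x).2 := by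
  have sym : ∀ u v, B u v = B v u := fun u v => by simpa using hB.eq u v
  have hmem : ∀ y, y ∈ B.orthogonal (F ∙ a) ↔ B a y = 0 := by
    intro y
    rw [LinearMap.BilinForm.mem_orthogonal_iff]
    constructor
    · intro h; exact h a (Submodule.mem_span_singleton_self a)
    · intro h n hn
      obtain ⟨c, rfl⟩ := Submodule.mem_span_singleton.mp hn
      simp [h]
  refine ⟨⟨fun x => (B a x / B a a, ⟨x - (B a x / B a a) • a, ?_⟩),
    fun y => y.1 • a + y.2, ?_, ?_⟩, ?_⟩
  · rw [hmem]; simp; field_simp; ring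
  · intro x; simp
  · rintro ⟨c, y, hy⟩
    rw [hmem] at hy
    have : B a (c • a + y) / B a a = c := by simp [hy, ha]
    ext
    · exact this
    · simp only [this]; simp
  · intro x
    simp only [Equiv.coe_fn_mk, map_sub, map_smul, LinearMap.sub_apply, LinearMap.smul_apply,
      smul_eq_mul, sym x a]
    field_simp
    ring

theorem mem_orthogonal_span_singleton {V : Type*} [AddCommGroup V] [Module F V]
    {B : LinearMap.BilinForm F V} {a y : V} : y ∈ B.orthogonal (F ∙ a) ↔ B a y = 0 := by
  rw [LinearMap.BilinForm.mem_orthogonal_iff]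
  constructor
  · intro h; exact h a (Submodule.mem_span_singleton_self a)
  · intro h n hn
    obtain ⟨c, rfl⟩ := Submodule.mem_span_singleton.mp hn
    simp [h]

/-- The number of families of nonzero vectors with the same Gram matrix as `a`. -/
noncomputable def frameCount {V : Type*} [AddCommGroup V] [Module F V] (B : LinearMap.BilinForm F V)
    {n : ℕ} (a : Fin n → V) : ℕ :=
  Nat.card {x : Fin n → V // (∀ i j, B (x i) (x j) = B (a i) (a j)) ∧ ∀ i, x i ≠ 0}

theorem frameCount_succ (h2 : (2 : F) ≠ 0) {V : Type*} [AddCommGroup V] [Module F V]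
    {B : LinearMap.BilinForm F V} (hB : B.IsSymm) {n : ℕ} (a : Fin (n + 1) → V) (h0 : B (a 0) (a 0) ≠ 0)
    (b : Fin n → B.orthogonal (F ∙ a 0)) (hb : ∀ i, (b i : V) = a i.succ) :
    frameCount B a = Nat.card {x : V // B x x = B (a 0) (a 0)} *
      frameCount (B.restrict (B.orthogonal (F ∙ a 0))) b := by
  have sym : ∀ u v, B u v = B v u := fun u v => by simpa using hB.eq u v
  have hort : ∀ i, B (a 0) (a (Fin.succ i)) = 0 := fun i => by
    rw [← hb]; exact mem_orthogonal_span_singleton.mp (b i).2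
  choose g hg hga using fun x : {x : V // B x x = B (a 0) (a 0)} =>
    exists_isometry_apply_eq h2 hB h0 x.2
  have hgs : ∀ x u v, B ((g x).symm u) ((g x).symm v) = B u v := fun x u v => by
    rw [← hg x]; simp
  have hgx : ∀ x : {x : V // B x x = B (a 0) (a 0)}, (g x).symm x.1 = a 0 := fun x => by
    rw [LinearEquiv.symm_apply_eq, hga]
  rw [frameCount, frameCount, ← Nat.card_prod]
  refine Nat.card_congr ⟨fun x => (⟨x.1 0, x.2.1 0 0⟩, ⟨fun i =>
      ⟨(g ⟨x.1 0, x.2.1 0 0⟩).symm (x.1 i.succ), ?_⟩, ?_, ?_⟩),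
    fun y => ⟨Fin.cons y.1.1 fun i => g y.1 (y.2.1 i), ?_, ?_⟩, ?_, ?_⟩
  · have h := hgs ⟨x.1 0, x.2.1 0 0⟩ (x.1 0) (x.1 i.succ)
    rw [hgx ⟨x.1 0, x.2.1 0 0⟩, x.2.1, hort] at h
    exact mem_orthogonal_span_singleton.mpr h
  · intro i j
    change B ((g _).symm (x.1 i.succ)) ((g _).symm (x.1 j.succ)) = B (b i) (b j)
    rw [hgs, x.2.1, hb, hb]
  · intro i h
    refine x.2.2 i.succ ?_
    simpa using congrArg Subtype.val h
  · have h1 : ∀ i, B y.1.1 (g y.1 (y.2.1 i)) = 0 := fun i => by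
      rw [← hga y.1, hg]; exact mem_orthogonal_span_singleton.mp (y.2.1 i).2
    intro i j
    refine Fin.cases ?_ (fun i => ?_) i <;> refine Fin.cases ?_ (fun j => ?_) j
    · exact y.1.2
    · simpa [hort] using h1 j
    · rw [sym, sym (a i.succ)]; simpa [hort] using h1 i
    · have : B (y.2.1 i) (y.2.1 j) = B (b i) (b j) := y.2.2.1 i j
      rw [hb, hb] at this
      simpa [hg] using this
  · intro i
    refine Fin.cases ?_ (fun i => ?_) i
    · intro h
      have := y.1.2
      rw [Fin.cons_zero] at h
      rw [h] at this
      exact h0 (by simpa using this.symm)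
    · have := y.2.2.2 i
      simpa using this
  · intro x
    ext i
    refine Fin.cases ?_ (fun i => ?_) i
    · rfl
    · simp
  · rintro ⟨y, z⟩
    ext i
    · rfl
    · simp

end IsometricFrames

section FrameCountBounds

open Module

variable {F : Type*} [Field F] [Fintype F] [DecidableEq F]

omit [Field F] [Fintype F] in
theorem natCard_fiber_eq_fiberCount {V X : Type*} [Fintype X] (e : V ≃ X) {g : V → F} (f : X → F)
    (h : ∀ x, g x = f (e x)) (t : F) : (Nat.card {x // g x = t} : ℤ) = fiberCount f t := by
  rw [fiberCount_eq_natCard]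
  exact_mod_cast Nat.card_congr (e.subtypeEquiv fun x => by rw [h])

omit [Fintype F] in
theorem frameCount_one {V : Type*} [AddCommGroup V] [Module F V] [Finite V]
    {B : LinearMap.BilinForm F V} (b : Fin 1 → V) :
    (frameCount B b : ℤ) = Nat.card {x // B x x = B (b 0) (b 0)} -
      if B (b 0) (b 0) = 0 then 1 else 0 := by
  have e : frameCount B b = Nat.card {x : V // B x x = B (b 0) (b 0) ∧ x ≠ 0} := by
    refine Nat.card_congr ((Equiv.funUnique (Fin 1) V).subtypeEquiv fun x => ?_)
    simp
  rw [e]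
  split_ifs with h
  · rw [h]
    have : Nat.card {x : V // B x x = 0} = Nat.card {x : V // B x x = 0 ∧ x ≠ 0} + 1 := by
      have h1 := Set.ncard_sdiff_singleton_add_one (a := (0 : V)) (s := {x : V | B x x = 0})
        (by simp)
      exact h1.symm
    rw [this]; simp
  · rw [sub_zero]
    congr 1
    refine Nat.card_congr (Equiv.subtypeEquivRight fun x => ⟨fun h => h.1, fun hx => ⟨hx, ?_⟩⟩)
    rintro rfl
    exact h (by simpa using hx.symm)

theorem frameCount_two (hF : ringChar F ≠ 2) {V : Type*} [AddCommGroup V] [Module F V]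
    [FiniteDimensional F V] {B : LinearMap.BilinForm F V} (hB : B.IsSymm) (hnd : B.Nondegenerate)
    (hk : finrank F V = 3) (a : Fin 2 → V) (hort : B (a 0) (a 1) = 0) (h0 : B (a 0) (a 0) ≠ 0)
    (h1 : a 1 ≠ 0) :
    (frameCount B a : ℤ) = (if B (a 1) (a 1) = 0 then 2 else 1) *
      (Fintype.card F * ((Fintype.card F : ℤ) ^ 2 - 1)) := by
  have h2 : (2 : F) ≠ 0 := Ring.two_ne_zero hF
  have : Finite V := Module.finite_of_finite F
  have hfr := B.finrank_orthogonal hnd (F ∙ a 0)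
  rw [hk, finrank_span_singleton (fun h => h0 (by simp [h]))] at hfr
  have hnd' := B.restrict_nondegenerate_orthogonal_spanSingleton hnd hB.isRefl h0
  let b : Fin 1 → B.orthogonal (F ∙ a 0) := fun _ => ⟨a 1, mem_orthogonal_span_singleton.mpr hort⟩
  obtain ⟨w, e, hw, he⟩ := exists_diagonal_coordinates h2 (hB.restrict _) hnd' hfr
  obtain ⟨e', he'⟩ := exists_split_coordinates hB h0
  rw [frameCount_succ h2 hB a h0 b (fun i => by fin_cases i; rfl)]
  push_cast
  rw [frameCount_one]
  set q : ℤ := (Fintype.card F : ℤ)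
  set d := quadraticChar F (-(w 0 * w 1)) with hd
  have hw0 := hw 0
  have hw1 := hw 1
  have c1 : (Nat.card {x : V // B x x = B (a 0) (a 0)} : ℤ) = q ^ 2 + q * d := by
    rw [natCard_fiber_eq_fiberCount (e'.trans ((Equiv.refl F).prodCongr
      (e.trans (finTwoArrowEquiv F))))
      (fun x : F × F × F => B (a 0) (a 0) * x.1 ^ 2 + (w 0 * x.2.1 ^ 2 + w 1 * x.2.2 ^ 2)),
      fiberCount_add_binary hF (fun c : F => B (a 0) (a 0) * c ^ 2) hw0 hw1, fiberCount_const_mul_sq hF h0, ← pow_two,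
      quadraticChar_sq_one' h0]
    · ring
    · intro x
      rw [he']
      have := he (e' x).2
      rw [Fin.sum_univ_two] at this
      simpa using this
  have hbt : B.restrict (B.orthogonal (F ∙ a 0)) (b 0) (b 0) = B (a 1) (a 1) := rfl
  rw [c1, hbt, natCard_fiber_eq_fiberCount (e.trans (finTwoArrowEquiv F))
      (fun x : F × F => w 0 * x.1 ^ 2 + w 1 * x.2 ^ 2), fiberCount_binary hF hw0 hw1]
  · rw [← hd]
    have hd1 : d = 1 ∨ d = -1 := quadraticChar_dichotomy (by simp [hw0, hw1])
    split_ifs with ht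
    · have : d = 1 := by
        by_contra hne
        have hd' : d = -1 := hd1.resolve_left hne
        have c2 := frameCount_one (B := B.restrict (B.orthogonal (F ∙ a 0))) b
        rw [hbt, natCard_fiber_eq_fiberCount (e.trans (finTwoArrowEquiv F))
          (fun x : F × F => w 0 * x.1 ^ 2 + w 1 * x.2 ^ 2), fiberCount_binary hF hw0 hw1, ← hd,
          if_pos ht, if_pos ht, hd'] at c2
        · have : frameCount (B.restrict (B.orthogonal (F ∙ a 0))) b = 0 := by
            zify; rw [c2]; ring
          have : 0 < frameCount (B.restrict (B.orthogonal (F ∙ a 0))) b := by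
            have : Nonempty {x : Fin 1 → B.orthogonal (F ∙ a 0) //
              (∀ i j, B.restrict (B.orthogonal (F ∙ a 0)) (x i) (x j) =
                B.restrict (B.orthogonal (F ∙ a 0)) (b i) (b j)) ∧ ∀ i, x i ≠ 0} :=
              ⟨⟨b, fun _ _ => rfl, fun i h => h1 (congrArg Subtype.val h)⟩⟩
            exact Nat.card_pos
          omega
        · intro x
          have := he x
          rw [Fin.sum_univ_two] at this
          exact this
      rw [this]; ring
    · rcases hd1 with h | h <;> rw [h] <;> ring
  · intro x
    have := he x
    rw [Fin.sum_univ_two] at this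
    exact this

theorem frameCount_bounds (hF : ringChar F ≠ 2) (k : ℕ) {V : Type*} [AddCommGroup V] [Module F V]
    [FiniteDimensional F V] {B : LinearMap.BilinForm F V} (hB : B.IsSymm) (hnd : B.Nondegenerate)
    (hk : finrank F V = k + 3) (a : Fin (k + 2) → V) (hort : ∀ i j, i ≠ j → B (a i) (a j) = 0)
    (hne : ∀ i, a i ≠ 0) (han : ∀ i, i ≠ Fin.last _ → B (a i) (a i) ≠ 0) :
    (if B (a (Fin.last _)) (a (Fin.last _)) = 0 then 2 else 1 : ℝ) *
        ((Fintype.card F : ℝ) ^ ((k + 2) * (k + 3) / 2) *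
          (1 - ((Fintype.card F : ℝ) ^ 2)⁻¹) ^ (k + 1)) ≤ frameCount B a ∧
      (B (a (Fin.last _)) (a (Fin.last _)) ≠ 0 →
        (frameCount B a : ℝ) ≤ (Fintype.card F : ℝ) ^ ((k + 2) * (k + 3) / 2) *
          (1 + ((Fintype.card F : ℝ) ^ 2)⁻¹) ^ (k + 1)) := by
  have h2 : (2 : F) ≠ 0 := Ring.two_ne_zero hF
  have hq1 : (1 : ℝ) < Fintype.card F := by exact_mod_cast Fintype.one_lt_card
  have hq0 : (0 : ℝ) < Fintype.card F := by linarith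
  induction k generalizing V with
  | zero =>
    have h := frameCount_two hF hB hnd hk a (hort 0 1 (by simp)) (han 0 (by simp)) (hne 1)
    have h' : (frameCount B a : ℝ) = (if B (a 1) (a 1) = 0 then 2 else 1) *
      (Fintype.card F * ((Fintype.card F : ℝ) ^ 2 - 1)) := by exact_mod_cast h
    have hl : Fin.last (0 + 1) = 1 := rfl
    have e1 : (Fintype.card F : ℝ) ^ ((0 + 2) * (0 + 3) / 2) *
        (1 - ((Fintype.card F : ℝ) ^ 2)⁻¹) ^ (0 + 1) =
        Fintype.card F * ((Fintype.card F : ℝ) ^ 2 - 1) := by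
      norm_num; field_simp
    have e2 : (Fintype.card F : ℝ) ^ ((0 + 2) * (0 + 3) / 2) *
        (1 + ((Fintype.card F : ℝ) ^ 2)⁻¹) ^ (0 + 1) =
        Fintype.card F * ((Fintype.card F : ℝ) ^ 2 + 1) := by
      norm_num; field_simp
    rw [e1, e2, h', hl]
    refine ⟨le_rfl, fun h => ?_⟩
    rw [if_neg h]
    nlinarith
  | succ k ih =>
    have : Finite V := Module.finite_of_finite F
    have h0 : B (a 0) (a 0) ≠ 0 := han 0 (by simp [Fin.ext_iff])
    have hfr := B.finrank_orthogonal hnd (F ∙ a 0)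
    rw [hk, finrank_span_singleton (fun h => h0 (by simp [h]))] at hfr
    have hnd' := B.restrict_nondegenerate_orthogonal_spanSingleton hnd hB.isRefl h0
    let b : Fin (k + 2) → B.orthogonal (F ∙ a 0) := fun i =>
      ⟨a i.succ, mem_orthogonal_span_singleton.mpr (hort _ _ (Fin.succ_ne_zero i).symm)⟩
    obtain ⟨hlow, hup⟩ := ih (hB.restrict _) hnd' hfr b (fun i j hij => hort _ _ (by simpa using hij))
      (fun i h => hne i.succ (congrArg Subtype.val h))
      (fun i hi => han i.succ (by simpa [← Fin.succ_last] using hi))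
    obtain ⟨w, e, hw, he⟩ := exists_diagonal_coordinates h2 hB hnd hk
    have hN := abs_fiberCount_sub_le hF (k + 3) w hw h0
    rw [← natCard_fiber_eq_fiberCount e _ he] at hN
    rw [frameCount_succ h2 hB a h0 b (fun _ => rfl)]
    have hN' : |(Nat.card {x : V // B x x = B (a 0) (a 0)} : ℝ) - (Fintype.card F : ℝ) ^ (k + 3)| ≤
      (Fintype.card F : ℝ) ^ ((k + 3) / 2) := by exact_mod_cast hN
    have hp : (Fintype.card F : ℝ) ^ ((k + 3) / 2) ≤ (Fintype.card F : ℝ) ^ (k + 1) :=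
      pow_le_pow_right₀ hq1.le (by omega)
    rw [abs_le] at hN'
    have hex : (k + 1 + 2) * (k + 1 + 3) / 2 = (k + 3) + (k + 2) * (k + 3) / 2 := by
      rw [show (k + 1 + 2) * (k + 1 + 3) = (k + 2) * (k + 3) + 2 * (k + 3) by ring]
      omega
    have hlast : a (Fin.last (k + 1 + 1)) = b (Fin.last (k + 1)) := by
      rw [← Fin.succ_last]
    have hqi : ((Fintype.card F : ℝ) ^ 2)⁻¹ < 1 := inv_lt_one_of_one_lt₀ (by nlinarith)
    have hqq : (Fintype.card F : ℝ) ^ (k + 1) =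
        (Fintype.card F : ℝ) ^ (k + 3) * ((Fintype.card F : ℝ) ^ 2)⁻¹ := by
      field_simp; ring
    have hbl : B.restrict (B.orthogonal (F ∙ a 0)) (b (Fin.last (k + 1))) (b (Fin.last (k + 1))) =
      B (a (Fin.last (k + 1 + 1))) (a (Fin.last (k + 1 + 1))) := rfl
    rw [hbl] at hlow hup
    rw [hex]
    push_cast
    constructor
    · have hτ0 : (0 : ℝ) ≤ if B (a (Fin.last (k + 1 + 1))) (a (Fin.last (k + 1 + 1))) = 0
        then 2 else 1 := by split_ifs <;> norm_num
      generalize (if B (a (Fin.last (k + 1 + 1))) (a (Fin.last (k + 1 + 1))) = 0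
        then 2 else 1 : ℝ) = τ at hτ0 hlow ⊢
      have h1 : (0 : ℝ) ≤ 1 - ((Fintype.card F : ℝ) ^ 2)⁻¹ := by linarith
      calc _ = ((Fintype.card F : ℝ) ^ (k + 3) * (1 - ((Fintype.card F : ℝ) ^ 2)⁻¹)) *
            (τ * ((Fintype.card F : ℝ) ^ ((k + 2) * (k + 3) / 2) *
              (1 - ((Fintype.card F : ℝ) ^ 2)⁻¹) ^ (k + 1))) := by
            rw [pow_add _ (k + 3), pow_succ _ (k + 1)]; ring
        _ ≤ _ := mul_le_mul (by nlinarith) hlow (by positivity) (by positivity)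
    · intro h
      calc _ ≤ ((Fintype.card F : ℝ) ^ (k + 3) * (1 + ((Fintype.card F : ℝ) ^ 2)⁻¹)) *
            ((Fintype.card F : ℝ) ^ ((k + 2) * (k + 3) / 2) *
              (1 + ((Fintype.card F : ℝ) ^ 2)⁻¹) ^ (k + 1)) :=
            mul_le_mul (by nlinarith) (hup h) (by positivity) (by positivity)
        _ = _ := by rw [pow_add _ (k + 3), pow_succ _ (k + 1)]; ring

end FrameCountBounds

section GramCounts

open Module Matrix

variable {F : Type*} [Field F]

theorem exists_adapted_basis (h2 : (2 : F) ≠ 0) {k : ℕ} {T : Matrix (Fin (k + 2)) (Fin (k + 2)) F}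
    (hT : T.IsSymm) (hrk : ∀ x y : Fin (k + 2) → F, T *ᵥ x = 0 → T *ᵥ y = 0 →
      ¬ LinearIndependent F ![x, y]) :
    ∃ v : Basis (Fin (k + 2)) F (Fin (k + 2) → F),
      (∀ i j, i ≠ j → toBilin' T (v i) (v j) = 0) ∧
      (∀ i, i ≠ Fin.last _ → toBilin' T (v i) (v i) ≠ 0) ∧
      (toBilin' T (v (Fin.last _)) (v (Fin.last _)) = 0 ↔ T.det = 0) := by
  have : Invertible (2 : F) := invertibleOfNonzero h2
  have hsymm : (toBilin' T).IsSymm := by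
    constructor
    intro x y
    rw [toBilin'_apply', toBilin'_apply', dotProduct_mulVec, ← mulVec_transpose,
      hT.eq, dotProduct_comm]
  obtain ⟨v₀, hv₀⟩ := LinearMap.BilinForm.exists_orthogonal_basis
    (LinearMap.BilinForm.isSymm_iff.mp hsymm)
  have hfin : finrank F (Fin (k + 2) → F) = k + 2 := by simp
  obtain ⟨v₁, hv₁⟩ : ∃ v : Basis (Fin (k + 2)) F (Fin (k + 2) → F),
      ∀ i j, i ≠ j → toBilin' T (v i) (v j) = 0 := by
    refine ⟨v₀.reindex (finCongr hfin), fun i j hij => ?_⟩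
    rw [Basis.reindex_apply, Basis.reindex_apply]
    exact LinearMap.isOrthoᵢ_def.mp hv₀ _ _ (by simpa using hij)
  have ker : ∀ (v : Basis (Fin (k + 2)) F (Fin (k + 2) → F)),
      (∀ i j, i ≠ j → toBilin' T (v i) (v j) = 0) → ∀ i, toBilin' T (v i) (v i) = 0 →
      T *ᵥ v i = 0 := by
    intro v hv i hi
    have : toBilin' T (v i) = 0 := by
      refine v.ext fun j => ?_
      by_cases hij : i = j
      · subst hij; simpa using hi
      · simpa using hv i j hij
    have h3 : (v i) ᵥ* T = 0 := by
      ext j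
      have := LinearMap.congr_fun this (Pi.single j 1)
      rw [toBilin'_apply', dotProduct_mulVec] at this
      simpa using this
    rwa [← mulVec_transpose, hT.eq] at h3
  have uniq : ∀ (i j : Fin (k + 2)), toBilin' T (v₁ i) (v₁ i) = 0 → toBilin' T (v₁ j) (v₁ j) = 0 →
      i = j := by
    intro i j hi hj
    by_contra hij
    refine hrk _ _ (ker v₁ hv₁ i hi) (ker v₁ hv₁ j hj) ?_
    have := v₁.linearIndependent.comp ![i, j] (by
      intro a b hab
      fin_cases a <;> fin_cases b <;> simp_all)
    convert this using 1
    ext a; fin_cases a <;> rfl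
  obtain ⟨σ, hσ⟩ : ∃ σ : Equiv.Perm (Fin (k + 2)), ∀ i, i ≠ Fin.last _ →
      toBilin' T (v₁ (σ i)) (v₁ (σ i)) ≠ 0 := by
    by_cases h : ∃ i, toBilin' T (v₁ i) (v₁ i) = 0
    · obtain ⟨i₀, hi₀⟩ := h
      refine ⟨Equiv.swap i₀ (Fin.last _), fun i hi hz => hi ?_⟩
      have := uniq _ _ hz hi₀
      rw [Equiv.swap_apply_eq_iff, Equiv.swap_apply_left] at this
      exact this
    · push Not at h
      exact ⟨Equiv.refl _, fun i _ => h _⟩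
  refine ⟨v₁.reindex σ.symm, fun i j hij => ?_, fun i hi => ?_, ?_⟩
  · simpa using hv₁ (σ i) (σ j) (by simpa using hij)
  · simpa using hσ i hi
  · rw [Basis.reindex_apply, Equiv.symm_symm]
    constructor
    · intro h
      exact exists_mulVec_eq_zero_iff.mp ⟨_, v₁.ne_zero _, ker v₁ hv₁ _ h⟩
    · intro h
      by_contra hne
      have hall : ∀ i, toBilin' T (v₁ i) (v₁ i) ≠ 0 := by
        intro i
        obtain ⟨i, rfl⟩ := σ.surjective i
        by_cases hi : i = Fin.last _
        · rw [hi]; exact hne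
        · exact hσ i hi
      obtain ⟨x, hx, hTx⟩ := exists_mulVec_eq_zero_iff.mpr h
      refine hx (v₁.repr.injective (Finsupp.ext fun i => ?_))
      have h1 : toBilin' T (v₁ i) x = 0 := by rw [toBilin'_apply', hTx]; simp
      rw [← v₁.sum_repr x, map_sum, Finset.sum_eq_single i] at h1
      · simpa [hall i] using h1
      · intro j _ hj; rw [map_smul, hv₁ i j hj.symm, smul_zero]
      · simp

variable [Fintype F] [DecidableEq F]

omit [Fintype F] [DecidableEq F] in
theorem gramCount_eq_frameCount (h2 : (2 : F) ≠ 0) {k : ℕ}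
    {γ : Matrix (Fin (k + 3)) (Fin (k + 3)) F} (hγ : γ.IsSymm) (hdet : γ.det ≠ 0)
    {P : Matrix (Fin (k + 3)) (Fin (k + 2)) F} {R : Matrix (Fin (k + 2)) (Fin (k + 3)) F}
    (hRP : R * P = 1) :
    ∃ a : Fin (k + 2) → (Fin (k + 3) → F),
      (∀ i j, i ≠ j → toBilin' γ (a i) (a j) = 0) ∧ (∀ i, a i ≠ 0) ∧
      (∀ i, i ≠ Fin.last _ → toBilin' γ (a i) (a i) ≠ 0) ∧
      (toBilin' γ (a (Fin.last _)) (a (Fin.last _)) = 0 ↔ (Pᵀ * γ * P).det = 0) ∧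
      frameCount (toBilin' γ) a = Nat.card {Q : Matrix (Fin (k + 3)) (Fin (k + 2)) F //
        (∃ S : Matrix (Fin (k + 2)) (Fin (k + 3)) F, S * Q = 1) ∧ Qᵀ * γ * Q = Pᵀ * γ * P} := by
  have hnd : (toBilin' γ).Nondegenerate :=
    LinearMap.BilinForm.nondegenerate_toBilin'_iff_det_ne_zero.mpr hdet
  have hform : ∀ (Q : Matrix (Fin (k + 3)) (Fin (k + 2)) F) x y,
      toBilin' (Qᵀ * γ * Q) x y = toBilin' γ (Q *ᵥ x) (Q *ᵥ y) := by
    intro Q x y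
    rw [← toBilin'_comp]; rfl
  have hinj : ∀ Q : Matrix (Fin (k + 3)) (Fin (k + 2)) F,
      (∃ S : Matrix (Fin (k + 2)) (Fin (k + 3)) F, S * Q = 1) ↔
        Function.Injective (toLin' Q) := by
    intro Q
    constructor
    · rintro ⟨S, hS⟩ x y hxy
      have := congrArg (S *ᵥ ·) hxy
      simpa [toLin'_apply, mulVec_mulVec, hS] using this
    · intro h
      obtain ⟨g, hg⟩ := LinearMap.exists_leftInverse_of_injective (toLin' Q)
        (LinearMap.ker_eq_bot.mpr h)
      refine ⟨LinearMap.toMatrix' g, ?_⟩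
      apply toLin'.injective
      rw [toLin'_mul, toLin'_toMatrix', hg, toLin'_one]
  have hPinj := (hinj P).mp ⟨R, hRP⟩
  have hsymm : (Pᵀ * γ * P).IsSymm := by
    rw [IsSymm, transpose_mul, transpose_mul, transpose_transpose, hγ.eq, Matrix.mul_assoc]
  obtain ⟨v, hort, han, hlast⟩ := exists_adapted_basis h2 hsymm (by
    intro x y hx hy hli
    have hfr := (toBilin' γ).finrank_orthogonal hnd (LinearMap.range (toLin' P))
    rw [LinearMap.finrank_range_of_inj hPinj] at hfr
    have hm : ∀ z, (Pᵀ * γ * P) *ᵥ z = 0 →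
        toLin' P z ∈ (toBilin' γ).orthogonal (LinearMap.range (toLin' P)) := by
      intro z hz
      rw [LinearMap.BilinForm.mem_orthogonal_iff]
      rintro _ ⟨w, rfl⟩
      change toBilin' γ (P *ᵥ w) (P *ᵥ z) = 0
      rw [← hform, toBilin'_apply', hz, dotProduct_zero]
    have hli' := hli.map' (toLin' P) (LinearMap.ker_eq_bot.mpr hPinj)
    have hli2 : LinearIndependent F (fun i : Fin 2 =>
        (⟨toLin' P (![x, y] i), by fin_cases i; exacts [hm x hx, hm y hy]⟩ :
          (toBilin' γ).orthogonal (LinearMap.range (toLin' P)))) :=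
      LinearIndependent.of_comp (Submodule.subtype _) hli'
    have := hli2.fintype_card_le_finrank
    simp [hfr] at this)
  refine ⟨fun i => P *ᵥ v i, fun i j hij => ?_, fun i h => ?_, fun i hi => ?_, ?_, ?_⟩
  · rw [← hform]; exact hort i j hij
  · exact v.ne_zero i (hPinj (by simpa [toLin'_apply] using h))
  · rw [← hform]; exact han i hi
  · rw [← hform]; exact hlast
  · symm
    refine Nat.card_congr ((toLin'.toEquiv.trans (v.constr F).symm.toEquiv).subtypeEquiv fun Q => ?_)
    have he : ∀ i, (toLin'.toEquiv.trans (v.constr F).symm.toEquiv) Q i = Q *ᵥ v i := fun i => rfl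
    simp only [he, ← hform]
    have hgram : Qᵀ * γ * Q = Pᵀ * γ * P ↔ ∀ i j, toBilin' (Qᵀ * γ * Q) (v i) (v j) =
        toBilin' (Pᵀ * γ * P) (v i) (v j) := by
      constructor
      · intro h i j; rw [h]
      · intro h
        exact toBilin'.injective (LinearMap.BilinForm.ext_basis v h)
    rw [← hgram, and_comm, hinj]
    refine and_congr_right fun hQ => ⟨fun h i h0 => v.ne_zero i (h (by simpa [toLin'_apply] using h0)),
      fun h => ?_⟩
    rw [injective_iff_map_eq_zero]
    intro x hx
    have hc : ∀ i, v.repr x i * toBilin' (Pᵀ * γ * P) (v i) (v i) = 0 := by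
      intro i
      have h1 : toBilin' (Qᵀ * γ * Q) (v i) x = 0 := by
        rw [hform, ← toLin'_apply Q x, hx, map_zero]
      rw [hQ, ← v.sum_repr x, map_sum, Finset.sum_eq_single i] at h1
      · simpa using h1
      · intro j _ hj; rw [map_smul, hort i j hj.symm, smul_zero]
      · simp
    have hc' : ∀ i, i ≠ Fin.last _ → v.repr x i = 0 := fun i hi =>
      (mul_eq_zero.mp (hc i)).resolve_right (han i hi)
    have hxl : x = v.repr x (Fin.last _) • v (Fin.last _) := by
      conv_lhs => rw [← v.sum_repr x]
      exact Finset.sum_eq_single _ (fun j _ hj => by rw [hc' j hj, zero_smul]) (by simp)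
    rw [hxl, map_smul, toLin'_apply] at hx
    rw [hxl, (smul_eq_zero.mp hx).resolve_right (h _), zero_smul]

theorem le_natCard_gram (hF : ringChar F ≠ 2) {k : ℕ}
    {γ : Matrix (Fin (k + 3)) (Fin (k + 3)) F} (hγ : γ.IsSymm) (hdet : γ.det ≠ 0)
    {P : Matrix (Fin (k + 3)) (Fin (k + 2)) F} {R : Matrix (Fin (k + 2)) (Fin (k + 3)) F}
    (hRP : R * P = 1) :
    (if (Pᵀ * γ * P).det = 0 then 2 else 1 : ℝ) *
        ((Fintype.card F : ℝ) ^ ((k + 2) * (k + 3) / 2) *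
          (1 - ((Fintype.card F : ℝ) ^ 2)⁻¹) ^ (k + 1)) ≤
      Nat.card {Q : Matrix (Fin (k + 3)) (Fin (k + 2)) F //
        (∃ S : Matrix (Fin (k + 2)) (Fin (k + 3)) F, S * Q = 1) ∧ Qᵀ * γ * Q = Pᵀ * γ * P} := by
  obtain ⟨a, hort, hne, han, hlast, hcard⟩ :=
    gramCount_eq_frameCount (Ring.two_ne_zero hF) hγ hdet hRP
  have hs : (toBilin' γ).IsSymm := by
    constructor
    intro x y
    rw [toBilin'_apply', toBilin'_apply', dotProduct_mulVec, ← mulVec_transpose, hγ.eq,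
      dotProduct_comm]
  have := (frameCount_bounds hF k hs
    (LinearMap.BilinForm.nondegenerate_toBilin'_iff_det_ne_zero.mpr hdet) (by simp)
    a hort hne han).1
  simpa only [hcard, hlast] using this

theorem natCard_gram_le (hF : ringChar F ≠ 2) {k : ℕ}
    {γ : Matrix (Fin (k + 3)) (Fin (k + 3)) F} (hγ : γ.IsSymm) (hdet : γ.det ≠ 0)
    {T : Matrix (Fin (k + 2)) (Fin (k + 2)) F} (hT : T.det ≠ 0) :
    (Nat.card {Q : Matrix (Fin (k + 3)) (Fin (k + 2)) F // Qᵀ * γ * Q = T} : ℝ) ≤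
      (Fintype.card F : ℝ) ^ ((k + 2) * (k + 3) / 2) *
        (1 + ((Fintype.card F : ℝ) ^ 2)⁻¹) ^ (k + 1) := by
  rcases isEmpty_or_nonempty {Q : Matrix (Fin (k + 3)) (Fin (k + 2)) F // Qᵀ * γ * Q = T} with h | h
  · rw [Nat.card_of_isEmpty]; push_cast; positivity
  obtain ⟨P, rfl⟩ := h
  have hinv : ∀ Q : Matrix (Fin (k + 3)) (Fin (k + 2)) F, Qᵀ * γ * Q = Pᵀ * γ * P →
      ((Pᵀ * γ * P)⁻¹ * Qᵀ * γ) * Q = 1 := by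
    intro Q hQ
    rw [Matrix.mul_assoc, Matrix.mul_assoc, ← Matrix.mul_assoc Qᵀ, hQ,
      Matrix.nonsing_inv_mul _ (isUnit_iff_ne_zero.mpr hT)]
  obtain ⟨a, hort, hne, han, hlast, hcard⟩ :=
    gramCount_eq_frameCount (Ring.two_ne_zero hF) hγ hdet (hinv P rfl)
  have hs : (toBilin' γ).IsSymm := by
    constructor
    intro x y
    rw [toBilin'_apply', toBilin'_apply', dotProduct_mulVec, ← mulVec_transpose, hγ.eq,
      dotProduct_comm]
  have := (frameCount_bounds hF k hs
    (LinearMap.BilinForm.nondegenerate_toBilin'_iff_det_ne_zero.mpr hdet) (by simp)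
    a hort hne han).2 (by rw [Ne, hlast]; exact hT)
  rw [hcard] at this
  refine le_trans (le_of_eq ?_) this
  congr 1
  exact Nat.card_congr (Equiv.subtypeEquivRight fun Q => ⟨fun h => ⟨⟨_, hinv Q h⟩, h⟩, fun h => h.2⟩)

end GramCounts

section Hensel

open Matrix

variable {A : Type*} [CommRing A] {m n : Type*} [Fintype m] [DecidableEq m] [Fintype n]
  [DecidableEq n]

omit [Fintype n] [DecidableEq n] in
theorem exists_symm_smul_eq {M : Matrix n n A} (hM : M.IsSymm) {c : A} (h : ∀ i j, c ∣ M i j) :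
    ∃ E : Matrix n n A, E.IsSymm ∧ M = c • E := by
  classical
  have : ∀ x : A, ∃ y, c ∣ x → x = c * y := fun x => by
    by_cases hx : c ∣ x
    · obtain ⟨y, hy⟩ := hx
      exact ⟨y, fun _ => hy⟩
    · exact ⟨0, fun h => absurd h hx⟩
  choose f hf using this
  refine ⟨M.map f, ?_, ?_⟩
  · rw [IsSymm, ← transpose_map, hM.eq]
  · ext i j
    simpa using hf _ (h i j)

omit [DecidableEq m] in
theorem exists_leftInverse_of_sub_smul {ϖ : A} (hϖ : IsNilpotent ϖ) {R : Matrix n m A}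
    {Q : Matrix m n A} {X : Matrix n n A} (h : R * Q = 1 + ϖ • X) :
    ∃ S : Matrix n m A, S * Q = 1 := by
  obtain ⟨N, hN⟩ := hϖ
  have : IsUnit (R * Q) := by
    rw [h]
    refine IsNilpotent.isUnit_one_add ⟨N, ?_⟩
    rw [smul_pow, hN, zero_smul]
  obtain ⟨U, hU⟩ := this.exists_left_inv
  exact ⟨U * R, by rw [Matrix.mul_assoc, hU]⟩

omit [DecidableEq m] in
theorem exists_gram_correction {ϖ δ : A} (hϖ : IsNilpotent ϖ) {γ : Matrix m m A} (hγ : γ.IsSymm)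
    {P B : Matrix m n A} (hB : Pᵀ * γ * B = δ • 1) (K : Matrix m n A) {E : Matrix n n A}
    (hE : E.IsSymm) :
    ∃ Y : Matrix n n A, Y.IsSymm ∧
      (P + (2 * δ * ϖ) • ((2 * δ) • K + B * Y))ᵀ * γ * (P + (2 * δ * ϖ) • ((2 * δ) • K + B * Y)) =
        Pᵀ * γ * P + (4 * δ ^ 2 * ϖ) • E := by
  let Z : Matrix n n A → Matrix m n A := fun Y => (2 * δ) • K + B * Y
  let Φ : Matrix n n A → Matrix n n A := fun Y =>
    E - (Pᵀ * γ * K + Kᵀ * γ * P) - ϖ • ((Z Y)ᵀ * γ * Z Y)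
  have hΦs : ∀ Y, (Φ Y).IsSymm := by
    intro Y
    have e1 : (Pᵀ * γ * K)ᵀ = Kᵀ * γ * P := by
      rw [transpose_mul, transpose_mul, transpose_transpose, hγ.eq, Matrix.mul_assoc]
    have e2 : (Kᵀ * γ * P)ᵀ = Pᵀ * γ * K := by
      rw [transpose_mul, transpose_mul, transpose_transpose, hγ.eq, Matrix.mul_assoc]
    have e3 : ((Z Y)ᵀ * γ * Z Y)ᵀ = (Z Y)ᵀ * γ * Z Y := by
      rw [transpose_mul, transpose_mul, transpose_transpose, hγ.eq, Matrix.mul_assoc]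
    simp only [IsSymm, Φ, transpose_sub, transpose_add, transpose_smul, e1, e2, e3, hE.eq]
    rw [add_comm (Kᵀ * γ * P)]
  have hstep : ∀ (j : ℕ) (Y D : Matrix n n A), ∃ D', Φ (Y + ϖ ^ j • D) = Φ Y + ϖ ^ (j + 1) • D' := by
    intro j Y D
    have hZ : Z (Y + ϖ ^ j • D) = Z Y + ϖ ^ j • (B * D) := by
      simp only [Z, Matrix.mul_add, Matrix.mul_smul, add_assoc]
    refine ⟨-((Z Y)ᵀ * γ * (B * D) + (B * D)ᵀ * γ * Z Y + ϖ ^ j • ((B * D)ᵀ * γ * (B * D))), ?_⟩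
    simp only [Φ, hZ, transpose_add, transpose_smul, Matrix.add_mul, Matrix.mul_add,
      Matrix.smul_mul, Matrix.mul_smul, smul_add, smul_neg, smul_smul, pow_succ]
    rw [mul_comm ϖ (ϖ ^ j), mul_assoc (ϖ ^ j) ϖ (ϖ ^ j)]
    rw [show ϖ * (ϖ ^ j * ϖ ^ j) = ϖ ^ j * (ϖ * ϖ ^ j) by ring]
    abel
  have hiter : ∀ j : ℕ, ∃ D, Φ^[j + 1] 0 = Φ^[j] 0 + ϖ ^ j • D := by
    intro j
    induction j with
    | zero => exact ⟨Φ 0, by simp⟩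
    | succ j ih =>
      obtain ⟨D, hD⟩ := ih
      obtain ⟨D', hD'⟩ := hstep j (Φ^[j] 0) D
      refine ⟨D', ?_⟩
      rw [Function.iterate_succ_apply' Φ (j + 1)]
      conv_lhs => rw [hD]
      rw [hD', ← Function.iterate_succ_apply' Φ j]
  obtain ⟨N, hN⟩ := hϖ
  obtain ⟨D, hD⟩ := hiter (N + 1)
  have hfix : Φ (Φ^[N + 1] 0) = Φ^[N + 1] 0 := by
    rw [← Function.iterate_succ_apply' Φ, hD, pow_succ, hN, zero_mul, zero_smul, add_zero]
  have hYs : (Φ^[N + 1] 0).IsSymm := by rw [Function.iterate_succ_apply']; exact hΦs _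
  generalize Φ^[N + 1] 0 = Y at hfix hYs
  refine ⟨Y, hYs, ?_⟩
  have hB' : Bᵀ * γ * P = δ • 1 := by
    have := congrArg transpose hB
    rwa [transpose_mul, transpose_mul, transpose_transpose, hγ.eq, ← Matrix.mul_assoc,
      transpose_smul, transpose_one] at this
  have h1 : Pᵀ * γ * Z Y = (2 * δ) • (Pᵀ * γ * K) + δ • Y := by
    simp only [Z, Matrix.mul_add, Matrix.mul_smul]
    rw [← Matrix.mul_assoc _ B, hB, Matrix.smul_mul, Matrix.one_mul]
  have h2 : (Z Y)ᵀ * γ * P = (2 * δ) • (Kᵀ * γ * P) + δ • Y := by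
    simp only [Z, transpose_add, transpose_smul, transpose_mul, hYs.eq, Matrix.add_mul,
      Matrix.smul_mul]
    rw [Matrix.mul_assoc Y, Matrix.mul_assoc Y, hB', Matrix.mul_smul, Matrix.mul_one]
  have hY : Y + (Pᵀ * γ * K + Kᵀ * γ * P) + ϖ • ((Z Y)ᵀ * γ * Z Y) = E := by
    have : Φ Y = E - (Pᵀ * γ * K + Kᵀ * γ * P) - ϖ • ((Z Y)ᵀ * γ * Z Y) := rfl
    rw [hfix] at this
    nth_rw 1 [this]
    abel
  change (P + (2 * δ * ϖ) • Z Y)ᵀ * γ * (P + (2 * δ * ϖ) • Z Y) = _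
  rw [← hY]
  simp only [transpose_add, transpose_smul, Matrix.add_mul, Matrix.mul_add, Matrix.smul_mul,
    Matrix.mul_smul, h1, h2, smul_add, smul_smul]
  have e1 : (4 * δ ^ 2 * ϖ) • Y = (2 * δ * ϖ * δ) • Y + (2 * δ * ϖ * δ) • Y := by
    rw [← add_smul]; congr 1; ring
  rw [e1, show 2 * δ * ϖ * (2 * δ) = 4 * δ ^ 2 * ϖ by ring,
    show 2 * δ * ϖ * (2 * δ * ϖ) = 4 * δ ^ 2 * ϖ * ϖ by ring]
  abel

theorem natCard_range_smul_le [Finite A] {ϖ δ : A} (hϖ : IsNilpotent ϖ) {γ : Matrix m m A}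
    (hγ : γ.IsSymm) (hδ : γ.det = δ) {P : Matrix m n A} {R : Matrix n m A} (hRP : R * P = 1)
    {E : Matrix n n A} (hE : E.IsSymm) :
    Nat.card (Set.range fun K : Matrix m n A => (4 * δ ^ 2 * ϖ) • K) ≤
      Nat.card {Q : Matrix m n A // (∃ X, Q = P + (2 * δ * ϖ) • X) ∧
        Qᵀ * γ * Q = Pᵀ * γ * P + (4 * δ ^ 2 * ϖ) • E} *
      Nat.card (Set.range fun Y : {Y : Matrix n n A // Y.IsSymm} => (2 * δ * ϖ) • Y.1) := by
  set B : Matrix m n A := γ.adjugate * Rᵀ with hBdef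
  have hB : Pᵀ * γ * B = δ • 1 := by
    rw [hBdef, Matrix.mul_assoc, ← Matrix.mul_assoc γ, mul_adjugate, hδ, Matrix.smul_mul,
      Matrix.mul_smul, Matrix.one_mul, ← transpose_mul, hRP, transpose_one]
  choose Y hYs hY using fun K => exists_gram_correction hϖ hγ hB K hE
  rw [← Nat.card_prod]
  refine Nat.card_le_card_of_injective (fun x : Set.range fun K : Matrix m n A =>
      (4 * δ ^ 2 * ϖ) • K =>
    (⟨⟨P + (2 * δ * ϖ) • ((2 * δ) • x.2.choose + B * Y x.2.choose), ⟨_, rfl⟩, hY _⟩,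
      ⟨_, ⟨⟨Y x.2.choose, hYs _⟩, rfl⟩⟩⟩ : _ × _)) ?_
  rintro x x' h
  have h1 := congrArg (fun z => z.1.1) h
  have h2 := congrArg (fun z => z.2.1) h
  have hx := x.2.choose_spec
  have hx' := x'.2.choose_spec
  dsimp only at h1 h2 hx hx'
  rw [add_right_inj, smul_add, smul_add, ← Matrix.mul_smul, ← Matrix.mul_smul, h2,
    add_left_inj, smul_smul, smul_smul, show 2 * δ * ϖ * (2 * δ) = 4 * δ ^ 2 * ϖ by ring, hx,
    hx'] at h1
  exact Subtype.ext h1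

end Hensel

section Lifts

open Matrix

/-- Index set of the entries on and above the diagonal. -/
abbrev UpperIndex (n : ℕ) : Type := {q : Fin n × Fin n // q.1 ≤ q.2}

theorem prod_upperIndex {M : Type*} [CommMonoid M] {n : ℕ} (g : Fin n → M) :
    ∏ q : UpperIndex n, (g q.1.1 * g q.1.2) = ∏ i, g i ^ (n + 1) := by
  have e : ∀ f : Fin n × Fin n → M, ∏ q : UpperIndex n, f q.1 =
      ∏ i, ∏ j, if i ≤ j then f (i, j) else 1 := by
    intro f
    rw [← Fintype.prod_prod_type' (fun i j => if i ≤ j then f (i, j) else 1), ← Finset.prod_filter]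
    symm
    exact Finset.prod_subtype _ (by simp) f
  rw [Finset.prod_mul_distrib, e (fun q => g q.1), e (fun q => g q.2), mul_comm,
    Finset.prod_comm, ← Finset.prod_mul_distrib]
  refine Finset.prod_congr rfl fun i _ => ?_
  rw [← Finset.prod_filter, ← Finset.prod_filter]
  simp only [Finset.prod_const]
  rw [← pow_add]
  congr 1
  have h1 : ({a | a ≤ i} : Finset (Fin n)) = Finset.Iic i := by ext; simp
  have h2 : ({a | i ≤ a} : Finset (Fin n)) = Finset.Ici i := by ext; simp
  rw [h1, h2, Fin.card_Iic, Fin.card_Ici]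
  omega

theorem card_upperIndex (n : ℕ) : Fintype.card (UpperIndex n) = n * (n + 1) / 2 := by
  have h := prod_upperIndex (M := Multiplicative ℕ) (n := n) (fun _ => Multiplicative.ofAdd 1)
  have h' := congrArg Multiplicative.toAdd h
  simp at h'
  omega

theorem natCard_symm_mem {A : Type*} {n : ℕ} (S : Fin n → Fin n → A → Prop)
    (hS : ∀ i j, S i j = S j i) :
    Nat.card {E : Matrix (Fin n) (Fin n) A // E.IsSymm ∧ ∀ i j, S i j (E i j)} =
      ∏ q : UpperIndex n, Nat.card {x // S q.1.1 q.1.2 x} := by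
  rw [← Nat.card_pi]
  refine Nat.card_congr
    { toFun := fun E q => ⟨E.1 q.1.1 q.1.2, E.2.2 _ _⟩
      invFun := fun f => ⟨Matrix.of fun i j => if h : i ≤ j then (f ⟨(i, j), h⟩ : A) else
        f ⟨(j, i), (le_total i j).resolve_left h⟩, ?_, ?_⟩
      left_inv := ?_
      right_inv := ?_ }
  · ext i j
    rcases lt_trichotomy i j with h | h | h
    · simp [h.le, h.not_ge]
    · simp [h]
    · simp [h.le, h.not_ge]
  · intro i j
    by_cases h : i ≤ j
    · simpa [h] using (f ⟨(i, j), h⟩).2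
    · have := (f ⟨(j, i), (le_total i j).resolve_left h⟩).2
      rw [hS i j]
      simpa [h] using this
  · rintro ⟨E, hE, hE'⟩
    ext i j
    by_cases h : i ≤ j
    · simp [h]
    · simpa [h] using hE.apply i j
  · intro f
    ext q
    simp [q.2]

theorem natCard_matrix_mem {A m n : Type*} [Fintype m] [Fintype n] (S : A → Prop) :
    Nat.card {E : Matrix m n A // ∀ i j, S (E i j)} =
      Nat.card {x // S x} ^ (Fintype.card m * Fintype.card n) := by
  have e : {E : Matrix m n A // ∀ i j, S (E i j)} ≃ (m × n → {x // S x}) :=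
    { toFun := fun E q => ⟨E.1 q.1 q.2, E.2 _ _⟩
      invFun := fun f => ⟨Matrix.of fun i j => (f (i, j) : A), fun i j => (f (i, j)).2⟩
      left_inv := fun E => rfl
      right_inv := fun f => rfl }
  rw [Nat.card_congr e, Nat.card_fun, Nat.card_prod, Nat.card_eq_fintype_card (α := m),
    Nat.card_eq_fintype_card (α := n)]

variable {A F : Type*} [CommRing A] [Finite A] [CommRing F] {m : Type*} [Fintype m] [DecidableEq m]
  {n : ℕ}

omit [DecidableEq m] [Finite A] in
theorem natCard_lifts (π : A →+* F) (hπ : Function.Surjective π) {ϖ : A}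
    (hker : ∀ x, π x = 0 ↔ ϖ ∣ x) (Q₀ : Matrix m (Fin n) F) :
    Nat.card {Q : Matrix m (Fin n) A // Q.map π = Q₀} =
      Nat.card {x : A // ϖ ∣ x} ^ (Fintype.card m * n) := by
  obtain ⟨s, hs⟩ := hπ.hasRightInverse
  have h := natCard_matrix_mem (m := m) (n := Fin n) (fun x : A => ϖ ∣ x)
  rw [Fintype.card_fin] at h
  rw [← h]
  refine Nat.card_congr ((Equiv.addRight (-(Q₀.map s))).subtypeEquiv fun Q => ?_)
  rw [← Matrix.ext_iff]
  refine forall₂_congr fun i j => ?_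
  simp only [Equiv.coe_addRight, ← hker]
  simp [hs (Q₀ i j), ← sub_eq_add_neg, sub_eq_zero]

theorem natCard_gram_lifts (π : A →+* F) (hπ : Function.Surjective π) {ϖ : A}
    (hϖ : IsNilpotent ϖ) (hker : ∀ x, π x = 0 ↔ ϖ ∣ x) {γ : Matrix m m A} (hγ : γ.IsSymm)
    (hδ : IsUnit (2 * γ.det)) {Q₀ : Matrix m (Fin n) F} {R₀ : Matrix (Fin n) m F}
    (hR₀ : R₀ * Q₀ = 1) {T : Matrix (Fin n) (Fin n) A} (hT : T.IsSymm)
    (hTQ : T.map π = Q₀ᵀ * γ.map π * Q₀) :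
    Nat.card {Q : Matrix m (Fin n) A // Q.map π = Q₀ ∧ Qᵀ * γ * Q = T} *
      Nat.card {x : A // ϖ ∣ x} ^ (n * (n + 1) / 2) =
        Nat.card {x : A // ϖ ∣ x} ^ (Fintype.card m * n) := by
  classical
  set N := Nat.card {x : A // ϖ ∣ x} with hN
  have hN0 : 0 < N := by
    have : Nonempty {x : A // ϖ ∣ x} := ⟨0, dvd_zero _⟩
    exact Nat.card_pos
  set δ := γ.det
  have hu4 : IsUnit (4 * δ ^ 2) := by
    have := hδ.pow 2
    rwa [mul_pow, show (2 : A) ^ 2 = 4 by norm_num] at this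
  let 𝒯 := {T : Matrix (Fin n) (Fin n) A // T.IsSymm ∧ T.map π = Q₀ᵀ * γ.map π * Q₀}
  let c : 𝒯 → ℕ := fun T => Nat.card {Q : Matrix m (Fin n) A // Q.map π = Q₀ ∧ Qᵀ * γ * Q = T.1}
  have hsymm_card : Nat.card {E : Matrix (Fin n) (Fin n) A // E.IsSymm ∧ ∀ i j, ϖ ∣ E i j} =
      N ^ (n * (n + 1) / 2) := by
    have := natCard_symm_mem (n := n) (fun _ _ (x : A) => ϖ ∣ x) (fun _ _ => rfl)
    rw [Finset.prod_const, Finset.card_univ, card_upperIndex] at this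
    exact this
  -- every target is attained often
  have hlow : ∀ T : 𝒯, N ^ (Fintype.card m * n) ≤ c T * N ^ (n * (n + 1) / 2) := by
    rintro ⟨T, hT, hTQ⟩
    obtain ⟨s, hs⟩ := hπ.hasRightInverse
    set P := Q₀.map s with hP
    have hPπ : P.map π = Q₀ := by ext i j; simp [hP, hs (Q₀ i j)]
    have hRP : ∃ S : Matrix (Fin n) m A, S * P = 1 := by
      have h1 : ∀ i j, ϖ ∣ (R₀.map s * P - 1 : Matrix (Fin n) (Fin n) A) i j := by
        intro i j
        rw [← hker]
        have : (R₀.map s * P - 1).map π = 0 := by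
          rw [Matrix.map_sub _ (fun a b => map_sub π a b), Matrix.map_mul, hPπ,
            Matrix.map_one _ (map_zero π) (map_one π), Matrix.map_map]
          rw [show (π ∘ s) = id from funext hs, Matrix.map_id, hR₀, sub_self]
        exact congrFun₂ this i j
      choose X hX using h1
      refine exists_leftInverse_of_sub_smul hϖ (R := R₀.map s) (X := Matrix.of X) ?_
      ext i j
      have := hX i j
      rw [Matrix.sub_apply, sub_eq_iff_eq_add] at this
      simp [this, add_comm]
    obtain ⟨R, hR⟩ := hRP
    have hdiff : ∃ E : Matrix (Fin n) (Fin n) A, E.IsSymm ∧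
        T - Pᵀ * γ * P = (4 * δ ^ 2 * ϖ) • E := by
      refine exists_symm_smul_eq ?_ fun i j => ?_
      · rw [IsSymm, transpose_sub, transpose_mul, transpose_mul, transpose_transpose, hγ.eq, hT.eq,
          Matrix.mul_assoc]
      · rw [hu4.mul_left_dvd, ← hker]
        have : (T - Pᵀ * γ * P).map π = 0 := by
          rw [Matrix.map_sub _ (fun a b => map_sub π a b), Matrix.map_mul, Matrix.map_mul,
            transpose_map, hPπ, hTQ, sub_self]
        exact congrFun₂ this i j
    obtain ⟨E, hE, hTE⟩ := hdiff
    have key := natCard_range_smul_le hϖ hγ rfl hR hE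
    have e1 : Nat.card (Set.range fun K : Matrix m (Fin n) A => (4 * δ ^ 2 * ϖ) • K) =
        N ^ (Fintype.card m * n) := by
      have h := natCard_matrix_mem (m := m) (n := Fin n) (fun x : A => ϖ ∣ x)
      rw [Fintype.card_fin] at h
      refine Eq.trans (Nat.card_congr (Equiv.setCongr ?_)) h
      ext M
      simp only [Set.mem_range]
      constructor
      · rintro ⟨K, rfl⟩ i j
        exact ⟨4 * δ ^ 2 * K i j, by simp; ring⟩
      · intro h
        have h' : ∀ i j, 4 * δ ^ 2 * ϖ ∣ M i j := fun i j => hu4.mul_left_dvd.mpr (h i j)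
        choose K hK using h'
        exact ⟨Matrix.of K, by ext i j; simp [hK i j]⟩
    have e2 : Nat.card (Set.range fun Y : {Y : Matrix (Fin n) (Fin n) A // Y.IsSymm} =>
        (2 * δ * ϖ) • Y.1) ≤ N ^ (n * (n + 1) / 2) := by
      rw [← hsymm_card]
      refine Nat.card_le_card_of_injective (fun x => ⟨x.1, ?_⟩) ?_
      · obtain ⟨_, Y, rfl⟩ := x
        refine ⟨?_, fun i j => ⟨2 * δ * Y.1 i j, by simp; ring⟩⟩
        rw [IsSymm, transpose_smul, Y.2.eq]
      · intro x y hxy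
        exact Subtype.ext (Subtype.mk.inj hxy)
    rw [e1] at key
    refine key.trans (Nat.mul_le_mul ?_ e2)
    refine Nat.card_le_card_of_injective (fun x => ⟨x.1, ?_, ?_⟩) ?_
    · obtain ⟨_, ⟨X, rfl⟩, -⟩ := x
      rw [Matrix.map_add _ (fun a b => map_add π a b), hPπ]
      have : π ϖ = 0 := (hker ϖ).mpr dvd_rfl
      ext i j
      simp [this]
    · rw [x.2.2, ← hTE]; abel
    · intro x y hxy
      exact Subtype.ext (Subtype.mk.inj hxy)
  -- the total number of lifts leaves no slack
  have hcard𝒯 : Nat.card 𝒯 = N ^ (n * (n + 1) / 2) := by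
    rw [← hsymm_card]
    refine Nat.card_congr ((Equiv.addRight (-T)).subtypeEquiv fun T' => ?_)
    have h1 : (T' + -T).IsSymm ↔ T'.IsSymm := by
      rw [IsSymm, IsSymm, transpose_add, transpose_neg, hT.eq, add_left_inj]
    rw [Equiv.coe_addRight, h1, ← hTQ]
    refine and_congr_right fun _ => ?_
    rw [← Matrix.ext_iff]
    refine forall₂_congr fun i j => ?_
    rw [← hker]
    simp [← sub_eq_add_neg, sub_eq_zero]
  have : Fintype 𝒯 := Fintype.ofFinite _
  have hsum : ∑ T, c T = N ^ (Fintype.card m * n) := by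
    rw [hN, ← natCard_lifts π hπ hker Q₀, ← Nat.card_sigma]
    refine Nat.card_congr
      { toFun := fun x => ⟨x.2.1, x.2.2.1⟩
        invFun := fun Q => ⟨⟨Q.1ᵀ * γ * Q.1, ?_, ?_⟩, ⟨Q.1, Q.2, rfl⟩⟩
        left_inv := ?_
        right_inv := fun _ => rfl }
    · rw [IsSymm, transpose_mul, transpose_mul, transpose_transpose, hγ.eq, Matrix.mul_assoc]
    · rw [Matrix.map_mul, Matrix.map_mul, transpose_map, Q.2]
    · rintro ⟨⟨T, hT⟩, Q, hQ, h⟩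
      obtain rfl : Qᵀ * γ * Q = T := h
      rfl
  have hsum' : ∑ T : 𝒯, c T * N ^ (n * (n + 1) / 2) = ∑ T : 𝒯, N ^ (Fintype.card m * n) := by
    rw [← Finset.sum_mul, hsum, Finset.sum_const, Finset.card_univ, ← Nat.card_eq_fintype_card (α := 𝒯),
      hcard𝒯, smul_eq_mul, mul_comm]
  exact ((Finset.sum_eq_sum_iff_of_le fun T _ => hlow T).mp hsum'.symm ⟨T, hT, hTQ⟩
    (Finset.mem_univ _)).symm

end Lifts

section ZModCounts

open Matrix

theorem natCard_zmod_mul_eq_zero (M d : ℕ) [NeZero M] :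
    Nat.card {e : ZMod M // (d : ZMod M) * e = 0} = M.gcd d := by
  have h := IsAddCyclic.card_nsmulAddMonoidHom_ker (G := ZMod M) d
  rw [Nat.card_zmod] at h
  rw [← h]
  exact Nat.card_congr (Equiv.subtypeEquivRight fun x => by
    simp [AddMonoidHom.mem_ker, nsmul_eq_mul])

theorem natCard_zmod_dvd (M d : ℕ) [NeZero M] :
    Nat.card {e : ZMod M // (d : ZMod M) ∣ e} = M / M.gcd d := by
  have h := IsAddCyclic.card_nsmulAddMonoidHom_range (G := ZMod M) d
  rw [Nat.card_zmod] at h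
  rw [← h]
  exact Nat.card_congr (Equiv.subtypeEquivRight fun x => by
    simp [AddMonoidHom.mem_range, dvd_def, eq_comm])

theorem zmod_castHom_eq_zero_iff {p r : ℕ} (hr : r ≠ 0) (x : ZMod (p ^ r)) :
    ZMod.castHom (dvd_pow_self p hr) (ZMod p) x = 0 ↔ (p : ZMod (p ^ r)) ∣ x := by
  obtain ⟨x, rfl⟩ := ZMod.intCast_surjective x
  rw [map_intCast, ZMod.intCast_zmod_eq_zero_iff_dvd]
  constructor
  · rintro ⟨y, rfl⟩; exact ⟨y, by push_cast; rfl⟩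
  · rintro ⟨y, hy⟩
    obtain ⟨y, rfl⟩ := ZMod.intCast_surjective y
    have : ((x - p * y : ℤ) : ZMod (p ^ r)) = 0 := by push_cast; rw [hy, sub_self]
    rw [ZMod.intCast_zmod_eq_zero_iff_dvd] at this
    have h2 : (p : ℤ) ∣ x - p * y := (by exact_mod_cast dvd_pow_self p hr : (p : ℤ) ∣ ((p ^ r : ℕ) : ℤ)).trans this
    exact (dvd_sub_left (dvd_mul_right _ _)).mp h2

theorem isNilpotent_zmod_prime_pow (p r : ℕ) : IsNilpotent (p : ZMod (p ^ r)) :=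
  ⟨r, by exact_mod_cast ZMod.natCast_self (p ^ r)⟩

theorem isUnit_zmod_prime_pow {p : ℕ} (hp : p.Prime) (r : ℕ) {a : ℤ} (ha : ¬ (p : ℤ) ∣ a) :
    IsUnit (a : ZMod (p ^ r)) := by
  have h : IsCoprime (p : ℤ) a := (Nat.prime_iff_prime_int.mp hp).coprime_iff_not_dvd.mpr ha
  have h2 : IsCoprime a ((p ^ r : ℕ) : ℤ) := by
    push_cast
    exact h.symm.pow_right
  obtain ⟨u, v, huv⟩ := h2
  refine IsUnit.of_mul_eq_one (u : ZMod (p ^ r)) ?_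
  have := congrArg (Int.cast : ℤ → ZMod (p ^ r)) huv
  push_cast at this
  have h0 : (p : ZMod (p ^ r)) ^ r = 0 := by exact_mod_cast ZMod.natCast_self (p ^ r)
  rw [h0, mul_zero, add_zero] at this
  rw [mul_comm]; exact this

variable {k : ℕ} {γ : Matrix (Fin (k + 3)) (Fin (k + 3)) ℤ}

/-- Number of left-invertible solutions over `ZMod M` of `Qᵀ γ Q = T`. -/
noncomputable def primCount (γ : Matrix (Fin (k + 3)) (Fin (k + 3)) ℤ) (M : ℕ)
    (T : Matrix (Fin (k + 2)) (Fin (k + 2)) (ZMod M)) : ℕ :=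
  Nat.card {Q : Matrix (Fin (k + 3)) (Fin (k + 2)) (ZMod M) //
    (∃ S : Matrix (Fin (k + 2)) (Fin (k + 3)) (ZMod M), S * Q = 1) ∧
      Qᵀ * γ.map (Int.cast : ℤ → ZMod M) * Q = T}

theorem map_castHom_intCast {p r : ℕ} (hr : r ≠ 0) {m n : Type*} (X : Matrix m n ℤ) :
    (X.map (Int.cast : ℤ → ZMod (p ^ r))).map (ZMod.castHom (dvd_pow_self p hr) (ZMod p)) =
      X.map (Int.cast : ℤ → ZMod p) := by
  ext i j; simp

theorem det_map_intCast {m : Type*} [Fintype m] [DecidableEq m] (X : Matrix m m ℤ) (M : ℕ) :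
    (X.map (Int.cast : ℤ → ZMod M)).det = (X.det : ZMod M) := by
  have := (Int.castRingHom (ZMod M)).map_det X
  exact this.symm

theorem map_cast_mul {l m n : Type*} [Fintype m] (X : Matrix l m ℤ) (Y : Matrix m n ℤ) (M : ℕ) :
    (X * Y).map (Int.cast : ℤ → ZMod M) =
      X.map (Int.cast : ℤ → ZMod M) * Y.map (Int.cast : ℤ → ZMod M) :=
  Matrix.map_mul (f := Int.castRingHom (ZMod M))

theorem map_cast_one {m : Type*} [DecidableEq m] (M : ℕ) :
    (1 : Matrix m m ℤ).map (Int.cast : ℤ → ZMod M) = 1 :=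
  Matrix.map_one _ Int.cast_zero Int.cast_one

theorem mul_div_two_eq (k : ℕ) : (k + 3) * (k + 2) = (k + 2) * (k + 3) / 2 * 2 := by
  have : Even ((k + 2) * (k + 3)) := Nat.even_mul_succ_self (k + 2)
  rw [Nat.div_mul_cancel this.two_dvd, mul_comm]

theorem natCard_gram_lifts_zmod (hγ : γ.IsSymm) {p : ℕ} (hp : p.Prime)
    (hpδ : ¬ (p : ℤ) ∣ 2 * γ.det) {r : ℕ} (hr : r ≠ 0)
    {Q₀ : Matrix (Fin (k + 3)) (Fin (k + 2)) (ZMod p)}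
    {R₀ : Matrix (Fin (k + 2)) (Fin (k + 3)) (ZMod p)} (hR₀ : R₀ * Q₀ = 1)
    {T : Matrix (Fin (k + 2)) (Fin (k + 2)) (ZMod (p ^ r))} (hT : T.IsSymm)
    (hTQ : T.map (ZMod.castHom (dvd_pow_self p hr) (ZMod p)) =
      Q₀ᵀ * γ.map (Int.cast : ℤ → ZMod p) * Q₀) :
    Nat.card {Q : Matrix (Fin (k + 3)) (Fin (k + 2)) (ZMod (p ^ r)) //
      Q.map (ZMod.castHom (dvd_pow_self p hr) (ZMod p)) = Q₀ ∧
        Qᵀ * γ.map (Int.cast : ℤ → ZMod (p ^ r)) * Q = T} =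
      p ^ ((r - 1) * ((k + 2) * (k + 3) / 2)) := by
  have : NeZero (p ^ r) := ⟨(pow_pos hp.pos r).ne'⟩
  have hN : Nat.card {x : ZMod (p ^ r) // (p : ZMod (p ^ r)) ∣ x} = p ^ (r - 1) := by
    rw [natCard_zmod_dvd, Nat.gcd_eq_right (dvd_pow_self p hr)]
    obtain ⟨r, rfl⟩ := Nat.exists_eq_succ_of_ne_zero hr
    rw [pow_succ, Nat.mul_div_cancel _ hp.pos]; rfl
  have h := natCard_gram_lifts (ZMod.castHom (dvd_pow_self p hr) (ZMod p))
    (ZMod.castHom_surjective _) (isNilpotent_zmod_prime_pow p r) (zmod_castHom_eq_zero_iff hr)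
    (γ := γ.map (Int.cast : ℤ → ZMod (p ^ r))) (by rw [IsSymm, ← transpose_map, hγ.eq])
    (by rw [det_map_intCast]; exact_mod_cast isUnit_zmod_prime_pow hp r hpδ) hR₀ hT
    (by rw [map_castHom_intCast hr, hTQ])
  rw [hN, Fintype.card_fin, mul_div_two_eq k, mul_two, pow_add] at h
  rw [pow_mul]
  exact Nat.eq_of_mul_eq_mul_right (pow_pos (pow_pos hp.pos _) _) h

theorem le_primCount_of_not_dvd (hγ : γ.IsSymm) {p : ℕ} (hp : p.Prime)
    (hpδ : ¬ (p : ℤ) ∣ 2 * γ.det) {r : ℕ} (hr : r ≠ 0)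
    {P : Matrix (Fin (k + 3)) (Fin (k + 2)) ℤ} {R : Matrix (Fin (k + 2)) (Fin (k + 3)) ℤ}
    (hRP : R * P = 1) {T : Matrix (Fin (k + 2)) (Fin (k + 2)) (ZMod (p ^ r))} (hT : T.IsSymm)
    (hTP : ∀ i j, (p : ZMod (p ^ r)) ∣ (T - (Pᵀ * γ * P).map (Int.cast : ℤ → ZMod (p ^ r)) :
      Matrix (Fin (k + 2)) (Fin (k + 2)) (ZMod (p ^ r))) i j) :
    (if (p : ℤ) ∣ (Pᵀ * γ * P).det then 2 else 1 : ℝ) * (1 - ((p : ℝ) ^ 2)⁻¹) ^ (k + 1) *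
      (p : ℝ) ^ (r * ((k + 2) * (k + 3) / 2)) ≤ primCount γ (p ^ r) T := by
  have : Fact p.Prime := ⟨hp⟩
  have : NeZero (p ^ r) := ⟨(pow_pos hp.pos r).ne'⟩
  set π := ZMod.castHom (dvd_pow_self p hr) (ZMod p)
  have hp2 : ringChar (ZMod p) ≠ 2 := by
    rw [ZMod.ringChar_zmod_n]
    rintro rfl
    exact hpδ (dvd_mul_right _ _)
  have hdet : (γ.map (Int.cast : ℤ → ZMod p)).det ≠ 0 := by
    rw [det_map_intCast, Ne, ZMod.intCast_zmod_eq_zero_iff_dvd]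
    exact fun h => hpδ (h.mul_left _)
  have hgram : (P.map (Int.cast : ℤ → ZMod p))ᵀ * γ.map (Int.cast : ℤ → ZMod p) * P.map (Int.cast : ℤ → ZMod p) =
      (Pᵀ * γ * P).map (Int.cast : ℤ → ZMod p) := by
    rw [map_cast_mul, map_cast_mul, transpose_map]
  have h := le_natCard_gram hp2 (γ := γ.map (Int.cast : ℤ → ZMod p))
    (by rw [IsSymm, ← transpose_map, hγ.eq]) hdet
    (P := P.map (Int.cast : ℤ → ZMod p)) (R := R.map (Int.cast : ℤ → ZMod p)) (by rw [← map_cast_mul, hRP, map_cast_one])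
  rw [hgram, det_map_intCast, ZMod.card] at h
  simp only [ZMod.intCast_zmod_eq_zero_iff_dvd] at h
  have hTπ : T.map π = (Pᵀ * γ * P).map (Int.cast : ℤ → ZMod p) := by
    ext i j
    have := (zmod_castHom_eq_zero_iff hr _).mpr (hTP i j)
    rw [Matrix.sub_apply, map_sub, sub_eq_zero] at this
    rw [Matrix.map_apply, this, Matrix.map_apply, Matrix.map_apply, map_intCast]
  have hcount : Nat.card {Q : Matrix (Fin (k + 3)) (Fin (k + 2)) (ZMod p) //
        (∃ S : Matrix (Fin (k + 2)) (Fin (k + 3)) (ZMod p), S * Q = 1) ∧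
          Qᵀ * γ.map (Int.cast : ℤ → ZMod p) * Q = (Pᵀ * γ * P).map (Int.cast : ℤ → ZMod p)} *
        p ^ ((r - 1) * ((k + 2) * (k + 3) / 2)) ≤ primCount γ (p ^ r) T := by
    set 𝒬 := {Q : Matrix (Fin (k + 3)) (Fin (k + 2)) (ZMod p) //
        (∃ S : Matrix (Fin (k + 2)) (Fin (k + 3)) (ZMod p), S * Q = 1) ∧
          Qᵀ * γ.map (Int.cast : ℤ → ZMod p) * Q = (Pᵀ * γ * P).map (Int.cast : ℤ → ZMod p)}
    have e : Nat.card ((Q₀ : 𝒬) × {Q : Matrix (Fin (k + 3)) (Fin (k + 2)) (ZMod (p ^ r)) //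
      Q.map π = Q₀.1 ∧ Qᵀ * γ.map (Int.cast : ℤ → ZMod (p ^ r)) * Q = T}) =
        Nat.card 𝒬 * p ^ ((r - 1) * ((k + 2) * (k + 3) / 2)) := by
      have : Fintype 𝒬 := Fintype.ofFinite _
      rw [Nat.card_sigma, Nat.card_eq_fintype_card (α := 𝒬), ← smul_eq_mul, ← Finset.card_univ,
        ← Finset.sum_const]
      refine Finset.sum_congr rfl fun Q₀ _ => ?_
      obtain ⟨R₀, hR₀⟩ := Q₀.2.1
      exact natCard_gram_lifts_zmod hγ hp hpδ hr hR₀ hT (by rw [hTπ, Q₀.2.2])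
    rw [← e]
    refine Nat.card_le_card_of_injective (fun x => ⟨x.2.1, ?_, x.2.2.2⟩) ?_
    · obtain ⟨⟨Q₀, ⟨R₀, hR₀⟩, -⟩, Q, hQ, -⟩ := x
      obtain ⟨R', hR'⟩ : ∃ R' : Matrix (Fin (k + 2)) (Fin (k + 3)) (ZMod (p ^ r)),
          R'.map π = R₀ := by
        obtain ⟨s, hs⟩ := (ZMod.castHom_surjective (dvd_pow_self p hr)).hasRightInverse
        exact ⟨R₀.map s, by ext i j; simp [π, hs (R₀ i j)]⟩
      have h1 : ∀ i j, (p : ZMod (p ^ r)) ∣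
          (R' * Q - 1 : Matrix (Fin (k + 2)) (Fin (k + 2)) (ZMod (p ^ r))) i j := by
        intro i j
        rw [← zmod_castHom_eq_zero_iff hr]
        have : (R' * Q - 1).map π = 0 := by
          rw [Matrix.map_sub _ (fun a b => map_sub π a b), Matrix.map_mul, hR', hQ,
            Matrix.map_one _ (map_zero π) (map_one π), hR₀, sub_self]
        exact congrFun₂ this i j
      choose X hX using h1
      refine exists_leftInverse_of_sub_smul (isNilpotent_zmod_prime_pow p r) (R := R')
        (X := Matrix.of X) ?_
      ext i j
      have := hX i j
      rw [Matrix.sub_apply, sub_eq_iff_eq_add] at this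
      simp [this, add_comm]
    · rintro ⟨Q₀, Q, hQ, hQT⟩ ⟨Q₀', Q', hQ', hQT'⟩ hxy
      obtain rfl : Q = Q' := Subtype.mk.inj hxy
      obtain rfl : Q₀ = Q₀' := Subtype.ext (hQ.symm.trans hQ')
      rfl
  calc _ = (if (p : ℤ) ∣ (Pᵀ * γ * P).det then 2 else 1 : ℝ) *
        ((p : ℝ) ^ ((k + 2) * (k + 3) / 2) * (1 - ((p : ℝ) ^ 2)⁻¹) ^ (k + 1)) *
        (p : ℝ) ^ ((r - 1) * ((k + 2) * (k + 3) / 2)) := by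
        obtain ⟨r, rfl⟩ := Nat.exists_eq_succ_of_ne_zero hr
        rw [Nat.succ_sub_one, Nat.succ_mul, pow_add]; ring
    _ ≤ _ := mul_le_mul_of_nonneg_right h (by positivity)
    _ ≤ _ := by exact_mod_cast hcount

theorem natCard_gram_zmod_le (hγ : γ.IsSymm) {p : ℕ} (hp : p.Prime)
    (hpδ : ¬ (p : ℤ) ∣ 2 * γ.det) {r : ℕ} (hr : r ≠ 0)
    {Λ : Matrix (Fin (k + 2)) (Fin (k + 2)) ℤ} (hΛ : Λ.IsSymm) (hpΛ : ¬ (p : ℤ) ∣ Λ.det) :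
    (Nat.card {Q : Matrix (Fin (k + 3)) (Fin (k + 2)) (ZMod (p ^ r)) //
      Qᵀ * γ.map (Int.cast : ℤ → ZMod (p ^ r)) * Q = Λ.map Int.cast} : ℝ) ≤
      (1 + ((p : ℝ) ^ 2)⁻¹) ^ (k + 1) * (p : ℝ) ^ (r * ((k + 2) * (k + 3) / 2)) := by
  have : Fact p.Prime := ⟨hp⟩
  have : NeZero (p ^ r) := ⟨(pow_pos hp.pos r).ne'⟩
  set π := ZMod.castHom (dvd_pow_self p hr) (ZMod p)
  have hp2 : ringChar (ZMod p) ≠ 2 := by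
    rw [ZMod.ringChar_zmod_n]
    rintro rfl
    exact hpδ (dvd_mul_right _ _)
  have hdet : (γ.map (Int.cast : ℤ → ZMod p)).det ≠ 0 := by
    rw [det_map_intCast, Ne, ZMod.intCast_zmod_eq_zero_iff_dvd]
    exact fun h => hpδ (h.mul_left _)
  have hdetΛ : (Λ.map (Int.cast : ℤ → ZMod p)).det ≠ 0 := by
    rwa [det_map_intCast, Ne, ZMod.intCast_zmod_eq_zero_iff_dvd]
  have h := natCard_gram_le hp2 (γ := γ.map (Int.cast : ℤ → ZMod p))
    (by rw [IsSymm, ← transpose_map, hγ.eq]) hdet hdetΛ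
  rw [ZMod.card] at h
  set 𝒬 := {Q : Matrix (Fin (k + 3)) (Fin (k + 2)) (ZMod p) //
      Qᵀ * γ.map (Int.cast : ℤ → ZMod p) * Q = Λ.map (Int.cast : ℤ → ZMod p)}
  have hcount : Nat.card {Q : Matrix (Fin (k + 3)) (Fin (k + 2)) (ZMod (p ^ r)) //
      Qᵀ * γ.map (Int.cast : ℤ → ZMod (p ^ r)) * Q = Λ.map Int.cast} ≤
      Nat.card 𝒬 * p ^ ((r - 1) * ((k + 2) * (k + 3) / 2)) := by
    have e : Nat.card ((Q₀ : 𝒬) × {Q : Matrix (Fin (k + 3)) (Fin (k + 2)) (ZMod (p ^ r)) //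
      Q.map π = Q₀.1 ∧ Qᵀ * γ.map (Int.cast : ℤ → ZMod (p ^ r)) * Q = Λ.map Int.cast}) =
        Nat.card 𝒬 * p ^ ((r - 1) * ((k + 2) * (k + 3) / 2)) := by
      have : Fintype 𝒬 := Fintype.ofFinite _
      rw [Nat.card_sigma, Nat.card_eq_fintype_card (α := 𝒬), ← smul_eq_mul, ← Finset.card_univ,
        ← Finset.sum_const]
      refine Finset.sum_congr rfl fun Q₀ _ => ?_
      have hR₀ : ((Λ.map (Int.cast : ℤ → ZMod p))⁻¹ * Q₀.1ᵀ * γ.map (Int.cast : ℤ → ZMod p)) * Q₀.1 = 1 := by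
        rw [Matrix.mul_assoc, Matrix.mul_assoc, ← Matrix.mul_assoc Q₀.1ᵀ, Q₀.2,
          Matrix.nonsing_inv_mul _ (isUnit_iff_ne_zero.mpr hdetΛ)]
      exact natCard_gram_lifts_zmod hγ hp hpδ hr hR₀ (by rw [IsSymm, ← transpose_map, hΛ.eq])
        (by rw [map_castHom_intCast hr, Q₀.2])
    rw [← e]
    refine Nat.card_le_card_of_injective (fun Q => ⟨⟨Q.1.map π, ?_⟩, ⟨Q.1, rfl, Q.2⟩⟩) ?_
    · obtain ⟨Q, hQ⟩ := Q
      have := congrArg (fun X : Matrix (Fin (k + 2)) (Fin (k + 2)) (ZMod (p ^ r)) => X.map π) hQ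
      simp only [Matrix.map_mul, transpose_map] at this
      rwa [map_castHom_intCast hr, map_castHom_intCast hr] at this
    · intro x y hxy
      exact Subtype.ext (congrArg (fun z : (Q₀ : 𝒬) ×
        {Q : Matrix (Fin (k + 3)) (Fin (k + 2)) (ZMod (p ^ r)) //
          Q.map π = Q₀.1 ∧ Qᵀ * γ.map (Int.cast : ℤ → ZMod (p ^ r)) * Q = Λ.map Int.cast} => z.2.1)
          hxy)
  calc _ ≤ (Nat.card 𝒬 : ℝ) * (p : ℝ) ^ ((r - 1) * ((k + 2) * (k + 3) / 2)) := by
        exact_mod_cast hcount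
    _ ≤ _ := mul_le_mul_of_nonneg_right h (by positivity)
    _ = _ := by
      obtain ⟨r, rfl⟩ := Nat.exists_eq_succ_of_ne_zero hr
      rw [Nat.succ_sub_one, Nat.succ_mul r, pow_add]; ring

theorem le_primCount (hγ : γ.IsSymm) (hδ : γ.det ≠ 0) {p : ℕ} (hp : p.Prime) {r : ℕ}
    {P : Matrix (Fin (k + 3)) (Fin (k + 2)) ℤ} {R : Matrix (Fin (k + 2)) (Fin (k + 3)) ℤ}
    (hRP : R * P = 1) {T : Matrix (Fin (k + 2)) (Fin (k + 2)) (ZMod (p ^ r))} (hT : T.IsSymm)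
    (hTP : ∀ i j, ((4 * γ.det ^ 2 * p : ℤ) : ZMod (p ^ r)) ∣
      (T - (Pᵀ * γ * P).map (Int.cast : ℤ → ZMod (p ^ r)) :
      Matrix (Fin (k + 2)) (Fin (k + 2)) (ZMod (p ^ r))) i j) :
    (p : ℝ) ^ (r * ((k + 2) * (k + 3) / 2)) ≤
      primCount γ (p ^ r) T * (4 * γ.det ^ 2 * p : ℝ) ^ ((k + 3) * (k + 2)) := by
  have : NeZero (p ^ r) := ⟨(pow_pos hp.pos r).ne'⟩
  set s := (k + 2) * (k + 3) / 2 with hs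
  have hgram : (P.map (Int.cast : ℤ → ZMod (p ^ r)))ᵀ * γ.map (Int.cast : ℤ → ZMod (p ^ r)) * P.map (Int.cast : ℤ → ZMod (p ^ r)) =
      (Pᵀ * γ * P).map (Int.cast : ℤ → ZMod (p ^ r)) := by
    rw [map_cast_mul, map_cast_mul, transpose_map]
  have hγs : (γ.map (Int.cast : ℤ → ZMod (p ^ r))).IsSymm := by
    rw [IsSymm, ← transpose_map, hγ.eq]
  have hP1 : R.map (Int.cast : ℤ → ZMod (p ^ r)) * P.map (Int.cast : ℤ → ZMod (p ^ r)) = 1 := by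
    rw [← map_cast_mul, hRP, map_cast_one]
  obtain ⟨E, hE, hTE⟩ := exists_symm_smul_eq (c := ((4 * γ.det ^ 2 * p : ℤ) : ZMod (p ^ r)))
    (M := T - (Pᵀ * γ * P).map (Int.cast : ℤ → ZMod (p ^ r)))
    (by rw [IsSymm, transpose_sub, hT.eq, ← transpose_map]
        congr 2
        rw [transpose_mul, transpose_mul, transpose_transpose, hγ.eq, Matrix.mul_assoc]) hTP
  have key := natCard_range_smul_le (isNilpotent_zmod_prime_pow p r) hγs rfl hP1 hE
  rw [det_map_intCast, hgram] at key
  set d : ℕ := 4 * γ.det.natAbs ^ 2 * p with hd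
  have hdZ : (d : ℤ) = 4 * γ.det ^ 2 * p := by simp [hd]
  have hd0 : 0 < d := by
    have := Int.natAbs_pos.mpr hδ
    have := hp.pos
    positivity
  have hdR : (4 * γ.det ^ 2 * p : ℝ) = d := by exact_mod_cast hdZ.symm
  have hdA : (4 * (γ.det : ZMod (p ^ r)) ^ 2 * p) = (d : ZMod (p ^ r)) := by
    have := congrArg (Int.cast : ℤ → ZMod (p ^ r)) hdZ
    simp only [Int.cast_mul, Int.cast_pow, Int.cast_ofNat, Int.cast_natCast] at this
    exact this.symm
  rw [hdA] at key
  have e1 : Nat.card (Set.range fun K : Matrix (Fin (k + 3)) (Fin (k + 2)) (ZMod (p ^ r)) =>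
      (d : ZMod (p ^ r)) • K) = (p ^ r / (p ^ r).gcd d) ^ ((k + 3) * (k + 2)) := by
    have h := natCard_matrix_mem (m := Fin (k + 3)) (n := Fin (k + 2))
      (fun x : ZMod (p ^ r) => (d : ZMod (p ^ r)) ∣ x)
    rw [Fintype.card_fin, Fintype.card_fin, natCard_zmod_dvd] at h
    refine Eq.trans (Nat.card_congr (Equiv.setCongr ?_)) h
    ext M
    simp only [Set.mem_range]
    constructor
    · rintro ⟨K, rfl⟩ i j
      exact ⟨K i j, by simp⟩
    · intro h
      choose K hK using h
      exact ⟨Matrix.of K, by ext i j; simp [hK i j]⟩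
  have e2 : Nat.card (Set.range fun Y : {Y : Matrix (Fin (k + 2)) (Fin (k + 2)) (ZMod (p ^ r)) //
      Y.IsSymm} => (2 * (γ.det : ZMod (p ^ r)) * p) • Y.1) ≤ p ^ (r * s) := by
    have h := natCard_symm_mem (n := k + 2) (fun _ _ (x : ZMod (p ^ r)) => True) (fun _ _ => rfl)
    rw [Finset.prod_const, Finset.card_univ, card_upperIndex] at h
    have h3 : Nat.card {x : ZMod (p ^ r) // True} = p ^ r := by
      rw [Nat.card_congr (Equiv.subtypeUnivEquiv fun _ => trivial), Nat.card_zmod]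
    rw [h3, ← pow_mul] at h
    rw [hs, ← h]
    refine (Nat.card_le_card_of_surjective _ Set.rangeFactorization_surjective).trans
      (Nat.card_le_card_of_injective (fun x => ⟨x.1, x.2, fun _ _ => trivial⟩) ?_)
    intro x y hxy
    exact Subtype.ext (Subtype.mk.inj hxy)
  have e3 : Nat.card {Q : Matrix (Fin (k + 3)) (Fin (k + 2)) (ZMod (p ^ r)) //
      (∃ X, Q = P.map (Int.cast : ℤ → ZMod (p ^ r)) + (2 * (γ.det : ZMod (p ^ r)) * p) • X) ∧
        Qᵀ * γ.map (Int.cast : ℤ → ZMod (p ^ r)) * Q = (Pᵀ * γ * P).map (Int.cast : ℤ → ZMod (p ^ r)) + (d : ZMod (p ^ r)) • E} ≤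
      primCount γ (p ^ r) T := by
    refine Nat.card_le_card_of_injective (fun x => ⟨x.1, ?_, ?_⟩) ?_
    · obtain ⟨_, ⟨X, rfl⟩, -⟩ := x
      refine exists_leftInverse_of_sub_smul (isNilpotent_zmod_prime_pow p r)
        (R := R.map (Int.cast : ℤ → ZMod (p ^ r)))
        (X := R.map (Int.cast : ℤ → ZMod (p ^ r)) * ((2 * (γ.det : ZMod (p ^ r))) • X)) ?_
      dsimp only
      rw [Matrix.mul_add, hP1, Matrix.mul_smul, Matrix.mul_smul, smul_smul, mul_comm (p : ZMod (p ^ r))]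
    · rw [x.2.2, ← hdA]
      simp only [Int.cast_mul, Int.cast_pow, Int.cast_ofNat, Int.cast_natCast] at hTE
      rw [← hTE]; abel
    · intro x y hxy
      exact Subtype.ext (Subtype.mk.inj hxy)
  rw [e1] at key
  have key' : (p ^ r / (p ^ r).gcd d) ^ ((k + 3) * (k + 2)) ≤ primCount γ (p ^ r) T * p ^ (r * s) :=
    key.trans (Nat.mul_le_mul e3 e2)
  have h4 : p ^ r ≤ (p ^ r / (p ^ r).gcd d) * d := by
    calc p ^ r = (p ^ r / (p ^ r).gcd d) * (p ^ r).gcd d :=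
          (Nat.div_mul_cancel (Nat.gcd_dvd_left _ _)).symm
      _ ≤ _ := Nat.mul_le_mul_left _ (Nat.gcd_le_right _ hd0)
  have h5 : p ^ (r * s) * p ^ (r * s) ≤
      (primCount γ (p ^ r) T * d ^ ((k + 3) * (k + 2))) * p ^ (r * s) := by
    calc p ^ (r * s) * p ^ (r * s) = (p ^ r) ^ ((k + 3) * (k + 2)) := by
          rw [mul_div_two_eq k, ← hs, ← pow_mul, ← pow_add]; congr 1; ring
      _ ≤ ((p ^ r / (p ^ r).gcd d) * d) ^ ((k + 3) * (k + 2)) := Nat.pow_le_pow_left h4 _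
      _ ≤ _ := by
        rw [mul_pow]
        calc _ ≤ (primCount γ (p ^ r) T * p ^ (r * s)) * d ^ ((k + 3) * (k + 2)) :=
              Nat.mul_le_mul_right _ key'
          _ = _ := by ring
  have h6 := Nat.le_of_mul_le_mul_right h5 (pow_pos hp.pos _)
  rw [hdR]
  exact_mod_cast h6

/-- The constant in the lower bound for local densities. -/
noncomputable def localConst (k : ℕ) (δ : ℤ) (p : ℕ) : ℝ :=
  if (p : ℤ) ∣ 2 * δ then ((4 * δ ^ 2 * p : ℝ) ^ ((k + 3) * (k + 2)) * 2)⁻¹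
  else (1 - ((p : ℝ) ^ 2)⁻¹) ^ (k + 1)

theorem localConst_pos (k : ℕ) {δ : ℤ} (hδ : δ ≠ 0) {p : ℕ} (hp : p.Prime) :
    0 < localConst k δ p := by
  have hp1 : (1 : ℝ) < p := by exact_mod_cast hp.one_lt
  have hδ' : (δ : ℝ) ≠ 0 := by exact_mod_cast hδ
  rw [localConst]
  split_ifs
  · have : (0 : ℝ) < p := by linarith
    positivity
  · have : ((p : ℝ) ^ 2)⁻¹ < 1 := inv_lt_one_of_one_lt₀ (by nlinarith)
    exact pow_pos (by linarith) _

theorem localConst_mul_le_primCount (hγ : γ.IsSymm) (hδ : γ.det ≠ 0) {p : ℕ} (hp : p.Prime) {r : ℕ}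
    (hr : r ≠ 0)
    {P : Matrix (Fin (k + 3)) (Fin (k + 2)) ℤ} {R : Matrix (Fin (k + 2)) (Fin (k + 3)) ℤ}
    (hRP : R * P = 1) {T : Matrix (Fin (k + 2)) (Fin (k + 2)) (ZMod (p ^ r))} (hT : T.IsSymm)
    (hTP : ∀ i j, ((4 * γ.det ^ 2 * p : ℤ) : ZMod (p ^ r)) ∣
      (T - (Pᵀ * γ * P).map (Int.cast : ℤ → ZMod (p ^ r)) :
      Matrix (Fin (k + 2)) (Fin (k + 2)) (ZMod (p ^ r))) i j) :
    (if (p : ℤ) ∣ (Pᵀ * γ * P).det then 2 else 1 : ℝ) * localConst k γ.det p *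
      (p : ℝ) ^ (r * ((k + 2) * (k + 3) / 2)) ≤ primCount γ (p ^ r) T := by
  rw [localConst]
  split_ifs with h1 h2 h2
  · have h := le_primCount hγ hδ hp hRP hT hTP
    have hδ' : (γ.det : ℝ) ≠ 0 := by exact_mod_cast hδ
    have hp0 : (0 : ℝ) < p := by exact_mod_cast hp.pos
    have hX : (0 : ℝ) < (4 * γ.det ^ 2 * p : ℝ) ^ ((k + 3) * (k + 2)) := by positivity
    rw [_root_.mul_inv_rev, ← mul_assoc, mul_inv_cancel₀ two_ne_zero, one_mul, inv_mul_le_iff₀ hX,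
      mul_comm _ (primCount _ _ _ : ℝ)]
    exact h
  · have := le_primCount_of_not_dvd hγ hp h2 hr hRP hT (fun i j => by
      refine dvd_trans ?_ (hTP i j)
      push_cast; exact dvd_mul_left _ _)
    simpa [h1] using this
  · have h := le_primCount hγ hδ hp hRP hT hTP
    have hδ' : (γ.det : ℝ) ≠ 0 := by exact_mod_cast hδ
    have hp0 : (0 : ℝ) < p := by exact_mod_cast hp.pos
    have hX : (0 : ℝ) < (4 * γ.det ^ 2 * p : ℝ) ^ ((k + 3) * (k + 2)) := by positivity
    rw [one_mul, inv_mul_le_iff₀ (by positivity)]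
    have : (0 : ℝ) ≤ primCount γ (p ^ r) T := by positivity
    nlinarith
  · have := le_primCount_of_not_dvd hγ hp h2 hr hRP hT (fun i j => by
      refine dvd_trans ?_ (hTP i j)
      push_cast; exact dvd_mul_left _ _)
    simpa [h1] using this

end ZModCounts

section LocalClasses

open Matrix

/-- Two matrices are row equivalent when each is a left multiple of the other. -/
def RowEquiv {m n A : Type*} [Fintype m] [Semiring A] (L L' : Matrix m n A) : Prop :=
  (∃ X : Matrix m m A, L = X * L') ∧ ∃ Y : Matrix m m A, L' = Y * L

theorem RowEquiv.symm {m n A : Type*} [Fintype m] [Semiring A] {L L' : Matrix m n A}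
    (h : RowEquiv L L') : RowEquiv L' L := And.symm h

theorem RowEquiv.trans {m n A : Type*} [Fintype m] [Semiring A] {L L' L'' : Matrix m n A}
    (h : RowEquiv L L') (h' : RowEquiv L' L'') : RowEquiv L L'' := by
  obtain ⟨⟨X, hX⟩, Y, hY⟩ := h
  obtain ⟨⟨X', hX'⟩, Y', hY'⟩ := h'
  exact ⟨⟨X * X', by rw [Matrix.mul_assoc, ← hX', ← hX]⟩, ⟨Y' * Y, by
    rw [Matrix.mul_assoc, ← hY, ← hY']⟩⟩

theorem natCard_le_mul_of_sub_mem {α β : Type*} [Finite β] [AddGroup α] {s : α → Prop}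
    {κ : α → Prop} [Finite {x // κ x}] (f : {x // s x} → β)
    (hf : ∀ x y, f x = f y → κ (x.1 - y.1)) :
    Nat.card {x // s x} ≤ Nat.card β * Nat.card {x // κ x} := by
  classical
  rw [← Nat.card_prod]
  rcases isEmpty_or_nonempty {x // s x} with h | h
  · simp
  have hinv : ∀ x, f (Function.invFun f (f x)) = f x := fun x =>
    Function.invFun_eq ⟨x, rfl⟩
  refine Nat.card_le_card_of_injective
    (fun x => (f x, ⟨x.1 - (Function.invFun f (f x)).1, hf _ _ (hinv x).symm⟩)) ?_
  intro x y hxy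
  have h1 : f x = f y := congrArg Prod.fst hxy
  have h2 := congrArg Subtype.val (congrArg Prod.snd hxy)
  dsimp only at h2
  rw [h1] at h2
  exact Subtype.ext (sub_left_injective h2)

theorem exists_eq_prime_pow_mul {p : ℕ} (hp : p.Prime) {d : ℤ} (hd : d ≠ 0) :
    ∃ (v : ℕ) (d' : ℤ), d = p ^ v * d' ∧ ¬ (p : ℤ) ∣ d' := by
  have h : FiniteMultiplicity (p : ℤ) d := by
    rw [Int.finiteMultiplicity_iff]
    exact ⟨by simpa using hp.ne_one, hd⟩
  obtain ⟨c, hc, hc'⟩ := h.exists_eq_pow_mul_and_not_dvd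
  exact ⟨_, c, hc, hc'⟩

theorem prime_pow_gcd_natAbs {p : ℕ} (hp : p.Prime) {r v : ℕ} (hv : v ≤ r) {d' : ℤ}
    (hd' : ¬ (p : ℤ) ∣ d') : (p ^ r).gcd (p ^ v * d' : ℤ).natAbs = p ^ v := by
  have h : (p ^ r).Coprime d'.natAbs := by
    refine Nat.Coprime.pow_left r ((Nat.Prime.coprime_iff_not_dvd hp).mpr ?_)
    rwa [← Int.natCast_dvd]
  rw [Int.natAbs_mul, Int.natAbs_pow, Int.natAbs_natCast, Nat.Coprime.gcd_mul_right_cancel_right _ h.symm,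
    Nat.gcd_eq_right (pow_dvd_pow p hv)]

theorem natCard_zmod_intCast_mul_eq_zero {p : ℕ} (hp : p.Prime) {r v : ℕ} (hv : v ≤ r) {d' : ℤ}
    (hd' : ¬ (p : ℤ) ∣ d') :
    Nat.card {e : ZMod (p ^ r) // ((p ^ v * d' : ℤ) : ZMod (p ^ r)) * e = 0} = p ^ v := by
  have : NeZero (p ^ r) := ⟨(pow_pos hp.pos r).ne'⟩
  rw [← prime_pow_gcd_natAbs hp hv hd', ← natCard_zmod_mul_eq_zero]
  refine Nat.card_congr (Equiv.subtypeEquivRight fun x => ?_)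
  rcases Int.natAbs_eq (p ^ v * d' : ℤ) with h | h
  · conv_lhs => rw [h]
    rw [Int.cast_natCast]
  · conv_lhs => rw [h]
    rw [Int.cast_neg, Int.cast_natCast, neg_mul, neg_eq_zero]

theorem zmod_dvd_of_mul_eq_zero {p : ℕ} (hp : p.Prime) {r v w : ℕ} (hvw : w + v ≤ r) {c' d' : ℤ}
    (hd' : ¬ (p : ℤ) ∣ d') (hc' : ¬ (p : ℤ) ∣ c') {e : ZMod (p ^ r)}
    (he : ((p ^ v * d' : ℤ) : ZMod (p ^ r)) * e = 0) :
    ((p ^ w * c' : ℤ) : ZMod (p ^ r)) ∣ e := by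
  rw [Int.cast_mul, (isUnit_zmod_prime_pow hp r hc').mul_right_dvd]
  obtain ⟨x, rfl⟩ := ZMod.intCast_surjective e
  rw [← Int.cast_mul, ZMod.intCast_zmod_eq_zero_iff_dvd, mul_assoc] at he
  have h1 : (p : ℤ) ^ v * p ^ w ∣ p ^ v * (d' * x) := by
    rw [← pow_add]
    refine (pow_dvd_pow _ (by omega : v + w ≤ r)).trans ?_
    exact_mod_cast he
  have h2 := Int.dvd_of_mul_dvd_mul_left (pow_ne_zero v (by exact_mod_cast hp.ne_zero)) h1
  have hco : IsCoprime ((p : ℤ) ^ w) d' :=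
    ((Nat.prime_iff_prime_int.mp hp).coprime_iff_not_dvd.mpr hd').pow_left
  obtain ⟨y, hy⟩ := hco.dvd_of_dvd_mul_left h2
  exact ⟨y, by rw [hy, Int.cast_mul]⟩

variable {k : ℕ} {γ : Matrix (Fin (k + 3)) (Fin (k + 3)) ℤ}

theorem localConst_mul_le_rowClass (hγ : γ.IsSymm) (hδ : γ.det ≠ 0) {p : ℕ} (hp : p.Prime)
    {P : Matrix (Fin (k + 3)) (Fin (k + 2)) ℤ} {R : Matrix (Fin (k + 2)) (Fin (k + 3)) ℤ}
    (hRP : R * P = 1) {a : Fin (k + 2) → ℤ} (ha : ∀ i, a i ≠ 0)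
    {V V' : Matrix (Fin (k + 2)) (Fin (k + 2)) ℤ} (hV : V * V' = 1) :
    ∃ r₀, ∀ r ≥ r₀, (if (p : ℤ) ∣ (Pᵀ * γ * P).det then 2 else 1 : ℝ) * localConst k γ.det p *
      (p : ℝ) ^ (r * ((k + 2) * (k + 3) / 2)) ≤
      Nat.card {L : Matrix (Fin (k + 3)) (Fin (k + 2)) (ZMod (p ^ r)) //
        Lᵀ * γ.map (Int.cast : ℤ → ZMod (p ^ r)) * L =
          ((P * diagonal a * V)ᵀ * γ * (P * diagonal a * V)).map (Int.cast : ℤ → ZMod (p ^ r)) ∧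
        RowEquiv L ((P * diagonal a * V).map (Int.cast : ℤ → ZMod (p ^ r)))} := by
  choose v a' hva ha' using fun i => exists_eq_prime_pow_mul hp (ha i)
  obtain ⟨w, c', hc, hc'⟩ := exists_eq_prime_pow_mul hp (d := 4 * γ.det ^ 2 * p)
    (by have : (p : ℤ) ≠ 0 := by exact_mod_cast hp.ne_zero
        positivity)
  refine ⟨1 + w + 2 * ∑ i, v i, fun r hr => ?_⟩
  have hvle : ∀ i, v i ≤ ∑ i, v i := fun i =>
    Finset.single_le_sum (f := v) (fun _ _ => Nat.zero_le _) (Finset.mem_univ i)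
  have hr0 : r ≠ 0 := by omega
  have : NeZero (p ^ r) := ⟨(pow_pos hp.pos r).ne'⟩
  set s := (k + 2) * (k + 3) / 2
  set κ : ℝ := (if (p : ℤ) ∣ (Pᵀ * γ * P).det then 2 else 1 : ℝ) * localConst k γ.det p *
      (p : ℝ) ^ (r * s) with hκ
  set g : Matrix (Fin (k + 3)) (Fin (k + 3)) (ZMod (p ^ r)) :=
    γ.map (Int.cast : ℤ → ZMod (p ^ r)) with hg
  set T : Matrix (Fin (k + 2)) (Fin (k + 2)) (ZMod (p ^ r)) :=
    (Pᵀ * γ * P).map (Int.cast : ℤ → ZMod (p ^ r)) with hT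
  set D : Matrix (Fin (k + 2)) (Fin (k + 2)) (ZMod (p ^ r)) :=
    diagonal fun i => (a i : ZMod (p ^ r)) with hD
  set W : Matrix (Fin (k + 2)) (Fin (k + 2)) (ZMod (p ^ r)) :=
    V.map (Int.cast : ℤ → ZMod (p ^ r)) with hW
  set W' : Matrix (Fin (k + 2)) (Fin (k + 2)) (ZMod (p ^ r)) :=
    V'.map (Int.cast : ℤ → ZMod (p ^ r)) with hW'
  set P₀ : Matrix (Fin (k + 3)) (Fin (k + 2)) (ZMod (p ^ r)) :=
    P.map (Int.cast : ℤ → ZMod (p ^ r)) with hP₀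
  set R₀ : Matrix (Fin (k + 2)) (Fin (k + 3)) (ZMod (p ^ r)) :=
    R.map (Int.cast : ℤ → ZMod (p ^ r)) with hR₀
  have hWW' : W * W' = 1 := by rw [hW, hW', ← map_cast_mul, hV, map_cast_one]
  have hRP₀ : R₀ * P₀ = 1 := by rw [hR₀, hP₀, ← map_cast_mul, hRP, map_cast_one]
  have hTs : T.IsSymm := by
    rw [hT, IsSymm, ← transpose_map, transpose_mul, transpose_mul, transpose_transpose, hγ.eq,
      Matrix.mul_assoc]
  have hTP : T = P₀ᵀ * g * P₀ := by
    rw [hT, map_cast_mul, map_cast_mul, transpose_map]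
  have hDcast : (diagonal a).map (Int.cast : ℤ → ZMod (p ^ r)) = D := by
    rw [diagonal_map Int.cast_zero]
  have hL₀ : (P * diagonal a * V).map (Int.cast : ℤ → ZMod (p ^ r)) = P₀ * D * W := by
    rw [map_cast_mul, map_cast_mul, hDcast]
  have hΛ : ((P * diagonal a * V)ᵀ * γ * (P * diagonal a * V)).map
      (Int.cast : ℤ → ZMod (p ^ r)) = Wᵀ * (D * T * D) * W := by
    rw [map_cast_mul, map_cast_mul, transpose_map, hL₀, hTP]
    simp only [transpose_mul, hD, diagonal_transpose, Matrix.mul_assoc, ← hg]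
  rw [hΛ, hL₀]
  set 𝒳 : Matrix (Fin (k + 3)) (Fin (k + 2)) (ZMod (p ^ r)) → Prop := fun Q =>
    (∃ S : Matrix (Fin (k + 2)) (Fin (k + 3)) (ZMod (p ^ r)), S * Q = 1) ∧
      D * (Qᵀ * g * Q - T) * D = 0 with h𝒳
  set ℬ := {L : Matrix (Fin (k + 3)) (Fin (k + 2)) (ZMod (p ^ r)) //
    Lᵀ * g * L = Wᵀ * (D * T * D) * W ∧ RowEquiv L (P₀ * D * W)} with hℬ
  -- the map `Q ↦ Q D W`
  have hfib : Nat.card {Q // 𝒳 Q} ≤ Nat.card ℬ *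
      Nat.card {Z : Matrix (Fin (k + 3)) (Fin (k + 2)) (ZMod (p ^ r)) // Z * D = 0} := by
    refine natCard_le_mul_of_sub_mem (fun Q => (⟨Q.1 * D * W, ?_, ?_, ?_⟩ : ℬ)) ?_
    · have h := Q.2.2
      rw [Matrix.mul_sub, Matrix.sub_mul, sub_eq_zero] at h
      rw [← h]
      simp only [transpose_mul, hD, diagonal_transpose, Matrix.mul_assoc]
    · refine ⟨Q.1 * R₀, ?_⟩
      calc Q.1 * D * W = Q.1 * ((R₀ * P₀) * D * W) := by
            rw [hRP₀, Matrix.one_mul, Matrix.mul_assoc]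
        _ = _ := by simp only [Matrix.mul_assoc]
    · obtain ⟨Q, ⟨S, hS⟩, -⟩ := Q
      refine ⟨P₀ * S, ?_⟩
      calc P₀ * D * W = P₀ * ((S * Q) * D * W) := by
            rw [hS, Matrix.one_mul, Matrix.mul_assoc]
        _ = _ := by simp only [Matrix.mul_assoc]
    · intro x y hxy
      have h : x.1 * D * W = y.1 * D * W := Subtype.mk.inj hxy
      have h' := congrArg (· * W') h
      simp only [Matrix.mul_assoc, hWW', Matrix.mul_one] at h'
      rw [Matrix.sub_mul, h', sub_self]
  have hker : Nat.card {Z : Matrix (Fin (k + 3)) (Fin (k + 2)) (ZMod (p ^ r)) // Z * D = 0} =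
      ∏ i, (p ^ v i) ^ (k + 3) := by
    have e : Nat.card {Z : Matrix (Fin (k + 3)) (Fin (k + 2)) (ZMod (p ^ r)) // Z * D = 0} =
        Nat.card ((j : Fin (k + 2)) → Fin (k + 3) →
          {e : ZMod (p ^ r) // (a j : ZMod (p ^ r)) * e = 0}) := by
      refine Nat.card_congr
        { toFun := fun Z j i => ⟨Z.1 i j, ?_⟩
          invFun := fun f => ⟨Matrix.of fun i j => (f j i).1, ?_⟩
          left_inv := fun _ => rfl
          right_inv := fun _ => rfl }
      · obtain ⟨Z, hZ⟩ := Z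
        have := congrFun₂ hZ i j
        rw [hD, mul_diagonal, Matrix.zero_apply] at this
        rw [mul_comm]; exact this
      · ext i j
        rw [hD, mul_diagonal, Matrix.zero_apply, mul_comm]
        exact (f j i).2
    rw [e, Nat.card_pi]
    refine Finset.prod_congr rfl fun j _ => ?_
    rw [Nat.card_fun, Nat.card_eq_fintype_card (α := Fin (k + 3)), Fintype.card_fin, hva j,
      natCard_zmod_intCast_mul_eq_zero hp (by have := hvle j; omega) (ha' j)]
  -- decomposition over the error terms
  set ℰ := {E : Matrix (Fin (k + 2)) (Fin (k + 2)) (ZMod (p ^ r)) //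
    E.IsSymm ∧ ∀ i j, ((a i * a j : ℤ) : ZMod (p ^ r)) * E i j = 0} with hℰ
  have haa : ∀ i j, a i * a j = p ^ (v i + v j) * (a' i * a' j) := fun i j => by
    rw [hva i, hva j, pow_add]
    have h1 := hva i
    have h2 := hva j
    ring
  have haa' : ∀ i j, ¬ (p : ℤ) ∣ a' i * a' j := fun i j h =>
    ((Nat.prime_iff_prime_int.mp hp).dvd_or_dvd h).elim (ha' i) (ha' j)
  have hcardℰ : Nat.card ℰ = ∏ i, (p ^ v i) ^ (k + 3) := by
    rw [hℰ, natCard_symm_mem (fun i j (x : ZMod (p ^ r)) => ((a i * a j : ℤ) : ZMod (p ^ r)) * x = 0)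
      (fun i j => by rw [mul_comm (a i)]), ← prod_upperIndex]
    refine Finset.prod_congr rfl fun q _ => ?_
    rw [haa, natCard_zmod_intCast_mul_eq_zero hp _ (haa' _ _), pow_add]
    have h1 := hvle q.1.1
    have h2 := hvle q.1.2
    omega
  have hsum : (Nat.card ℰ : ℝ) * κ ≤ Nat.card {Q // 𝒳 Q} := by
    have : Fintype ℰ := Fintype.ofFinite _
    have e : Nat.card ((E : ℰ) × {Q : Matrix (Fin (k + 3)) (Fin (k + 2)) (ZMod (p ^ r)) //
      (∃ S : Matrix (Fin (k + 2)) (Fin (k + 3)) (ZMod (p ^ r)), S * Q = 1) ∧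
        Qᵀ * g * Q = T + E.1}) ≤ Nat.card {Q // 𝒳 Q} := by
      refine Nat.card_le_card_of_injective (fun x => ⟨x.2.1, x.2.2.1, ?_⟩) ?_
      · rw [x.2.2.2, add_sub_cancel_left]
        ext i j
        rw [hD, mul_diagonal, diagonal_mul, Matrix.zero_apply]
        have := x.1.2.2 i j
        push_cast at this
        rw [mul_right_comm]; exact this
      · rintro ⟨E, Q, hQ, hQT⟩ ⟨E', Q', hQ', hQT'⟩ hxy
        obtain rfl : Q = Q' := Subtype.mk.inj hxy
        obtain rfl : E = E' := Subtype.ext (add_left_cancel (hQT.symm.trans hQT'))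
        rfl
    rw [Nat.card_sigma] at e
    have h2 : (Nat.card ℰ : ℝ) * κ ≤ ∑ E : ℰ, (primCount γ (p ^ r) (T + E.1) : ℝ) := by
      rw [Nat.card_eq_fintype_card (α := ℰ), ← nsmul_eq_mul, ← Finset.card_univ, ← Finset.sum_const]
      refine Finset.sum_le_sum fun E _ => ?_
      refine localConst_mul_le_primCount hγ hδ hp hr0 hRP
        (by rw [IsSymm, transpose_add, hTs.eq, E.2.1.eq]) fun i j => ?_
      rw [← hT, add_sub_cancel_left, hc]
      refine zmod_dvd_of_mul_eq_zero hp (v := v i + v j) ?_ (haa' i j) hc' ?_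
      · have h1 := hvle i
        have h2 := hvle j
        omega
      · rw [← haa]; exact E.2.2 i j
    refine h2.trans ?_
    exact_mod_cast e
  have hprod : (0 : ℝ) < (∏ i, (p ^ v i) ^ (k + 3) : ℕ) := by
    have := hp.pos
    exact_mod_cast Finset.prod_pos fun i _ => by positivity
  rw [hker] at hfib
  rw [hcardℰ] at hsum
  have : (Nat.card {Q // 𝒳 Q} : ℝ) ≤ Nat.card ℬ * (∏ i, (p ^ v i) ^ (k + 3) : ℕ) := by
    exact_mod_cast hfib
  refine le_of_mul_le_mul_left ?_ hprod
  rw [mul_comm _ (Nat.card ℬ : ℝ)]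
  exact hsum.trans this

end LocalClasses

section IntegralFrames

open Matrix

variable {n : ℕ}

theorem exists_smith_factorization (L : Matrix (Fin (n + 1)) (Fin n) ℤ)
    {Z : Matrix (Fin n) (Fin (n + 1)) ℤ} {d : ℤ} (hd : d ≠ 0) (hZ : Z * L = d • 1) :
    ∃ (P : Matrix (Fin (n + 1)) (Fin n) ℤ) (R : Matrix (Fin n) (Fin (n + 1)) ℤ) (a : Fin n → ℤ)
      (V V' : Matrix (Fin n) (Fin n) ℤ), R * P = 1 ∧ (∀ i, a i ≠ 0) ∧ V * V' = 1 ∧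
        L = P * (diagonal a * V) := by
  set N : Submodule ℤ (Fin n → ℤ) := LinearMap.range L.vecMulLinear with hN
  have hmem : ∀ x, x ∈ N ↔ ∃ y, y ᵥ* L = x := fun x => by
    rw [hN, LinearMap.mem_range]; rfl
  have hrank : Module.finrank ℤ N = Module.finrank ℤ (Fin n → ℤ) := by
    refine le_antisymm (Submodule.finrank_le N) ?_
    refine LinearMap.finrank_le_finrank_of_injective
      (f := LinearMap.codRestrict N (d • LinearMap.id) fun x => ?_) ?_
    · rw [hmem]
      refine ⟨x ᵥ* Z, ?_⟩
      rw [vecMul_vecMul, hZ, vecMul_smul, vecMul_one]; rfl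
    · intro x y hxy
      have h : d • x = d • y := congrArg Subtype.val hxy
      exact smul_right_injective _ hd h
  obtain ⟨b', a, ab', hab⟩ := Submodule.exists_smith_normal_form_of_rank_eq
    (Pi.basisFun ℤ (Fin n)) hrank
  set V : Matrix (Fin n) (Fin n) ℤ := Matrix.of fun i j => b' i j with hV
  have hDV : ∀ i, (diagonal a * V) i = (ab' i : Fin n → ℤ) := fun i => by
    rw [hab]
    ext j
    rw [diagonal_mul]; rfl
  have hrow : ∀ i, L i ∈ N := fun i => (hmem _).mpr ⟨Pi.single i 1, single_one_vecMul i L⟩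
  choose y hy using fun i => (hmem _).mp (ab' i).2
  set P : Matrix (Fin (n + 1)) (Fin n) ℤ := Matrix.of fun i j => ab'.repr ⟨L i, hrow i⟩ j with hP
  have hL : L = P * (diagonal a * V) := by
    funext i
    have h := congrArg Subtype.val (ab'.sum_repr ⟨L i, hrow i⟩)
    rw [Submodule.coe_sum] at h
    refine h.symm.trans ?_
    ext j
    rw [Finset.sum_apply, Matrix.mul_apply]
    refine Finset.sum_congr rfl fun l _ => ?_
    rw [hDV l]; rfl
  set R : Matrix (Fin n) (Fin (n + 1)) ℤ := Matrix.of y with hR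
  have hRL : R * L = diagonal a * V := by
    funext i
    rw [hDV i, ← hy i]; rfl
  have hb := (Pi.basisFun ℤ (Fin n)).toMatrix_mul_toMatrix_flip b'
  have hVV : V * (b'.toMatrix (Pi.basisFun ℤ (Fin n)))ᵀ = 1 := by
    have h1 : Vᵀ = (Pi.basisFun ℤ (Fin n)).toMatrix b' := by
      ext i j; simp [hV, Module.Basis.toMatrix_apply]
    rw [← h1] at hb
    have h2 := mul_eq_one_comm.mp hb
    have := congrArg transpose h2
    rwa [transpose_mul, transpose_transpose, transpose_one] at this
  have ha : ∀ i, a i ≠ 0 := fun i hi => by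
    have := ab'.ne_zero i
    apply this
    apply Subtype.ext
    rw [hab, hi, zero_smul]; rfl
  refine ⟨P, R, a, V, _, ?_, ha, hVV, hL⟩
  set V' := (b'.toMatrix (Pi.basisFun ℤ (Fin n)))ᵀ
  have h1 : R * P * diagonal a = diagonal a := by
    have h2 : R * (P * (diagonal a * V)) * V' = diagonal a * V * V' := by rw [← hL, hRL]
    simpa only [Matrix.mul_assoc, hVV, Matrix.mul_one] using h2
  ext i j
  have := congrFun₂ h1 i j
  rw [mul_diagonal] at this
  refine mul_right_cancel₀ (ha j) ?_
  rw [this, ← Matrix.one_mul (diagonal a), mul_diagonal]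

theorem exists_unimodular_completion {P : Matrix (Fin (n + 1)) (Fin n) ℤ}
    {R : Matrix (Fin n) (Fin (n + 1)) ℤ} (hRP : R * P = 1) :
    ∃ (u : Matrix (Fin (n + 1)) Unit ℤ) (r : Matrix Unit (Fin (n + 1)) ℤ),
      P.fromCols u * R.fromRows r = 1 := by
  set K := LinearMap.ker R.mulVecLin with hK
  have hsurj : Function.Surjective R.mulVecLin := fun x =>
    ⟨P *ᵥ x, by simp [hRP]⟩
  have hK1 : Module.finrank ℤ K = 1 := by
    have h := Submodule.finrank_quotient_add_finrank K
    rw [(R.mulVecLin.quotKerEquivOfSurjective hsurj).finrank_eq, Module.finrank_fin_fun,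
      Module.finrank_fin_fun] at h
    omega
  let β := Module.basisUnique Unit hK1
  have hker : ∀ x, (1 - P * R) *ᵥ x ∈ K := fun x => by
    rw [hK, LinearMap.mem_ker, mulVecLin_apply, mulVec_mulVec, Matrix.mul_sub, ← Matrix.mul_assoc,
      hRP, Matrix.one_mul, Matrix.mul_one, sub_self, zero_mulVec]
  refine ⟨Matrix.of fun i j => (β j : Fin (n + 1) → ℤ) i,
    Matrix.of fun i j => β.repr ⟨(1 - P * R) *ᵥ Pi.single j 1, hker _⟩ i, ?_⟩
  rw [fromCols_mul_fromRows]
  ext i j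
  have h := congrArg Subtype.val (β.sum_repr ⟨(1 - P * R) *ᵥ Pi.single j 1, hker _⟩)
  rw [Submodule.coe_sum] at h
  have h2 := congrFun h i
  rw [Matrix.add_apply, Matrix.mul_apply (N := Matrix.of _)]
  have e : ((1 - P * R) *ᵥ Pi.single j 1) i =
      (1 : Matrix (Fin (n + 1)) (Fin (n + 1)) ℤ) i j - (P * R) i j := by
    rw [mulVec_single_one]; rfl
  replace h2 := h2.trans e
  simp only [Finset.univ_unique, Finset.sum_singleton, Submodule.coe_smul, Pi.smul_apply,
    smul_eq_mul] at h2
  simp only [Finset.univ_unique, Finset.sum_singleton, Matrix.of_apply]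
  linear_combination h2

theorem fromRows_mul_fromCols_eq_one {P : Matrix (Fin (n + 1)) (Fin n) ℤ}
    {R : Matrix (Fin n) (Fin (n + 1)) ℤ} {u : Matrix (Fin (n + 1)) Unit ℤ}
    {r : Matrix Unit (Fin (n + 1)) ℤ} (h : P.fromCols u * R.fromRows r = 1) :
    R.fromRows r * P.fromCols u = 1 :=
  (mul_eq_one_comm_of_card_eq _ _ _ (by simp)).mp h

theorem det_gram_of_mul_eq_one (γ : Matrix (Fin (n + 1)) (Fin (n + 1)) ℤ)
    {M : Matrix (Fin (n + 1)) (Fin n ⊕ Unit) ℤ} {N : Matrix (Fin n ⊕ Unit) (Fin (n + 1)) ℤ}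
    (h : M * N = 1) : (Mᵀ * γ * M).det = γ.det := by
  let e : Fin (n + 1) ≃ Fin n ⊕ Unit := Fintype.equivOfCardEq (by simp)
  have h1 : (Mᵀ * γ * M).submatrix e e = (M.submatrix id e)ᵀ * γ * M.submatrix id e := rfl
  have h2 : M.submatrix id e * N.submatrix e id = 1 := by
    rw [Matrix.submatrix_mul_equiv, h]; simp
  have h3 : (M.submatrix id e).det * (N.submatrix e id).det = 1 := by rw [← det_mul, h2, det_one]
  have h4 : (M.submatrix id e).det ^ 2 = 1 := Int.isUnit_sq (IsUnit.of_mul_eq_one _ h3)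
  rw [← det_submatrix_equiv_self e, h1, det_mul, det_mul, det_transpose]
  linear_combination γ.det * h4

theorem unit_matrix_eq (c : Matrix Unit Unit ℤ) : c = c () () • 1 := by
  ext i j; simp

theorem bordered_det {T : Matrix (Fin n) (Fin n) ℤ} (hT : T.IsSymm) (hT0 : T.det ≠ 0)
    (b : Matrix (Fin n) Unit ℤ) (c : Matrix Unit Unit ℤ) :
    T.det • c - bᵀ * T.adjugate * b = (fromBlocks T b bᵀ c).det • 1 ∧
      ∃ X, T.adjugate * b * bᵀ * T.adjugate + (fromBlocks T b bᵀ c).det • T.adjugate =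
        T.det • X := by
  set A := T.adjugate with hA
  set G := fromBlocks T b bᵀ c with hG
  have hGs : G.IsSymm := by
    rw [IsSymm, hG, fromBlocks_transpose, hT.eq, transpose_transpose]
    congr 1
  have hAs : G.adjugate.IsSymm := by rw [IsSymm, adjugate_transpose, hGs.eq]
  have hmul := mul_adjugate G
  set B₁₁ := G.adjugate.toBlocks₁₁ with hB₁₁
  set B₁₂ := G.adjugate.toBlocks₁₂ with hB₁₂
  set B₂₁ := G.adjugate.toBlocks₂₁ with hB₂₁
  set B₂₂ := G.adjugate.toBlocks₂₂ with hB₂₂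
  have h21 : B₂₁ = B₁₂ᵀ := by
    ext i j
    exact (hAs.apply _ _).symm
  have h22 : B₂₂ = T.det • 1 := by
    rw [unit_matrix_eq B₂₂]
    congr 1
    change G.adjugate (Sum.inr ()) (Sum.inr ()) = _
    rw [adjugate_apply]
    have : G.updateRow (Sum.inr ()) (Pi.single (Sum.inr ()) 1) =
        fromBlocks T b 0 (1 : Matrix Unit Unit ℤ) := by
      ext i j
      rcases i with i | i <;> rcases j with j | j <;> simp [hG, updateRow_apply]
    rw [this, det_fromBlocks_zero₂₁, det_one, mul_one]
  have hblocks : fromBlocks (T * B₁₁ + b * B₂₁) (T * B₁₂ + b * B₂₂)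
      (bᵀ * B₁₁ + c * B₂₁) (bᵀ * B₁₂ + c * B₂₂) =
      fromBlocks (G.det • 1) 0 0 (G.det • 1) := by
    rw [← fromBlocks_multiply, hB₁₁, hB₁₂, hB₂₁, hB₂₂, fromBlocks_toBlocks, ← hG, hmul,
      ← fromBlocks_one, fromBlocks_smul, smul_zero, smul_zero]
  rw [fromBlocks_inj] at hblocks
  obtain ⟨e11, e12, -, e22⟩ := hblocks
  have hAT : A * T = T.det • 1 := adjugate_mul T
  have hAsymm : Aᵀ = A := by rw [hA, adjugate_transpose, hT.eq]
  have hb12 : B₁₂ = -(A * b) := by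
    have h := congrArg (A * ·) e12
    simp only [Matrix.mul_add, ← Matrix.mul_assoc, hAT, Matrix.mul_zero, h22, Matrix.smul_mul,
      Matrix.one_mul, Matrix.mul_smul, Matrix.mul_one, ← smul_add] at h
    exact eq_neg_of_add_eq_zero_left ((smul_eq_zero.mp h).resolve_left hT0)
  have hb21 : B₂₁ = -(bᵀ * A) := by
    rw [h21, hb12, transpose_neg, transpose_mul, hAsymm]
  constructor
  · rw [← e22, hb12, h22, Matrix.mul_smul, Matrix.mul_one, Matrix.mul_neg, ← Matrix.mul_assoc]
    abel
  · refine ⟨B₁₁, ?_⟩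
    have h := congrArg (A * ·) e11
    simp only [Matrix.mul_add, ← Matrix.mul_assoc, hAT, hb21, Matrix.smul_mul, Matrix.one_mul,
      Matrix.mul_smul, Matrix.mul_one, Matrix.mul_neg] at h
    rw [← h]; abel

theorem exists_dvd_sub_mul {p : ℕ} (hp : p.Prime) {v : ℕ} {x y : ℤ}
    (h : (p : ℤ) ^ v ∣ x * y) : (p : ℤ) ^ v ∣ (x - y) * x ∨ (p : ℤ) ^ v ∣ (x - y) * y := by
  have hp' := Nat.prime_iff_prime_int.mp hp
  obtain ⟨i, j, hij, hi, hj⟩ : ∃ i j, v = i + j ∧ (p : ℤ) ^ i ∣ x ∧ (p : ℤ) ^ j ∣ y := by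
    induction v generalizing x y with
    | zero => exact ⟨0, 0, rfl, by simp, by simp⟩
    | succ v ih =>
      rcases hp'.dvd_or_dvd ((dvd_pow_self _ v.succ_ne_zero).trans h) with ⟨z, rfl⟩ | ⟨z, rfl⟩
      · rw [pow_succ', mul_assoc] at h
        obtain ⟨i, j, h1, h2, h3⟩ := ih (Int.dvd_of_mul_dvd_mul_left hp'.ne_zero h)
        exact ⟨i + 1, j, by omega, by rw [pow_succ']; exact mul_dvd_mul_left _ h2, h3⟩
      · rw [pow_succ', mul_left_comm] at h
        obtain ⟨i, j, h1, h2, h3⟩ := ih (Int.dvd_of_mul_dvd_mul_left hp'.ne_zero h)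
        exact ⟨i, j + 1, by omega, h2, by rw [pow_succ']; exact mul_dvd_mul_left _ h3⟩
  subst hij
  rcases le_total i j with hle | hle
  · right
    rw [pow_add]
    exact mul_dvd_mul (dvd_sub hi ((pow_dvd_pow _ hle).trans hj)) hj
  · left
    rw [pow_add, mul_comm]
    exact mul_dvd_mul (dvd_sub ((pow_dvd_pow _ hle).trans hi) hj) hi

end IntegralFrames

section Isometries

open Matrix

variable {n : ℕ}

theorem gram_fromCols {γ : Matrix (Fin (n + 1)) (Fin (n + 1)) ℤ} (hγ : γ.IsSymm)
    (P : Matrix (Fin (n + 1)) (Fin n) ℤ) (u : Matrix (Fin (n + 1)) Unit ℤ) :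
    (P.fromCols u)ᵀ * γ * P.fromCols u =
      fromBlocks (Pᵀ * γ * P) (Pᵀ * γ * u) (Pᵀ * γ * u)ᵀ (uᵀ * γ * u) := by
  rw [transpose_fromCols, fromRows_mul, fromRows_mul_fromCols, transpose_mul, transpose_mul,
    transpose_transpose, hγ.eq, Matrix.mul_assoc uᵀ γ P]

theorem gram_isSymm {m ι : Type*} [Fintype m] [Fintype ι] {γ : Matrix m m ℤ} (hγ : γ.IsSymm)
    (P : Matrix m ι ℤ) : (Pᵀ * γ * P).IsSymm := by
  rw [IsSymm, transpose_mul, transpose_mul, transpose_transpose, hγ.eq, Matrix.mul_assoc]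

theorem bordered_dichotomy {T : Matrix (Fin n) (Fin n) ℤ} (hT : T.IsSymm) (hT0 : T.det ≠ 0)
    {b b' : Matrix (Fin n) Unit ℤ} {c c' : Matrix Unit Unit ℤ} {δ : ℤ}
    (hc : (fromBlocks T b bᵀ c).det = δ) (hc' : (fromBlocks T b' b'ᵀ c').det = δ)
    {p : ℕ} (hp : p.Prime) :
    (∀ k, (p : ℤ) ^ k ∣ T.det → ∀ i,
        (p : ℤ) ^ k ∣ ((2 * δ ^ 2) • (T.adjugate * (b' + b)) : Matrix (Fin n) Unit ℤ) i ()) ∨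
      ∀ k, (p : ℤ) ^ k ∣ T.det → ∀ i,
        (p : ℤ) ^ k ∣ ((2 * δ ^ 2) • (T.adjugate * (b' - b)) : Matrix (Fin n) Unit ℤ) i () := by
  obtain ⟨v, d', hv, hd'⟩ := exists_eq_prime_pow_mul hp hT0
  have hkv : ∀ k, (p : ℤ) ^ k ∣ T.det → (p : ℤ) ^ k ∣ (p : ℤ) ^ v := fun k hk => by
    apply pow_dvd_pow
    by_contra! hlt
    have h1 := (pow_dvd_pow (p : ℤ) hlt).trans hk
    rw [hv, pow_succ] at h1
    exact hd' (Int.dvd_of_mul_dvd_mul_left (pow_ne_zero _ (by exact_mod_cast hp.ne_zero)) h1)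
  suffices (∀ i, (p : ℤ) ^ v ∣ ((2 * δ ^ 2) • (T.adjugate * (b' + b)) : Matrix (Fin n) Unit ℤ) i ()) ∨
      ∀ i, (p : ℤ) ^ v ∣ ((2 * δ ^ 2) • (T.adjugate * (b' - b)) : Matrix (Fin n) Unit ℤ) i () from
    this.imp (fun h k hk i => (hkv k hk).trans (h i)) fun h k hk i => (hkv k hk).trans (h i)
  have hN : (p : ℤ) ^ v ∣ T.det := ⟨d', hv⟩
  obtain ⟨-, X, hX⟩ := bordered_det hT hT0 b c
  obtain ⟨h2, -⟩ := bordered_det hT hT0 b' c'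
  rw [hc] at hX
  rw [hc'] at h2
  set A := T.adjugate with hA
  have hAs : Aᵀ = A := by rw [hA, adjugate_transpose, hT.eq]
  set z := (bᵀ * A * b') () () with hz
  have hz1 : bᵀ * A * b' = z • 1 := unit_matrix_eq _
  have hz2 : b'ᵀ * A * b = z • 1 := by
    have e : b'ᵀ * A * b = (bᵀ * A * b')ᵀ := by
      rw [transpose_mul, transpose_mul, transpose_transpose, hAs, Matrix.mul_assoc]
    rw [e, hz1, transpose_smul, transpose_one]
  have h3 : z • (A * b) + δ • (A * b') = T.det • (X * b') := by
    have h := congrArg (· * b') hX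
    simp only [Matrix.add_mul, Matrix.smul_mul] at h
    rw [← h, Matrix.mul_assoc (A * b * bᵀ), Matrix.mul_assoc (A * b) bᵀ, ← Matrix.mul_assoc bᵀ,
      hz1, Matrix.mul_smul, Matrix.mul_one]
  have h4 : (p : ℤ) ^ v ∣ (z + δ) * (z - δ) := by
    have h0 : b'ᵀ * (z • (A * b) + δ • (A * b')) = b'ᵀ * (T.det • (X * b')) := by rw [h3]
    have h := congrFun₂ h0 () ()
    have h2' := congrFun₂ h2 () ()
    simp only [Matrix.mul_add, Matrix.mul_smul, ← Matrix.mul_assoc, hz2, Matrix.add_apply,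
      Matrix.sub_apply, Matrix.smul_apply, Matrix.one_apply_eq, smul_eq_mul] at h h2'
    refine hN.trans ⟨(b'ᵀ * X * b') () () - δ * c' () (), ?_⟩
    linear_combination h + δ * h2'
  have h5 : ∀ i, (p : ℤ) ^ v ∣ z * (A * b) i () + δ * (A * b') i () := fun i => by
    have h := congrFun₂ h3 i ()
    simp only [Matrix.add_apply, Matrix.smul_apply, smul_eq_mul] at h
    rw [h]; exact hN.mul_right _
  rcases exists_dvd_sub_mul hp h4 with h | h
  · right
    intro i
    rw [Matrix.mul_sub, Matrix.smul_apply, Matrix.sub_apply, smul_eq_mul]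
    have e : 2 * δ ^ 2 * ((A * b') i () - (A * b) i ()) =
      2 * δ * (z * (A * b) i () + δ * (A * b') i ()) -
        (z + δ - (z - δ)) * (z + δ) * (A * b) i () := by ring
    rw [e]
    exact dvd_sub ((h5 i).mul_left _) (h.mul_right _)
  · left
    intro i
    rw [Matrix.mul_add, Matrix.smul_apply, Matrix.add_apply, smul_eq_mul]
    have e : 2 * δ ^ 2 * ((A * b') i () + (A * b) i ()) =
      2 * δ * (z * (A * b) i () + δ * (A * b') i ()) -
        (z + δ - (z - δ)) * (z - δ) * (A * b) i () := by ring
    rw [e]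
    exact dvd_sub ((h5 i).mul_left _) (h.mul_right _)

theorem exists_similitude_of_dvd {γ : Matrix (Fin (n + 1)) (Fin (n + 1)) ℤ} (hγ : γ.IsSymm)
    {P P' : Matrix (Fin (n + 1)) (Fin n) ℤ} {R R' : Matrix (Fin n) (Fin (n + 1)) ℤ}
    {u u' : Matrix (Fin (n + 1)) Unit ℤ} {r r' : Matrix Unit (Fin (n + 1)) ℤ}
    (h : P.fromCols u * R.fromRows r = 1) (h' : P'.fromCols u' * R'.fromRows r' = 1)
    (hT : P'ᵀ * γ * P' = Pᵀ * γ * P) (hT0 : (Pᵀ * γ * P).det ≠ 0) {s : ℤ}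
    (hs : ∀ i, (Pᵀ * γ * P).det ∣
      (s • ((Pᵀ * γ * P).adjugate * (Pᵀ * γ * u - P'ᵀ * γ * u')) : Matrix (Fin n) Unit ℤ) i ()) :
    ∃ H : Matrix (Fin (n + 1)) (Fin (n + 1)) ℤ, Hᵀ * γ * H = s ^ 2 • γ ∧ H * P = s • P' := by
  have hd := det_gram_of_mul_eq_one γ h
  have hd' := det_gram_of_mul_eq_one γ h'
  rw [gram_fromCols hγ] at hd hd'
  rw [hT] at hd'
  have hTs := gram_isSymm hγ P
  obtain ⟨e, -⟩ := bordered_det hTs hT0 (Pᵀ * γ * u) (uᵀ * γ * u)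
  obtain ⟨e', -⟩ := bordered_det hTs hT0 (P'ᵀ * γ * u') (u'ᵀ * γ * u')
  rw [hd] at e
  rw [hd'] at e'
  have hTA := mul_adjugate (Pᵀ * γ * P)
  have hAT := adjugate_mul (Pᵀ * γ * P)
  generalize hTdef : Pᵀ * γ * P = T at *
  generalize hb : Pᵀ * γ * u = b at *
  generalize hc : uᵀ * γ * u = c at *
  generalize hb' : P'ᵀ * γ * u' = b' at *
  generalize hc' : u'ᵀ * γ * u' = c' at *
  generalize T.adjugate = A at *
  choose y0 hy0 using hs
  set y : Matrix (Fin n) Unit ℤ := Matrix.of fun i _ => y0 i with hy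
  have hsy : s • (A * (b - b')) = T.det • y := by
    ext i ⟨⟩
    rw [hy0, Matrix.smul_apply]; rfl
  have hTy : s • b = s • b' + T * y := by
    have h1 := congrArg (T * ·) hsy
    simp only [Matrix.mul_smul, ← Matrix.mul_assoc, hTA, Matrix.smul_mul, Matrix.one_mul] at h1
    rw [smul_comm] at h1
    have h2 := smul_right_injective _ hT0 h1
    rw [← h2, smul_sub]; abel
  set u'' := s • u' + P' * y with hu''
  have hb'' : P'ᵀ * γ * u'' = s • b := by
    rw [hu'', Matrix.mul_add, Matrix.mul_smul, hb', ← Matrix.mul_assoc, hT, hTy]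
  have hbt : u'ᵀ * γ * P' = b'ᵀ := by
    rw [← hb', transpose_mul, transpose_mul, transpose_transpose, hγ.eq, Matrix.mul_assoc]
  have hc'' : u''ᵀ * γ * u'' = s ^ 2 • c := by
    apply smul_right_injective _ hT0
    change T.det • _ = T.det • _
    have h1 : u''ᵀ * γ * u'' = s ^ 2 • c' + s • (b'ᵀ * y) + s • (yᵀ * b') + yᵀ * T * y := by
      have e1 : u''ᵀ = s • u'ᵀ + yᵀ * P'ᵀ := by
        rw [hu'', transpose_add, transpose_smul, transpose_mul]
      rw [Matrix.mul_assoc, ← Matrix.mul_assoc, e1, Matrix.add_mul, Matrix.add_mul,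
        Matrix.mul_assoc (yᵀ), Matrix.mul_assoc yᵀ, hb'', hu'', hTy]
      simp only [Matrix.mul_add, Matrix.mul_smul, Matrix.smul_mul, ← Matrix.mul_assoc, hbt, hc']
      rw [smul_smul, sq]
      abel
    have h2 : s ^ 2 • (bᵀ * A * b) =
        s ^ 2 • (b'ᵀ * A * b') + T.det • (s • (b'ᵀ * y) + s • (yᵀ * b') + yᵀ * T * y) := by
      have e1 : s ^ 2 • (bᵀ * A * b) = (s • b)ᵀ * A * (s • b) := by
        rw [transpose_smul, Matrix.smul_mul, Matrix.smul_mul, Matrix.mul_smul, smul_smul, sq]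
      have e2 : (s • b)ᵀ = s • b'ᵀ + yᵀ * T := by
        rw [hTy, transpose_add, transpose_smul, transpose_mul, hTs.eq]
      rw [e1, e2, hTy]
      have e3 : ∀ Z : Matrix Unit (Fin n) ℤ, Z * A * T = T.det • Z := fun Z => by
        rw [Matrix.mul_assoc, hAT, Matrix.mul_smul, Matrix.mul_one]
      have e4 : ∀ Z : Matrix Unit (Fin n) ℤ, Z * T * A = T.det • Z := fun Z => by
        rw [Matrix.mul_assoc, hTA, Matrix.mul_smul, Matrix.mul_one]
      simp only [Matrix.add_mul, Matrix.mul_add, Matrix.mul_smul, Matrix.smul_mul,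
        ← Matrix.mul_assoc, e3, e4, smul_add, smul_smul, sq]
      simp only [mul_comm s T.det]
      abel
    have h3 : T.det • c = T.det • c' + bᵀ * A * b - b'ᵀ * A * b' := by
      rw [sub_eq_iff_eq_add] at e e'
      rw [e, e']; abel
    rw [h1, smul_comm _ (s ^ 2) c, h3, smul_sub, smul_add (s ^ 2), h2]
    simp only [smul_add, smul_comm T.det (s ^ 2) c']
    abel
  have hNM := fromRows_mul_fromCols_eq_one h
  have hNM' := hNM
  rw [fromRows_mul_fromCols, ← fromBlocks_one, fromBlocks_inj] at hNM'
  obtain ⟨f1, f2, f3, f4⟩ := hNM'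
  set H := (s • P').fromCols u'' * R.fromRows r with hH
  have hHM : H * P.fromCols u = (s • P').fromCols u'' := by
    rw [hH, Matrix.mul_assoc, hNM, Matrix.mul_one]
  refine ⟨H, ?_, ?_⟩
  · have h1 : (P.fromCols u)ᵀ * (Hᵀ * γ * H) * P.fromCols u =
        (P.fromCols u)ᵀ * (s ^ 2 • γ) * P.fromCols u := by
      have e1 : (P.fromCols u)ᵀ * (Hᵀ * γ * H) * P.fromCols u =
          (H * P.fromCols u)ᵀ * γ * (H * P.fromCols u) := by
        rw [transpose_mul (H)]; simp only [Matrix.mul_assoc]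
      have e2 : (s • P')ᵀ * γ * (s • P') = s ^ 2 • T := by
        rw [← hT, transpose_smul, Matrix.smul_mul, Matrix.smul_mul, Matrix.mul_smul, smul_smul, sq]
      have e4 : (s • P')ᵀ * γ * u'' = s ^ 2 • b := by
        rw [transpose_smul, Matrix.smul_mul, Matrix.smul_mul, hb'', smul_smul, sq]
      rw [e1, hHM, gram_fromCols hγ, Matrix.mul_smul (P.fromCols u)ᵀ, Matrix.smul_mul, gram_fromCols hγ, hTdef, hb,
        hc, hc'', e2, e4, fromBlocks_smul, transpose_smul]
    have h2 := congrArg (fun Z => (R.fromRows r)ᵀ * Z * R.fromRows r) h1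
    have e3 : (R.fromRows r)ᵀ * (P.fromCols u)ᵀ = 1 := by
      rw [← transpose_mul, h, transpose_one]
    simp only [← Matrix.mul_assoc, e3, Matrix.one_mul] at h2
    simpa only [Matrix.mul_assoc, h, Matrix.mul_one] using h2
  · rw [hH, fromCols_mul_fromRows, Matrix.add_mul, Matrix.mul_assoc, Matrix.mul_assoc, f1, f3,
      Matrix.mul_one, Matrix.mul_zero, add_zero]

end Isometries

section RowSpans

open Matrix

theorem finite_gram_eq {m ι : Type*} [Fintype m] [DecidableEq m] [Finite ι] {γ : Matrix m m ℤ}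
    (hγ : γ.PosDef) (Λ : Matrix ι ι ℤ) : Finite {L : Matrix m ι ℤ // Lᵀ * γ * L = Λ} := by
  have hs : γᵀ = γ := by simpa using hγ.isHermitian.eq
  have hq : ∀ x : m → ℤ, 0 ≤ x ⬝ᵥ γ *ᵥ x := fun x => by
    rcases eq_or_ne x 0 with rfl | hx
    · simp
    · simpa using (hγ.dotProduct_mulVec_pos hx).le
  have hδ : γ.det ≠ 0 := fun h0 => by
    obtain ⟨x, hx, h⟩ := exists_mulVec_eq_zero_iff.mpr h0
    have := hγ.dotProduct_mulVec_pos hx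
    rw [h, dotProduct_zero] at this
    exact lt_irrefl _ this
  set w : m → m → ℤ := fun i => γ.adjugate *ᵥ Pi.single i 1 with hw
  have hγw : ∀ i, γ *ᵥ w i = γ.det • Pi.single i 1 := fun i => by
    rw [hw, mulVec_mulVec, mul_adjugate, smul_mulVec, one_mulVec]
  set B : m → ι → ℤ := fun i j => Λ j j + w i ⬝ᵥ γ *ᵥ w i with hB
  have hfin : {f : m → ι → ℤ | ∀ i, f i ∈ {g : ι → ℤ | ∀ j, g j ∈ Set.Icc (-B i j) (B i j)}}.Finite :=
    Set.Finite.pi' fun i => Set.Finite.pi' fun j => Set.finite_Icc _ _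
  suffices h : ∀ L : Matrix m ι ℤ, Lᵀ * γ * L = Λ → ∀ i j, L i j ∈ Set.Icc (-B i j) (B i j) by
    have hS : {L : Matrix m ι ℤ | Lᵀ * γ * L = Λ}.Finite := hfin.subset h
    exact hS.to_subtype
  intro L hL i j
  have hL' : (fun k => L k j) ⬝ᵥ γ *ᵥ (fun k => L k j) = Λ j j := by
    rw [← hL, Matrix.mul_assoc]; rfl
  set x : m → ℤ := fun k => L k j with hx
  have hxw : x ⬝ᵥ γ *ᵥ w i = γ.det * L i j := by
    rw [hγw, dotProduct_smul, dotProduct_single, mul_one, smul_eq_mul]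
  have hwx : w i ⬝ᵥ γ *ᵥ x = γ.det * L i j := by
    rw [dotProduct_mulVec, ← mulVec_transpose, hs, dotProduct_comm, hxw]
  have h1 := hq (x + w i)
  have h2 := hq (x - w i)
  rw [mulVec_add, add_dotProduct, dotProduct_add, dotProduct_add, hxw, hwx, hL'] at h1
  rw [mulVec_sub, sub_dotProduct, dotProduct_sub, dotProduct_sub, hxw, hwx, hL'] at h2
  have h3 : |γ.det * L i j| ≤ B i j := by
    have h4 : 0 ≤ B i j := by
      have := hq x; have := hq (w i); rw [hL'] at *; simp only [hB]; positivity
    rw [abs_le]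
    simp only [hB] at h4 ⊢
    constructor <;> linarith
  rw [abs_mul] at h3
  rw [Set.mem_Icc, ← abs_le]
  have h5 := Int.one_le_abs hδ
  nlinarith [abs_nonneg (L i j)]

def localRowSpan {m n : Type*} [Fintype m] (p : ℕ) (L : Matrix m n ℤ) : Set (n → ℤ) :=
  {x | ∃ c : ℤ, ¬ (p : ℤ) ∣ c ∧ ∃ y, y ᵥ* L = c • x}

theorem localRowSpan_subset_of_mul_eq {m n : Type*} [Fintype m] {p : ℕ} (hp : p.Prime) {L L' : Matrix m n ℤ} {d : ℤ}
    {Y : Matrix m m ℤ} (hd : ¬ (p : ℤ) ∣ d) (h : d • L = Y * L') :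
    localRowSpan p L ⊆ localRowSpan p L' := by
  rintro x ⟨c, hc, y, hy⟩
  refine ⟨d * c, fun hdvd => ?_, y ᵥ* Y, ?_⟩
  · exact ((Nat.prime_iff_prime_int.mp hp).dvd_or_dvd hdvd).elim hd hc
  · rw [vecMul_vecMul, ← h, vecMul_smul, hy, smul_smul]

theorem localRowSpan_subset_of_zmod {m n : Type*} [Fintype m] [Fintype n] [DecidableEq n] {p : ℕ} (hp : p.Prime) {L L' : Matrix m n ℤ}
    {Z : Matrix n m ℤ} {d d' : ℤ} {v r : ℕ} (hZ : Z * L' = d • 1) (hd : d = (p : ℤ) ^ v * d')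
    (hd' : ¬ (p : ℤ) ∣ d') (hr : v ≤ r)
    (h : ∃ X : Matrix m m (ZMod (p ^ r)), L.map (Int.cast : ℤ → ZMod (p ^ r)) =
      X * L'.map (Int.cast : ℤ → ZMod (p ^ r))) :
    localRowSpan p L ⊆ localRowSpan p L' := by
  obtain ⟨X, hX⟩ := h
  set X' : Matrix m m ℤ := Matrix.of fun i j => (ZMod.cast (X i j) : ℤ) with hX'
  have e : X'.map (Int.cast : ℤ → ZMod (p ^ r)) = X := by
    ext i j
    simp [hX']
  rw [← e, ← map_cast_mul] at hX
  have hdvd : ∀ i j, ∃ w, (L - X' * L') i j = (p : ℤ) ^ r * w := fun i j => by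
    have h1 := congrFun₂ hX i j
    rw [map_apply, map_apply, ← sub_eq_zero, ← Int.cast_sub, ZMod.intCast_zmod_eq_zero_iff_dvd] at h1
    rw [← dvd_def, Matrix.sub_apply]
    exact_mod_cast h1
  choose W hW using hdvd
  have hW' : L - X' * L' = (p : ℤ) ^ r • (Matrix.of W : Matrix m n ℤ) := by
    ext i j
    rw [hW, Matrix.smul_apply]; rfl
  refine localRowSpan_subset_of_mul_eq hp hd'
    (Y := d' • X' + (p : ℤ) ^ (r - v) • (Matrix.of W * Z)) ?_
  rw [Matrix.add_mul, Matrix.smul_mul, Matrix.smul_mul, Matrix.mul_assoc, hZ, Matrix.mul_smul,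
    Matrix.mul_one, smul_smul, hd, ← mul_assoc, ← pow_add, Nat.sub_add_cancel hr, mul_comm, mul_smul,
    ← hW']
  module

theorem rowEquiv_of_localRowSpan_eq {m n : Type*} [Fintype m] [Fintype n] [DecidableEq m]
    [DecidableEq n] {L L' : Matrix m n ℤ} {Z Z' : Matrix n m ℤ} {d : ℤ}
    (hZ : Z * L = d • 1) (hZ' : Z' * L' = d • 1)
    (h : ∀ p : ℕ, p.Prime → (p : ℤ) ∣ d → localRowSpan p L = localRowSpan p L') :
    RowEquiv L L' := by
  have key : ∀ {L L' : Matrix m n ℤ} {Z' : Matrix n m ℤ}, Z' * L' = d • 1 →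
      (∀ p : ℕ, p.Prime → (p : ℤ) ∣ d → localRowSpan p L = localRowSpan p L') →
      ∃ X, L = X * L' := by
    intro L L' Z' hZ' h
    suffices ∀ i, ∃ y, y ᵥ* L' = L i by
      choose y hy using this
      exact ⟨Matrix.of y, funext fun i => (hy i).symm⟩
    intro i
    let I : Ideal ℤ :=
      { carrier := {c | ∃ y, y ᵥ* L' = c • L i}
        zero_mem' := ⟨0, by simp⟩
        add_mem' := by
          rintro a b ⟨y, hy⟩ ⟨z, hz⟩
          exact ⟨y + z, by rw [add_vecMul, hy, hz, add_smul]⟩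
        smul_mem' := by
          rintro a b ⟨y, hy⟩
          exact ⟨a • y, by rw [smul_vecMul, hy, smul_assoc]⟩ }
    have hdI : d ∈ I := ⟨L i ᵥ* Z', by rw [vecMul_vecMul, hZ', vecMul_smul, vecMul_one]⟩
    suffices (1 : ℤ) ∈ I by
      obtain ⟨y, hy⟩ := this
      exact ⟨y, by rw [hy, one_smul]⟩
    obtain ⟨g, hg⟩ := (IsPrincipalIdealRing.principal I).principal
    have hgI : ∀ c, c ∈ I ↔ g ∣ c := fun c => by
      rw [hg]; exact Ideal.mem_span_singleton
    rw [hgI]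
    by_contra hg1
    have hg2 : g.natAbs ≠ 1 := fun h1 => hg1 (Int.isUnit_iff_natAbs_eq.mpr h1).dvd
    obtain ⟨p, hp, hpg⟩ := Nat.exists_prime_and_dvd hg2
    have hpg' : (p : ℤ) ∣ g := Int.natCast_dvd.mpr hpg
    have hmem : L i ∈ localRowSpan p L :=
      ⟨1, fun h1 => hp.one_lt.ne' (by exact_mod_cast Int.eq_one_of_dvd_one (by positivity) h1),
        Pi.single i 1, by rw [single_one_vecMul, one_smul]; rfl⟩
    rw [h p hp (hpg'.trans ((hgI d).mp hdI))] at hmem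
    obtain ⟨c, hc, y, hy⟩ := hmem
    exact hc (hpg'.trans ((hgI c).mp ⟨y, hy⟩))
  exact ⟨key hZ' h, key hZ fun p hp hpd => (h p hp hpd).symm⟩

end RowSpans

section LocalInvariants

open Matrix

variable {n : ℕ}

theorem exists_frame {L₀ : Matrix (Fin (n + 1)) (Fin n) ℤ}
    {Z : Matrix (Fin n) (Fin (n + 1)) ℤ} {d : ℤ} (hd : d ≠ 0) (hZ : Z * L₀ = d • 1) :
    ∃ (a : Fin n → ℤ) (V V' : Matrix (Fin n) (Fin n) ℤ), (∀ i, a i ≠ 0) ∧ V * V' = 1 ∧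
      ∀ L, RowEquiv L L₀ → ∃ (P : Matrix (Fin (n + 1)) (Fin n) ℤ)
        (R : Matrix (Fin n) (Fin (n + 1)) ℤ) (u : Matrix (Fin (n + 1)) Unit ℤ)
        (r : Matrix Unit (Fin (n + 1)) ℤ), P.fromCols u * R.fromRows r = 1 ∧
          P * diagonal a * V = L := by
  obtain ⟨P₀, R₀, a, V, V', hRP, ha, hV, hL₀⟩ := exists_smith_factorization L₀ hd hZ
  refine ⟨a, V, V', ha, hV, ?_⟩
  rintro L ⟨⟨X, hX⟩, Y, hY⟩
  have h1 : R₀ * Y * (X * P₀) = 1 := by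
    have h2 : Y * (X * L₀) * V' = L₀ * V' := by rw [← hX, ← hY]
    rw [hL₀] at h2
    simp only [Matrix.mul_assoc, hV, Matrix.mul_one] at h2
    have h3 : R₀ * Y * (X * P₀) * diagonal a = 1 * diagonal a := by
      rw [← hRP]; simp only [Matrix.mul_assoc, h2]
    ext i j
    have := congrFun₂ h3 i j
    rw [mul_diagonal, mul_diagonal] at this
    exact mul_right_cancel₀ (ha j) this
  obtain ⟨u, r, hur⟩ := exists_unimodular_completion h1
  exact ⟨X * P₀, R₀ * Y, u, r, hur, by rw [hX, hL₀]; simp only [Matrix.mul_assoc]⟩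

theorem diagonal_mul_det_ne_zero {a : Fin n → ℤ} {V V' : Matrix (Fin n) (Fin n) ℤ}
    (ha : ∀ i, a i ≠ 0) (hV : V * V' = 1) : (diagonal a * V).det ≠ 0 := by
  have h : V.det * V'.det = 1 := by rw [← det_mul, hV, det_one]
  rw [det_mul, det_diagonal]
  exact mul_ne_zero (Finset.prod_ne_zero_iff.mpr fun i _ => ha i) (left_ne_zero_of_mul_eq_one h)

theorem congruence_left_cancel {H T T' : Matrix (Fin n) (Fin n) ℤ} (hH : H.det ≠ 0)
    (h : Hᵀ * T * H = Hᵀ * T' * H) : T = T' := by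
  have h1 : H.adjugateᵀ * (Hᵀ * T * H) * H.adjugate = H.adjugateᵀ * (Hᵀ * T' * H) * H.adjugate := by
    rw [h]
  have h2 : H.adjugateᵀ * Hᵀ = H.det • 1 := by
    rw [← transpose_mul, mul_adjugate, transpose_smul, transpose_one]
  simp only [← Matrix.mul_assoc, h2] at h1
  simp only [Matrix.mul_assoc, mul_adjugate, Matrix.mul_smul, Matrix.smul_mul, Matrix.one_mul,
    Matrix.mul_one] at h1
  exact smul_right_injective _ hH (smul_right_injective _ hH h1)

theorem int_dvd_of_forall_prime_pow {N x : ℤ}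
    (h : ∀ p k : ℕ, p.Prime → (p : ℤ) ^ k ∣ N → (p : ℤ) ^ k ∣ x) : N ∣ x := by
  rw [← Int.natAbs_dvd_natAbs, Nat.dvd_iff_prime_pow_dvd_dvd]
  intro p k hp hk
  have h1 := h p k hp (by rw [← Nat.cast_pow]; exact Int.natCast_dvd.mpr hk)
  rw [← Nat.cast_pow] at h1
  exact Int.natCast_dvd.mp h1

theorem adjugate_mul_transpose_mul_mul {γ : Matrix (Fin (n + 1)) (Fin (n + 1)) ℤ}
    {Λ : Matrix (Fin n) (Fin n) ℤ} {L : Matrix (Fin (n + 1)) (Fin n) ℤ} (hL : Lᵀ * γ * L = Λ) :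
    Λ.adjugate * Lᵀ * γ * L = Λ.det • 1 := by
  rw [Matrix.mul_assoc, Matrix.mul_assoc, ← Matrix.mul_assoc Lᵀ, hL, adjugate_mul]

def IsRamified (γ : Matrix (Fin (n + 1)) (Fin (n + 1)) ℤ) (p : ℕ)
    (L : Matrix (Fin (n + 1)) (Fin n) ℤ) : Prop :=
  ∃ (P : Matrix (Fin (n + 1)) (Fin n) ℤ) (R : Matrix (Fin n) (Fin (n + 1)) ℤ) (a : Fin n → ℤ)
    (V V' : Matrix (Fin n) (Fin n) ℤ), R * P = 1 ∧ (∀ i, a i ≠ 0) ∧ V * V' = 1 ∧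
      P * diagonal a * V = L ∧ (p : ℤ) ∣ (Pᵀ * γ * P).det

theorem exists_local_signs {γ : Matrix (Fin (n + 1)) (Fin (n + 1)) ℤ} (hγ : γ.IsSymm)
    {Λ : Matrix (Fin n) (Fin n) ℤ} (hΛ : Λ.det ≠ 0) :
    ∃ σ : ℕ → {L : Matrix (Fin (n + 1)) (Fin n) ℤ // Lᵀ * γ * L = Λ} → Prop,
      (∀ p L, p.Prime → ¬ σ p L → IsRamified γ p L.1) ∧
      ∀ L L', (∀ p : ℕ, p.Prime → (p : ℤ) ∣ Λ.det →
          localRowSpan p L.1 = localRowSpan p L'.1 ∧ (σ p L ↔ σ p L')) →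
        ∃ H : Matrix (Fin (n + 1)) (Fin (n + 1)) ℤ,
          Hᵀ * γ * H = (2 * γ.det ^ 2) ^ 2 • γ ∧ H * L.1 = (2 * γ.det ^ 2) • L'.1 := by
  let S : Setoid {L : Matrix (Fin (n + 1)) (Fin n) ℤ // Lᵀ * γ * L = Λ} :=
    { r := fun L L' => RowEquiv L.1 L'.1
      iseqv := ⟨fun L => ⟨⟨1, by rw [Matrix.one_mul]⟩, 1, by rw [Matrix.one_mul]⟩,
        fun h => h.symm, fun h h' => h.trans h'⟩ }
  let rep : {L : Matrix (Fin (n + 1)) (Fin n) ℤ // Lᵀ * γ * L = Λ} →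
    {L : Matrix (Fin (n + 1)) (Fin n) ℤ // Lᵀ * γ * L = Λ} := fun L => (Quotient.mk S L).out
  have hrep : ∀ L, RowEquiv L.1 (rep L).1 := fun L =>
    RowEquiv.symm (Quotient.exact (Quotient.out_eq (Quotient.mk S L)) :)
  have hrep' : ∀ {L L'}, RowEquiv L.1 L'.1 → rep L = rep L' := fun {L L'} h =>
    congrArg Quotient.out (Quotient.sound h : Quotient.mk S L = Quotient.mk S L')
  choose a V V' ha hV hF using
    fun L : {L : Matrix (Fin (n + 1)) (Fin n) ℤ // Lᵀ * γ * L = Λ} =>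
      exists_frame hΛ (adjugate_mul_transpose_mul_mul L.2)
  choose P R u r hPu hPL using fun L => hF (rep L) L.1 (hrep L)
  have hgram : ∀ L, (diagonal (a (rep L)) * V (rep L))ᵀ * ((P L)ᵀ * γ * P L) *
      (diagonal (a (rep L)) * V (rep L)) = Λ := fun L => by
    have h1 : P L * (diagonal (a (rep L)) * V (rep L)) = L.1 := by
      rw [← Matrix.mul_assoc]; exact hPL L
    rw [← L.2, ← h1, transpose_mul (P L)]
    simp only [Matrix.mul_assoc]
  have hT : ∀ L L', rep L = rep L' → (P L)ᵀ * γ * P L = (P L')ᵀ * γ * P L' := fun L L' h => by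
    refine congruence_left_cancel (diagonal_mul_det_ne_zero (ha (rep L)) (hV (rep L))) ?_
    rw [hgram L, h, hgram L']
  have hdet : ∀ L, ((P L)ᵀ * γ * P L).det ∣ Λ.det := fun L => by
    rw [← hgram L, det_mul, det_mul]
    exact (dvd_mul_left _ _).mul_right _
  have hT0 : ∀ L, ((P L)ᵀ * γ * P L).det ≠ 0 := fun L h => hΛ (by
    have := hdet L
    rwa [h, zero_dvd_iff] at this)
  have hRP : ∀ L, R L * P L = 1 := fun L => by
    have h := fromRows_mul_fromCols_eq_one (hPu L)
    rw [fromRows_mul_fromCols, ← fromBlocks_one, fromBlocks_inj] at h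
    exact h.1
  have hδ : ∀ L, (fromBlocks ((P L)ᵀ * γ * P L) ((P L)ᵀ * γ * u L) ((P L)ᵀ * γ * u L)ᵀ
      ((u L)ᵀ * γ * u L)).det = γ.det := fun L => by
    rw [← gram_fromCols hγ, det_gram_of_mul_eq_one γ (hPu L)]
  refine ⟨fun p L => ∀ k, (p : ℤ) ^ k ∣ ((P L)ᵀ * γ * P L).det → ∀ i, (p : ℤ) ^ k ∣
    ((2 * γ.det ^ 2) • (((P L)ᵀ * γ * P L).adjugate *
      ((P L)ᵀ * γ * u L + (P (rep L))ᵀ * γ * u (rep L))) : Matrix (Fin n) Unit ℤ) i (), ?_, ?_⟩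
  · intro p L hp hσ
    refine ⟨P L, R L, a (rep L), V (rep L), V' (rep L), hRP L, ha _, hV _, hPL L, ?_⟩
    by_contra hndvd
    refine hσ fun k hk i => ?_
    rcases k.eq_zero_or_pos with rfl | hk0
    · simp
    · exact absurd ((dvd_pow_self _ hk0.ne').trans hk) hndvd
  · intro L L' h
    have hLL' : rep L = rep L' := hrep' (rowEquiv_of_localRowSpan_eq
      (adjugate_mul_transpose_mul_mul L.2) (adjugate_mul_transpose_mul_mul L'.2)
      fun p hp hpd => (h p hp hpd).1)
    have hTT := hT L L' hLL'
    have hTB := hT L (rep L) (hrep' (hrep L))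
    have hdvd : ∀ i, ((P L)ᵀ * γ * P L).det ∣ ((2 * γ.det ^ 2) •
        (((P L)ᵀ * γ * P L).adjugate * ((P L)ᵀ * γ * u L - (P L')ᵀ * γ * u L')) :
          Matrix (Fin n) Unit ℤ) i () := fun i => by
      refine int_dvd_of_forall_prime_pow fun p k hp hk => ?_
      rcases k.eq_zero_or_pos with rfl | hk0
      · simp
      have hσ := (h p hp ((dvd_pow_self _ hk0.ne').trans (hk.trans (hdet L)))).2
      have hd1 := bordered_dichotomy (gram_isSymm hγ (P L)) (hT0 L)
        (by rw [hTB]; exact hδ (rep L)) (hδ L) hp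
      have hd2 := bordered_dichotomy (gram_isSymm hγ (P L)) (hT0 L)
        (δ := γ.det) (by rw [hTB]; exact hδ (rep L)) (by rw [hTT]; exact hδ L') hp
      beta_reduce at hσ
      rw [← hTT, ← hLL'] at hσ
      by_cases hs : ∀ k, (p : ℤ) ^ k ∣ ((P L)ᵀ * γ * P L).det → ∀ i, (p : ℤ) ^ k ∣
          ((2 * γ.det ^ 2) • (((P L)ᵀ * γ * P L).adjugate *
            ((P L)ᵀ * γ * u L + (P (rep L))ᵀ * γ * u (rep L))) : Matrix (Fin n) Unit ℤ) i ()
      · have h1 := dvd_sub (hs k hk i) (hσ.mp hs k hk i)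
        rwa [← Matrix.sub_apply, ← smul_sub, ← Matrix.mul_sub, add_sub_add_right_eq_sub] at h1
      · have h1 := dvd_sub (hd1.resolve_left hs k hk i)
          (hd2.resolve_left (fun h2 => hs (hσ.mpr h2)) k hk i)
        rwa [← Matrix.sub_apply, ← smul_sub, ← Matrix.mul_sub, sub_sub_sub_cancel_right] at h1
    obtain ⟨H, hH, hHP⟩ := exists_similitude_of_dvd hγ (hPu L) (hPu L') hTT.symm (hT0 L) hdvd
    refine ⟨H, hH, ?_⟩
    have e1 := hPL L
    have e2 := hPL L'
    rw [← hLL'] at e2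
    rw [← e1, ← e2, ← Matrix.mul_assoc, ← Matrix.mul_assoc, hHP, Matrix.smul_mul, Matrix.smul_mul]

end LocalInvariants

section LocalGlobalCount

open Matrix

theorem natCard_le_natCard_mul_prod_labels {X Y ι : Type*} {α : ι → Type*} [Finite X] [Finite Y]
    [Nonempty Y] (s : Finset ι) (l : ∀ i, X → α i) (P : X → Y → X → Prop)
    (hP : ∀ x₀ y x x', P x₀ y x → P x₀ y x' → x = x')
    (h : ∀ x₀ x, (∀ i ∈ s, l i x₀ = l i x) → ∃ y, P x₀ y x) :
    Nat.card X ≤ Nat.card Y * ∏ i ∈ s, Nat.card (Set.range (l i)) := by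
  rcases isEmpty_or_nonempty X with hX | hX
  · simp
  have hex : ∀ x₀ x, ∃ y, (∀ i ∈ s, l i x₀ = l i x) → P x₀ y x := fun x₀ x => by
    by_cases hl : ∀ i ∈ s, l i x₀ = l i x
    · obtain ⟨y, hy⟩ := h x₀ x hl
      exact ⟨y, fun _ => hy⟩
    · exact ⟨Classical.arbitrary Y, fun hl' => absurd hl' hl⟩
  choose f hf using hex
  let F : X → ∀ i : s, Set.range (l i) := fun x i => ⟨l i x, x, rfl⟩
  have hF : ∀ x i, i ∈ s → l i (Function.invFun F (F x)) = l i x := fun x i hi =>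
    congrArg Subtype.val (congrFun (Function.invFun_eq (f := F) (b := F x) ⟨x, rfl⟩) ⟨i, hi⟩)
  have hinj : Function.Injective fun x => (f (Function.invFun F (F x)) x, F x) := by
    intro x x' hxx'
    obtain ⟨h1, h2⟩ := Prod.mk.inj hxx'
    have h4 := hf _ x' (hF x')
    have h5 := hf _ x (hF x)
    rw [h2] at h1 h5
    rw [h1] at h5
    exact hP _ _ _ _ h5 h4
  refine (Nat.card_le_card_of_injective _ hinj).trans ?_
  rw [Nat.card_prod, Nat.card_pi, Finset.prod_coe_sort s fun i => Nat.card (Set.range (l i))]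

theorem natCard_prop_imp (q : Prop) [Decidable q] :
    Nat.card {b : Prop // ¬ b → q} = if q then 2 else 1 := by
  split_ifs with hq
  · have e : {b : Prop // ¬ b → q} ≃ Prop := Equiv.subtypeUnivEquiv fun b _ => hq
    rw [Nat.card_congr e, Nat.card_eq_fintype_card]
    exact Fintype.card_prop
  · rw [Nat.card_eq_one_iff_unique]
    refine ⟨⟨fun a b => ?_⟩, ⟨⟨True, fun h => absurd trivial h⟩⟩⟩
    have h : ∀ c : {b : Prop // ¬ b → q}, c.1 := fun c => by_contra fun hc => hq (c.2 hc)
    exact Subtype.ext (propext ⟨fun _ => h b, fun _ => h a⟩)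

theorem natCard_range_prodMk_le {X Y : Type*} [Finite X] (f : X → Y) (g q : X → Prop)
    (hg : ∀ x, ¬ g x → q x) (t : Y → Prop) [DecidablePred t] (ht : ∀ x, q x → t (f x))
    [Fintype (Set.range f)] :
    Nat.card (Set.range fun x => (f x, g x)) ≤ ∑ y : Set.range f, if t y then 2 else 1 := by
  have e : ∀ y : Set.range f, (if t y then 2 else 1) = Nat.card {b : Prop // ¬ b → t y} := fun y =>
    (natCard_prop_imp _).symm
  have : ∀ y : Set.range f, Finite {b : Prop // ¬ b → t y} := fun y => inferInstance
  rw [Finset.sum_congr rfl fun y _ => e y, ← Nat.card_sigma]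
  have hr : ∀ z ∈ Set.range fun x => (f x, g x), z.1 ∈ Set.range f ∧ (¬ z.2 → t z.1) := by
    rintro _ ⟨x, rfl⟩
    exact ⟨⟨x, rfl⟩, fun h => ht x (hg x h)⟩
  refine Nat.card_le_card_of_injective (fun z => ⟨⟨z.1.1, (hr z.1 z.2).1⟩, z.1.2, (hr z.1 z.2).2⟩) ?_
  rintro ⟨⟨y, b⟩, hz⟩ ⟨⟨y', b'⟩, hz'⟩ h
  simp only [Sigma.mk.injEq, Subtype.mk.injEq] at h
  obtain ⟨rfl, h⟩ := h
  simpa using h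

theorem natCard_le_of_local_signs {n : ℕ} {γ : Matrix (Fin (n + 1)) (Fin (n + 1)) ℤ}
    (hγ : γ.PosDef) {Λ : Matrix (Fin n) (Fin n) ℤ} {s : ℤ} (hs : s ≠ 0) (S : Finset ℕ)
    (hS : ∀ p : ℕ, p.Prime → (p : ℤ) ∣ Λ.det → p ∈ S)
    (σ : ℕ → {L : Matrix (Fin (n + 1)) (Fin n) ℤ // Lᵀ * γ * L = Λ} → Prop)
    (hH : ∀ L L', (∀ p : ℕ, p.Prime → (p : ℤ) ∣ Λ.det →
          localRowSpan p L.1 = localRowSpan p L'.1 ∧ (σ p L ↔ σ p L')) →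
        ∃ H : Matrix (Fin (n + 1)) (Fin (n + 1)) ℤ,
          Hᵀ * γ * H = s ^ 2 • γ ∧ H * L.1 = s • L'.1) :
    Nat.card {L : Matrix (Fin (n + 1)) (Fin n) ℤ // Lᵀ * γ * L = Λ} ≤
      Nat.card {H : Matrix (Fin (n + 1)) (Fin (n + 1)) ℤ // Hᵀ * γ * H = s ^ 2 • γ} *
        ∏ p ∈ S,
          Nat.card (Set.range fun L : {L : Matrix (Fin (n + 1)) (Fin n) ℤ // Lᵀ * γ * L = Λ} =>
            (localRowSpan p L.1, σ p L)) := by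
  have := finite_gram_eq hγ Λ
  have := finite_gram_eq hγ (s ^ 2 • γ)
  have hne : Nonempty {H : Matrix (Fin (n + 1)) (Fin (n + 1)) ℤ // Hᵀ * γ * H = s ^ 2 • γ} :=
    ⟨s • 1, by
      rw [transpose_smul, transpose_one, Matrix.smul_mul, Matrix.smul_mul, Matrix.one_mul,
        Matrix.mul_smul, Matrix.mul_one, smul_smul, sq s]⟩
  have hP : ∀ (L : {L : Matrix (Fin (n + 1)) (Fin n) ℤ // Lᵀ * γ * L = Λ})
      (H : {H : Matrix (Fin (n + 1)) (Fin (n + 1)) ℤ // Hᵀ * γ * H = s ^ 2 • γ})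
      (L₁ L₂ : {L : Matrix (Fin (n + 1)) (Fin n) ℤ // Lᵀ * γ * L = Λ}),
      H.1 * L.1 = s • L₁.1 → H.1 * L.1 = s • L₂.1 → L₁ = L₂ := fun L H L₁ L₂ h1 h2 => by
    have e : s • L₁.1 = s • L₂.1 := h1.symm.trans h2
    have e3 : L₁.1 = L₂.1 := smul_right_injective _ hs e
    exact Subtype.ext e3
  have key := natCard_le_natCard_mul_prod_labels (α := fun _ => Set (Fin n → ℤ) × Prop) S
    (fun p (L : {L : Matrix (Fin (n + 1)) (Fin n) ℤ // Lᵀ * γ * L = Λ}) =>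
      (localRowSpan p L.1, σ p L)) _ hP
  have key2 := key fun L L' h => by
    obtain ⟨H, h1, h2⟩ := hH L L' fun p hp hpd => by
      have h3 := h p (hS p hp hpd)
      exact ⟨congrArg Prod.fst h3, iff_of_eq (congrArg Prod.snd h3)⟩
    exact ⟨⟨H, h1⟩, h2⟩
  exact key2

theorem exists_localConst_mul_le_rowClass {k : ℕ} {γ : Matrix (Fin (k + 3)) (Fin (k + 3)) ℤ}
    (hγ : γ.IsSymm) (hδ : γ.det ≠ 0) {Λ : Matrix (Fin (k + 2)) (Fin (k + 2)) ℤ} (hΛ : Λ.det ≠ 0)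
    {p : ℕ} (hp : p.Prime) {L₀ : Matrix (Fin (k + 3)) (Fin (k + 2)) ℤ} (hL₀ : L₀ᵀ * γ * L₀ = Λ)
    (q : Prop) [Decidable q] (hq : q → IsRamified (n := k + 2) γ p L₀) :
    ∃ r₀, ∀ r ≥ r₀, (if q then 2 else 1 : ℝ) * localConst k γ.det p *
      (p : ℝ) ^ (r * ((k + 2) * (k + 3) / 2)) ≤
      Nat.card {L : Matrix (Fin (k + 3)) (Fin (k + 2)) (ZMod (p ^ r)) //
        Lᵀ * γ.map (Int.cast : ℤ → ZMod (p ^ r)) * L = Λ.map (Int.cast : ℤ → ZMod (p ^ r)) ∧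
        RowEquiv L (L₀.map (Int.cast : ℤ → ZMod (p ^ r)))} := by
  by_cases h : q
  · obtain ⟨P, R, a, V, V', hRP, ha, hV, rfl, hdvd⟩ := hq h
    obtain ⟨r₀, hr⟩ := localConst_mul_le_rowClass hγ hδ hp hRP ha hV
    refine ⟨r₀, fun r hr' => ?_⟩
    have h1 := hr r hr'
    rw [if_pos hdvd, hL₀] at h1
    rw [if_pos h]
    exact h1
  · obtain ⟨P, R, a, V, V', hRP, ha, hV, rfl⟩ := exists_smith_factorization (n := k + 2) L₀ hΛ
      (adjugate_mul_transpose_mul_mul hL₀)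
    rw [← Matrix.mul_assoc P] at hL₀ ⊢
    obtain ⟨r₀, hr⟩ := localConst_mul_le_rowClass hγ hδ hp hRP ha hV
    refine ⟨r₀, fun r hr' => le_trans ?_ ((hr r hr').trans_eq ?_)⟩
    · rw [if_neg h]
      have := localConst_pos k hδ hp
      gcongr
      split_ifs <;> norm_num
    · rw [hL₀]

theorem localConst_mul_natCard_le_nuLocal {k : ℕ} {γ : Matrix (Fin (k + 3)) (Fin (k + 3)) ℤ}
    (hγ : γ.IsSymm) (hδ : γ.det ≠ 0) {Λ : Matrix (Fin (k + 2)) (Fin (k + 2)) ℤ} (hΛ : Λ.det ≠ 0)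
    {p : ℕ} (hp : p.Prime) [Finite {L : Matrix (Fin (k + 3)) (Fin (k + 2)) ℤ // Lᵀ * γ * L = Λ}]
    (σ : {L : Matrix (Fin (k + 3)) (Fin (k + 2)) ℤ // Lᵀ * γ * L = Λ} → Prop)
    (hσ : ∀ L, ¬ σ L → IsRamified (n := k + 2) γ p L.1) :
    ENNReal.ofReal (localConst k γ.det p) *
      Nat.card (Set.range fun L : {L : Matrix (Fin (k + 3)) (Fin (k + 2)) ℤ // Lᵀ * γ * L = Λ} =>
        (localRowSpan p L.1, σ L)) ≤ nuLocal p (k + 2) γ Λ := by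
  classical
  set f : {L : Matrix (Fin (k + 3)) (Fin (k + 2)) ℤ // Lᵀ * γ * L = Λ} → Set (Fin (k + 2) → ℤ) :=
    fun L => localRowSpan p L.1 with hf
  let t : Set (Fin (k + 2) → ℤ) → Prop := fun S => ∃ L, f L = S ∧ IsRamified (n := k + 2) γ p L.1
  have := Fintype.ofFinite (Set.range f)
  have hcard := natCard_range_prodMk_le f σ (fun L => IsRamified (n := k + 2) γ p L.1) hσ t
    fun L hL => ⟨L, rfl, hL⟩
  have hrep : ∀ S : Set.range f, ∃ L, f L = S ∧ (t S → IsRamified (n := k + 2) γ p L.1) := by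
    rintro ⟨S, L, hL⟩
    by_cases h : t S
    · obtain ⟨L', h1, h2⟩ := h
      exact ⟨L', h1, fun _ => h2⟩
    · exact ⟨L, hL, fun h' => absurd h' h⟩
  choose rep hrep hram using hrep
  choose r₀ hr₀ using fun S : Set.range f =>
    exists_localConst_mul_le_rowClass hγ hδ hΛ hp (rep S).2 (t S) (hram S)
  obtain ⟨v, d', hd, hd'⟩ := exists_eq_prime_pow_mul hp hΛ
  have hp0 : (0 : ℝ) < p := by exact_mod_cast hp.pos
  have hev : ∀ r ≥ max v (Finset.univ.sup r₀),
      localConst k γ.det p * (Nat.card (Set.range fun L => (f L, σ L)) : ℝ) *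
        (p : ℝ) ^ (r * ((k + 2) * (k + 3) / 2)) ≤
        Nat.card {L : Matrix (Fin (k + 3)) (Fin (k + 2)) (ZMod (p ^ r)) //
          Lᵀ * γ.map (Int.cast : ℤ → ZMod (p ^ r)) * L =
            Λ.map (Int.cast : ℤ → ZMod (p ^ r))} := fun r hr => by
    have : NeZero (p ^ r) := ⟨pow_ne_zero _ hp.ne_zero⟩
    have hinj : Function.Injective (fun z : Σ S : Set.range f,
        {L : Matrix (Fin (k + 3)) (Fin (k + 2)) (ZMod (p ^ r)) //
        Lᵀ * γ.map (Int.cast : ℤ → ZMod (p ^ r)) * L = Λ.map (Int.cast : ℤ → ZMod (p ^ r)) ∧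
        RowEquiv L ((rep S).1.map (Int.cast : ℤ → ZMod (p ^ r)))} =>
        (⟨z.2.1, z.2.2.1⟩ : {L : Matrix (Fin (k + 3)) (Fin (k + 2)) (ZMod (p ^ r)) //
          Lᵀ * γ.map (Int.cast : ℤ → ZMod (p ^ r)) * L =
            Λ.map (Int.cast : ℤ → ZMod (p ^ r))})) := by
      rintro ⟨S, L, hL1, hL2⟩ ⟨S', L', hL1', hL2'⟩ h
      obtain rfl : L = L' := congrArg Subtype.val h
      have hRE := hL2.symm.trans hL2'
      have hv : v ≤ r := (le_max_left _ _).trans hr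
      have hSS : f (rep S) = f (rep S') := Set.Subset.antisymm
        (localRowSpan_subset_of_zmod hp (adjugate_mul_transpose_mul_mul (rep S').2) hd hd' hv hRE.1)
        (localRowSpan_subset_of_zmod hp (adjugate_mul_transpose_mul_mul (rep S).2) hd hd' hv hRE.2)
      rw [hrep, hrep] at hSS
      obtain rfl := Subtype.ext hSS
      rfl
    have h1 := Nat.card_le_card_of_injective _ hinj
    rw [Nat.card_sigma] at h1
    have h2 : (Nat.card (Set.range fun L => (f L, σ L)) : ℝ) ≤
        ∑ S : Set.range f, if t S then 2 else 1 := by exact_mod_cast hcard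
    calc _ ≤ localConst k γ.det p * (∑ S : Set.range f, if t S then 2 else 1) *
        (p : ℝ) ^ (r * ((k + 2) * (k + 3) / 2)) := by
          have := localConst_pos k hδ hp
          gcongr
      _ = ∑ S : Set.range f, (if t S then 2 else 1 : ℝ) * localConst k γ.det p *
          (p : ℝ) ^ (r * ((k + 2) * (k + 3) / 2)) := by
          rw [mul_comm (localConst k γ.det p), Finset.sum_mul, Finset.sum_mul]
      _ ≤ _ := by
          refine (Finset.sum_le_sum fun S _ => hr₀ S r ?_).trans (by exact_mod_cast h1)
          exact ((Finset.le_sup (Finset.mem_univ S)).trans (le_max_right _ _)).trans hr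
  rw [nuLocal]
  refine Filter.le_limsup_of_frequently_le' (Filter.Eventually.frequently ?_)
  filter_upwards [Filter.eventually_ge_atTop (max v (Finset.univ.sup r₀))] with r hr
  have hexp : (k + 2 + 1) * (k + 2) - (k + 2) * (k + 2 + 1) / 2 = (k + 2) * (k + 3) / 2 := by
    have := mul_div_two_eq k
    change (k + 3) * (k + 2) - (k + 2) * (k + 3) / 2 = _
    omega
  rw [hexp]
  rw [ENNReal.le_div_iff_mul_le (Or.inl (pow_ne_zero _ (by exact_mod_cast hp.ne_zero)))
    (Or.inl (by finiteness))]
  have h1 := ENNReal.ofReal_le_ofReal (hev r hr)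
  rw [ENNReal.ofReal_natCast, ENNReal.ofReal_mul (by have := localConst_pos k hδ hp; positivity),
    ENNReal.ofReal_mul (localConst_pos k hδ hp).le, ENNReal.ofReal_natCast,
    ENNReal.ofReal_pow hp0.le, ENNReal.ofReal_natCast] at h1
  exact h1

end LocalGlobalCount

section InfiniteProduct

theorem multipliable_ennreal_of_summable {ι : Type*} {ν : ι → ℝ≥0∞} (S : Finset ι) {e : ι → ℝ}
    (he : Summable e) (he0 : ∀ i, 0 ≤ e i) (hν0 : ∀ i, ν i ≠ 0)
    (hlow : ∀ i ∉ S, ENNReal.ofReal (1 - e i) ≤ ν i)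
    (hup : ∀ i ∉ S, ν i ≤ ENNReal.ofReal (1 + e i)) :
    Multipliable ν ∧ ∏' i, ν i ≠ 0 := by
  classical
  set u : ι → ℝ := fun i => if i ∈ S then 0 else (ν i).toReal - 1 with hu
  have htop : ∀ i ∉ S, ν i ≠ ⊤ := fun i hi => ne_top_of_le_ne_top ENNReal.ofReal_ne_top (hup i hi)
  have hus : Summable u := by
    refine he.of_norm_bounded fun i => ?_
    by_cases hi : i ∈ S
    · simp [hu, hi, he0 i]
    · have h1 := ENNReal.toReal_le_of_le_ofReal (by linarith [he0 i]) (hup i hi)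
      have h2 := (ENNReal.ofReal_le_iff_le_toReal (htop i hi)).mp (hlow i hi)
      simp only [hu, if_neg hi, Real.norm_eq_abs]
      exact abs_le.mpr ⟨by linarith, by linarith⟩
  have hpos : ∀ i, 0 < 1 + u i := fun i => by
    by_cases hi : i ∈ S
    · simp [hu, hi]
    · simpa [hu, hi] using ENNReal.toReal_pos (hν0 i) (htop i hi)
  have hprod := Real.hasProd_of_hasSum_log hpos (Real.summable_log_one_add_of_summable hus).hasSum
  set P := Real.exp (∑' i, Real.log (1 + u i))
  have hP : ENNReal.ofReal P ≠ 0 := (ENNReal.ofReal_pos.mpr (Real.exp_pos _)).ne'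
  have hlim : HasProd ν ((∏ i ∈ S, ν i) * ENNReal.ofReal P) := by
    have h1 : Filter.Tendsto (fun T : Finset ι => (∏ i ∈ S, ν i) *
        ENNReal.ofReal (∏ i ∈ T, (1 + u i))) Filter.atTop
        (nhds ((∏ i ∈ S, ν i) * ENNReal.ofReal P)) :=
      ENNReal.Tendsto.const_mul (ENNReal.tendsto_ofReal hprod) (Or.inl hP)
    rw [HasProd, SummationFilter.unconditional_filter]
    refine h1.congr' ?_
    filter_upwards [Filter.eventually_ge_atTop S] with T hT
    rw [ENNReal.ofReal_prod_of_nonneg fun i _ => (hpos i).le, ← Finset.prod_sdiff hT,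
      ← Finset.prod_sdiff (f := ν) hT, mul_comm]
    congr 1
    rw [Finset.prod_eq_one (s := S) fun i hi => by simp [hu, hi], mul_one]
    refine Finset.prod_congr rfl fun i hi => ?_
    have hi' := (Finset.mem_sdiff.mp hi).2
    simp [hu, hi', ENNReal.ofReal_toReal (htop i hi')]
  refine ⟨hlim.multipliable, ?_⟩
  rw [hlim.tprod_eq]
  exact mul_ne_zero (Finset.prod_ne_zero_iff.mpr fun i _ => hν0 i) hP

theorem one_add_pow_le {x : ℝ} (hx0 : 0 ≤ x) (hx1 : x ≤ 1) (K : ℕ) :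
    (1 + x) ^ K ≤ 1 + 3 ^ K * x := by
  induction K with
  | zero => simpa using hx0
  | succ K ih =>
    have h3 : (1 : ℝ) ≤ 3 ^ K := one_le_pow₀ (by norm_num)
    have h4 : (0 : ℝ) ≤ (3 : ℝ) ^ K * (x * (1 - x)) := by
      have := sub_nonneg.mpr hx1
      positivity
    calc (1 + x) ^ (K + 1) = (1 + x) ^ K * (1 + x) := pow_succ _ _
      _ ≤ (1 + 3 ^ K * x) * (1 + x) := by gcongr
      _ ≤ 1 + 3 ^ (K + 1) * x := by nlinarith [pow_succ (3 : ℝ) K, mul_le_mul_of_nonneg_right h3 hx0]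

theorem le_one_sub_pow {x : ℝ} (hx0 : 0 ≤ x) (hx1 : x ≤ 1) (K : ℕ) :
    1 - 3 ^ K * x ≤ (1 - x) ^ K := by
  have h := one_add_mul_le_pow (a := -x) (by linarith) K
  have h3 : (K : ℝ) ≤ 3 ^ K := by exact_mod_cast (Nat.lt_pow_self (by norm_num : 1 < 3)).le
  rw [← sub_eq_add_neg] at h
  nlinarith [mul_le_mul_of_nonneg_right h3 hx0]

theorem summable_primes_inv_sq (c : ℝ) : Summable fun p : Nat.Primes => c * ((p : ℝ) ^ 2)⁻¹ := by
  have h : Summable fun n : ℕ => ((n : ℝ) ^ 2)⁻¹ := Real.summable_nat_pow_inv.mpr one_lt_two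
  exact (h.comp_injective Nat.Primes.coe_nat_injective).mul_left c

theorem exists_finset_primes_dvd {d : ℤ} (hd : d ≠ 0) :
    ∃ S : Finset Nat.Primes, ∀ p : Nat.Primes, p ∈ S ↔ ((p : ℕ) : ℤ) ∣ d := by
  classical
  refine ⟨d.natAbs.primeFactors.subtype Nat.Prime, fun p => Finset.mem_subtype.trans ?_⟩
  rw [Nat.mem_primeFactors, Int.natCast_dvd]
  exact ⟨fun h => h.2.1, fun h => ⟨p.2, h, Int.natAbs_ne_zero.mpr hd⟩⟩

end InfiniteProduct

section SiegelBound

open Matrix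

theorem det_ne_zero_of_posDef {ι : Type*} [Fintype ι] [DecidableEq ι] {M : Matrix ι ι ℤ}
    (hM : M.PosDef) : M.det ≠ 0 := fun h => by
  obtain ⟨v, hv, hv'⟩ := Matrix.exists_mulVec_eq_zero_iff.mpr h
  have := hM.dotProduct_mulVec_pos hv
  rw [hv', dotProduct_zero] at this
  exact lt_irrefl _ this

theorem isSymm_of_posDef {ι : Type*} [Fintype ι] {M : Matrix ι ι ℤ}
    (hM : M.PosDef) : M.IsSymm := by
  rw [IsSymm, ← conjTranspose_eq_transpose_of_trivial]
  exact hM.isHermitian.eq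

theorem inv_sq_le_one {p : ℕ} (hp : p.Prime) : ((p : ℝ) ^ 2)⁻¹ ≤ 1 :=
  inv_le_one_of_one_le₀ (one_le_pow₀ (by exact_mod_cast hp.one_le))

theorem localConst_le_one (k : ℕ) {δ : ℤ} (hδ : δ ≠ 0) {p : ℕ} (hp : p.Prime) :
    localConst k δ p ≤ 1 := by
  have h1 : (1 : ℝ) ≤ p := by exact_mod_cast hp.one_le
  rw [localConst]
  split_ifs
  · have h2 : (1 : ℝ) ≤ (δ : ℝ) ^ 2 := by
      exact_mod_cast Int.one_le_abs (pow_ne_zero 2 hδ) |>.trans_eq (abs_of_nonneg (sq_nonneg δ))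
    have h3 : (1 : ℝ) ≤ 4 * δ ^ 2 * p := by nlinarith
    refine inv_le_one_of_one_le₀ ?_
    linarith [one_le_pow₀ h3 (n := (k + 3) * (k + 2))]
  · have := inv_sq_le_one hp
    exact pow_le_one₀ (by linarith) (by simp)

theorem nuLocal_le {k : ℕ} {γ : Matrix (Fin (k + 3)) (Fin (k + 3)) ℤ} (hγ : γ.IsSymm)
    {Λ : Matrix (Fin (k + 2)) (Fin (k + 2)) ℤ} (hΛ : Λ.IsSymm) {p : ℕ} (hp : p.Prime)
    (hpδ : ¬ (p : ℤ) ∣ 2 * γ.det) (hpΛ : ¬ (p : ℤ) ∣ Λ.det) :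
    nuLocal p (k + 2) γ Λ ≤ ENNReal.ofReal ((1 + ((p : ℝ) ^ 2)⁻¹) ^ (k + 1)) := by
  rw [nuLocal]
  refine Filter.limsup_le_of_le (by isBoundedDefault) ?_
  filter_upwards [Filter.eventually_ne_atTop 0] with r hr
  have h := ENNReal.ofReal_le_ofReal (natCard_gram_zmod_le hγ hp hpδ hr hΛ hpΛ)
  have hexp : (k + 2 + 1) * (k + 2) - (k + 2) * (k + 2 + 1) / 2 = (k + 2) * (k + 3) / 2 := by
    have := mul_div_two_eq k
    change (k + 3) * (k + 2) - (k + 2) * (k + 3) / 2 = _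
    omega
  rw [hexp]
  refine ENNReal.div_le_of_le_mul ?_
  rw [ENNReal.ofReal_natCast, ENNReal.ofReal_mul (by positivity),
    ENNReal.ofReal_pow (p := (p : ℝ)) (by positivity), ENNReal.ofReal_natCast] at h
  exact h

theorem multipliable_localConst (k : ℕ) {δ : ℤ} (hδ : δ ≠ 0) :
    ∏' p : Nat.Primes, ENNReal.ofReal (localConst k δ p) ≠ 0 := by
  obtain ⟨S, hS⟩ := exists_finset_primes_dvd (mul_ne_zero two_ne_zero hδ)
  refine (multipliable_ennreal_of_summable S (summable_primes_inv_sq (3 ^ (k + 1)))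
    (fun p => by positivity) (fun p => (ENNReal.ofReal_pos.mpr (localConst_pos k hδ p.2)).ne')
    (fun p hp => ENNReal.ofReal_le_ofReal ?_) (fun p hp => ENNReal.ofReal_le_ofReal ?_)).2
  · rw [localConst, if_neg fun h => hp ((hS p).mpr h)]
    exact le_one_sub_pow (by positivity) (inv_sq_le_one p.2) _
  · refine (localConst_le_one k hδ p.2).trans ?_
    have : (0 : ℝ) ≤ 3 ^ (k + 1) * ((p : ℝ) ^ 2)⁻¹ := by positivity
    linarith

theorem localConst_le_nuLocal {k : ℕ} {γ : Matrix (Fin (k + 3)) (Fin (k + 3)) ℤ}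
    (hγ : γ.PosDef) {Λ : Matrix (Fin (k + 2)) (Fin (k + 2)) ℤ} (hΛ : Λ.PosDef)
    {L : Matrix (Fin (k + 3)) (Fin (k + 2)) ℤ} (hL : Lᵀ * γ * L = Λ) {p : ℕ} (hp : p.Prime) :
    ENNReal.ofReal (localConst k γ.det p) ≤ nuLocal p (k + 2) γ Λ := by
  have := finite_gram_eq hγ Λ
  refine le_trans ?_ (localConst_mul_natCard_le_nuLocal (isSymm_of_posDef hγ)
    (det_ne_zero_of_posDef hγ) (det_ne_zero_of_posDef hΛ) hp (fun _ => True)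
    fun _ h => absurd trivial h)
  refine le_mul_of_one_le_right' ?_
  have : Nonempty {L : Matrix (Fin (k + 3)) (Fin (k + 2)) ℤ // Lᵀ * γ * L = Λ} := ⟨⟨L, hL⟩⟩
  exact_mod_cast Nat.card_pos

theorem multipliable_nuLocal {k : ℕ} {γ : Matrix (Fin (k + 3)) (Fin (k + 3)) ℤ}
    (hγ : γ.PosDef) {Λ : Matrix (Fin (k + 2)) (Fin (k + 2)) ℤ} (hΛ : Λ.PosDef)
    {L : Matrix (Fin (k + 3)) (Fin (k + 2)) ℤ} (hL : Lᵀ * γ * L = Λ) :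
    Multipliable fun p : Nat.Primes => nuLocal p (k + 2) γ Λ := by
  have hδ := det_ne_zero_of_posDef hγ
  obtain ⟨S, hS⟩ := exists_finset_primes_dvd
    (mul_ne_zero (mul_ne_zero two_ne_zero hδ) (det_ne_zero_of_posDef hΛ))
  have hle := fun p : Nat.Primes => localConst_le_nuLocal hγ hΛ hL p.2
  refine (multipliable_ennreal_of_summable S (summable_primes_inv_sq (3 ^ (k + 1)))
    (fun p => by positivity)
    (fun p => ((ENNReal.ofReal_pos.mpr (localConst_pos k hδ p.2)).trans_le (hle p)).ne')
    (fun p hp => le_trans (ENNReal.ofReal_le_ofReal ?_) (hle p)) (fun p hp =>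
      (nuLocal_le (isSymm_of_posDef hγ) (isSymm_of_posDef hΛ) p.2
        (fun h => hp ((hS p).mpr (h.mul_right _))) (fun h => hp ((hS p).mpr (h.mul_left _)))).trans
        (ENNReal.ofReal_le_ofReal ?_))).1
  · rw [localConst, if_neg fun h => hp ((hS p).mpr (h.mul_right _))]
    exact le_one_sub_pow (by positivity) (inv_sq_le_one p.2) _
  · exact one_add_pow_le (by positivity) (inv_sq_le_one p.2) _

theorem tprod_localConst_mul_natCard_le {k : ℕ} {γ : Matrix (Fin (k + 3)) (Fin (k + 3)) ℤ}
    (hγ : γ.PosDef) {Λ : Matrix (Fin (k + 2)) (Fin (k + 2)) ℤ} (hΛ : Λ.PosDef)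
    {L : Matrix (Fin (k + 3)) (Fin (k + 2)) ℤ} (hL : Lᵀ * γ * L = Λ) :
    (∏' p : Nat.Primes, ENNReal.ofReal (localConst k γ.det p)) *
      Nat.card {L : Matrix (Fin (k + 3)) (Fin (k + 2)) ℤ // Lᵀ * γ * L = Λ} ≤
      Nat.card {H : Matrix (Fin (k + 3)) (Fin (k + 3)) ℤ // Hᵀ * γ * H = (2 * γ.det ^ 2) ^ 2 • γ} *
        ∏' p : Nat.Primes, nuLocal p (k + 2) γ Λ := by
  classical
  have hδ := det_ne_zero_of_posDef hγ
  have hΛ0 := det_ne_zero_of_posDef hΛ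
  have := finite_gram_eq hγ Λ
  obtain ⟨σ, hσ, hH⟩ := exists_local_signs (n := k + 2) (isSymm_of_posDef hγ) hΛ0
  obtain ⟨S, hS⟩ := exists_finset_primes_dvd hΛ0
  have hlim := ENNReal.Tendsto.const_mul (multipliable_nuLocal hγ hΛ hL).hasProd
    (Or.inr (ENNReal.natCast_ne_top (Nat.card
      {H : Matrix (Fin (k + 3)) (Fin (k + 3)) ℤ // Hᵀ * γ * H = (2 * γ.det ^ 2) ^ 2 • γ})))
  refine ge_of_tendsto hlim ?_
  rw [SummationFilter.unconditional_filter]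
  filter_upwards [Filter.eventually_ge_atTop S] with T hT
  obtain ⟨e, he⟩ : ∃ e : Nat.Primes ↪ ℕ, ∀ p, e p = (p : ℕ) :=
    ⟨⟨fun p => p, Nat.Primes.coe_nat_injective⟩, fun _ => rfl⟩
  have hcount := natCard_le_of_local_signs (n := k + 2) hγ (s := 2 * γ.det ^ 2)
    (mul_ne_zero two_ne_zero (pow_ne_zero 2 hδ))
    (T.map e)
    (fun p hp hpd => Finset.mem_map.mpr ⟨⟨p, hp⟩, hT ((hS ⟨p, hp⟩).mpr hpd), he _⟩) σ hH
  rw [Finset.prod_map] at hcount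
  simp only [he] at hcount
  have hD : ∏' p : Nat.Primes, ENNReal.ofReal (localConst k γ.det p) ≤
      ∏ p ∈ T, ENNReal.ofReal (localConst k γ.det p) := by
    rw [ENNReal.tprod_eq_iInf_prod fun p => ENNReal.ofReal_le_one.mpr (localConst_le_one k hδ p.2)]
    exact iInf_le _ T
  have hν := Finset.prod_le_prod' (s := T) fun p _ =>
    localConst_mul_natCard_le_nuLocal (isSymm_of_posDef hγ) hδ hΛ0 p.2 (σ p)
      fun L => hσ p L p.2
  rw [Finset.prod_mul_distrib] at hν
  refine le_trans ?_ (mul_le_mul_right hν _)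
  rw [mul_left_comm]
  refine mul_le_mul' hD ?_
  exact_mod_cast hcount

end SiegelBound

/-- Siegel mass formula consequence: for fixed `n ≥ 2` and fixed positive definite
`γ ∈ M_{n+1,n+1}(ℤ)` there is `C > 0` (depending only on `n` and `γ`) such that for
every positive definite `Λ ∈ M_{n,n}(ℤ)`,
`A(γ,Λ) ≤ C · Π_p ν_p(γ,Λ)`, the product over all primes taken in `ℝ≥0∞`. -/
theorem siegel_upper_bound (n : ℕ) (hn : 2 ≤ n)
    (γ : Matrix (Fin (n + 1)) (Fin (n + 1)) ℤ) (hγ : γ.PosDef) :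
    ∃ C : ℝ, 0 < C ∧ ∀ Λ : Matrix (Fin n) (Fin n) ℤ, Λ.PosDef →
      (countRepr n γ Λ : ℝ≥0∞) ≤
        ENNReal.ofReal C * ∏' p : Nat.Primes, nuLocal p n γ Λ := by
  obtain ⟨k, rfl⟩ : ∃ k, n = k + 2 := ⟨n - 2, by omega⟩
  have hδ := det_ne_zero_of_posDef hγ
  set w : ℕ := Nat.card {H : Matrix (Fin (k + 3)) (Fin (k + 3)) ℤ //
    H.transpose * γ * H = (2 * γ.det ^ 2) ^ 2 • γ} with hw
  set D : ℝ≥0∞ := ∏' p : Nat.Primes, ENNReal.ofReal (localConst k γ.det p) with hD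
  have hD0 : D ≠ 0 := multipliable_localConst k hδ
  have hDtop : D ≠ ⊤ := ne_top_of_le_ne_top ENNReal.one_ne_top
    (tprod_le_one fun p => ENNReal.ofReal_le_one.mpr (localConst_le_one k hδ p.2))
  refine ⟨w / D.toReal + 1, by positivity, fun Λ hΛ => ?_⟩
  rcases isEmpty_or_nonempty {L : Matrix (Fin (k + 3)) (Fin (k + 2)) ℤ //
    L.transpose * γ * L = Λ} with h | ⟨⟨L, hL⟩⟩
  · have : countRepr (k + 2) γ Λ = 0 := by
      rw [countRepr]
      exact Nat.card_of_isEmpty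
    rw [this, Nat.cast_zero]
    exact zero_le
  have hle := tprod_localConst_mul_natCard_le hγ hΛ hL
  have hC : (w : ℝ≥0∞) / D ≤ ENNReal.ofReal (w / D.toReal + 1) := by
    refine le_trans (le_of_eq ?_) (ENNReal.ofReal_le_ofReal (le_add_of_nonneg_right zero_le_one))
    rw [ENNReal.ofReal_div_of_pos (ENNReal.toReal_pos hD0 hDtop), ENNReal.ofReal_natCast,
      ENNReal.ofReal_toReal hDtop]
  refine le_trans ?_ (mul_le_mul_left hC _)
  rw [← ENNReal.mul_div_right_comm, ENNReal.le_div_iff_mul_le (Or.inl hD0) (Or.inl hDtop), mul_comm]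
  exact hle
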